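/- arXiv:1901.09303 — 2 statements merged into one kernel-verified Lean document; each statement's English description precedes it below -/
import Mathlib

section
/- Fix θ ∈ Θ_M°. As |x| → ∞ the second-order score derivatives satisfy: ℓ_{σσ}(x) = O(1), ℓ_{σα}(x) = O(log|x|), ℓ_{σβ}(x) = O(1), ℓ_{αα}(x) = O(log²|x|), ℓ_{αβ}(x) = O(log|x|), ℓ_{ββ}(x) = O(1). -/
open MeasureTheory Filter

noncomputable section

def ThetaInt : Set (Fin 4 → ℝ) :=
  {θ | 0 < θ 1 ∧ θ 2 ∈ Set.Ioo (0:ℝ) 2 ∧ θ 3 ∈ Set.Ioo (-1:ℝ) 1}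

/-- Cumulant (log characteristic function) of the continuous (M₀) parameterization,
with `θ = (μ, σ, α, β)`. -/
def psiM (θ : Fin 4 → ℝ) (t : ℝ) : ℂ :=
  if θ 2 = 1 then
    ((-(|θ 1 * t|) : ℝ) : ℂ)
      - Complex.I * (((2 * θ 3 / Real.pi) * (θ 1 * t) * Real.log |θ 1 * t| : ℝ) : ℂ)
      + Complex.I * ((θ 0 * t : ℝ) : ℂ)
  else
    ((-(|θ 1 * t| ^ (θ 2)) : ℝ) : ℂ) *
        (1 + Complex.I * ((θ 3 * Real.sign t * Real.tan (Real.pi * θ 2 / 2)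
            * (|θ 1 * t| ^ (1 - θ 2) - 1) : ℝ) : ℂ))
      + Complex.I * ((θ 0 * t : ℝ) : ℂ)

/-- Characteristic function of the (M₀) parameterization. -/
def phiM (θ : Fin 4 → ℝ) (t : ℝ) : ℂ := Complex.exp (psiM θ t)

/-- Stable density in the (M₀) parameterization, via Fourier inversion. -/
def fM (θ : Fin 4 → ℝ) (x : ℝ) : ℝ :=
  (1 / (2 * Real.pi)) *
    (∫ t : ℝ, Complex.exp (-Complex.I * (t : ℂ) * (x : ℂ)) * phiM θ t).re

/-- Partial derivative of the density in parameter `i`. -/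
def fP (i : Fin 4) (θ : Fin 4 → ℝ) (x : ℝ) : ℝ :=
  deriv (fun s => fM (Function.update θ i s) x) (θ i)

/-- Second partial derivative of the density in parameters `i`, `j`. -/
def fPP (i j : Fin 4) (θ : Fin 4 → ℝ) (x : ℝ) : ℝ :=
  deriv (fun s => fP i (Function.update θ j s) x) (θ j)

/-- Derivative of the density in `x`. -/
def fX (θ : Fin 4 → ℝ) (x : ℝ) : ℝ := deriv (fun y => fM θ y) x

/-- Mixed derivative `∂²f/∂x∂θᵢ`. -/
def fPX (i : Fin 4) (θ : Fin 4 → ℝ) (x : ℝ) : ℝ := deriv (fun y => fP i θ y) x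

/-- Score functions. -/
def ellP (i : Fin 4) (θ : Fin 4 → ℝ) (x : ℝ) : ℝ := fP i θ x / fM θ x

/-- Derivative of the score in `x`. -/
def ellPX (i : Fin 4) (θ : Fin 4 → ℝ) (x : ℝ) : ℝ := deriv (fun y => ellP i θ y) x

/-- Derivative of the score `ℓ_{θᵢ}` in the parameter `θⱼ`. -/
def ellPP (i j : Fin 4) (θ : Fin 4 → ℝ) (x : ℝ) : ℝ :=
  deriv (fun s => ellP i (Function.update θ j s) x) (θ j)

/-- `h = O(r)` as `|x| → ∞`. -/
def IsBigOAtInfty (h r : ℝ → ℝ) : Prop :=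
  ∃ c > 0, ∃ M > 0, ∀ x : ℝ, M ≤ |x| → |h x| ≤ c * r x


end

/-
The cumulant of the stable law continues analytically to the right half plane, jointly with complex
parameters near `θ`. Shifting the contour of the inversion integral to `-i δ + [0, ∞)` splits
`π f(X)`, for `X > 0`, into an exponentially small part and the integral over `s ∈ (0, δ]` of
`exp (-X s)` times a function comparable with `s ^ α`, which is of exact order `X ^ (-α - 1)`.
Both integrands remain analytic and keep their bounds in small complex polydiscs around the
parameters, so Cauchy's estimates bound the mixed derivatives of `f`. In the direction of `α` the
polydisc may only have a radius of order `1 / log X`, and each derivative in `α` therefore costs a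
logarithm. The lower bound for `f` and the quotient rule turn these bounds into bounds for the
scores. The left tail of `(μ, σ, α, β)` is the right tail of `(-μ, σ, α, -β)`.
-/

namespace StableScore

open Topology Set Metric
open Complex (I)
open scoped Real ComplexConjugate

/-! ### Cauchy estimates for parameter integrals -/

section CauchyEstimates

variable {U E F : Type*} [MeasurableSpace U] {ν : Measure U}
  [NormedAddCommGroup E] [NormedSpace ℂ E] [NormedAddCommGroup F] [NormedSpace ℂ F]

lemma norm_sub_le_of_norm_le_ball {f : E → F} {c z : E} {M R : ℝ}
    (hd : DifferentiableOn ℂ f (ball c R)) (hM : ∀ w ∈ ball c R, ‖f w‖ ≤ M) (hz : z ∈ ball c R) :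
    ‖f z - f c‖ ≤ 2 * M / R * ‖z - c‖ := by
  have hc : c ∈ ball c R := mem_ball_self (pos_of_mem_ball hz)
  have hmaps : MapsTo f (ball c R) (closedBall (f c) (2 * M)) := fun w hw => by
    rw [mem_closedBall_iff_norm]
    linarith [norm_sub_le (f w) (f c), hM w hw, hM c hc]
  simpa only [dist_eq_norm] using Complex.dist_le_div_mul_dist_of_mapsTo_ball hd hmaps hz

lemma norm_deriv_le_of_norm_le_closedBall {f : ℂ → E} {c : ℂ} {M R : ℝ} (hR : 0 < R)
    (hd : DifferentiableOn ℂ f (closedBall c R)) (hM : ∀ z ∈ closedBall c R, ‖f z‖ ≤ M) :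
    ‖deriv f c‖ ≤ M / R :=
  Complex.norm_deriv_le_of_forall_mem_sphere_norm_le hR (hd.diffContOnCl_ball subset_rfl)
    fun z hz => hM z (sphere_subset_closedBall hz)

lemma aestronglyMeasurable_of_hasDerivAt {G : Type*} [NormedAddCommGroup G] [NormedSpace ℝ G]
    {f : ℝ → U → G} {f' : U → G} {a : ℝ} (hf : ∀ᶠ t in 𝓝 a, AEStronglyMeasurable (f t) ν)
    (hd : ∀ᵐ u ∂ν, HasDerivAt (f · u) (f' u) a) : AEStronglyMeasurable f' ν := by
  obtain ⟨t, ht, hft⟩ := exists_seq_forall_of_frequently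
    (hf.filter_mono (nhdsWithin_le_nhds (s := {a}ᶜ))).frequently
  refine aestronglyMeasurable_of_tendsto_ae atTop
    (f := fun n u => (t n - a)⁻¹ • (f (t n) u - f a u))
    (fun n => ((hft n).sub hf.self_of_nhds).const_smul _) ?_
  filter_upwards [hd] with u hu
  exact hu.tendsto_slope.comp ht

lemma hasDerivAt_integral_of_cauchy [CompleteSpace E] {f : ℂ → U → E} {r : ℝ} (hr : 0 < r)
    {R G : U → ℝ} (hR : ∀ᵐ u ∂ν, 0 < R u)
    (hd : ∀ᵐ u ∂ν, ∀ a ∈ ball (0 : ℝ) r, DifferentiableOn ℂ (f · u) (closedBall (a : ℂ) (R u)))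
    (hb : ∀ᵐ u ∂ν, ∀ a ∈ ball (0 : ℝ) r, ∀ z ∈ closedBall (a : ℂ) (R u), ‖f z u‖ ≤ G u)
    (hm : ∀ a ∈ ball (0 : ℝ) r, AEStronglyMeasurable (f a) ν)
    (hG : Integrable G ν) (hGR : Integrable (fun u => G u / R u) ν) :
    AEStronglyMeasurable (fun u => deriv (f · u) 0) ν ∧
    HasDerivAt (fun a : ℝ => ∫ u, f a u ∂ν) (∫ u, deriv (f · u) 0 ∂ν) 0 ∧
    ‖∫ u, deriv (f · u) 0 ∂ν‖ ≤ ∫ u, G u / R u ∂ν := by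
  have h0 : (0 : ℝ) ∈ ball (0 : ℝ) r := mem_ball_self hr
  have hnhds : ∀ᶠ a in 𝓝 (0 : ℝ), a ∈ ball (0 : ℝ) r := ball_mem_nhds 0 hr
  have hderiv : ∀ᵐ u ∂ν, ∀ a ∈ ball (0 : ℝ) r,
      HasDerivAt (fun a : ℝ => f a u) (deriv (f · u) a) a := by
    filter_upwards [hR, hd] with u hRu hdu a ha
    have h := (hdu a ha).differentiableAt (closedBall_mem_nhds _ hRu)
    simpa [Function.comp_def] using h.hasDerivAt.scomp a Complex.ofRealCLM.hasDerivAt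
  have hbound : ∀ᵐ u ∂ν, ∀ a ∈ ball (0 : ℝ) r, ‖deriv (f · u) a‖ ≤ G u / R u := by
    filter_upwards [hR, hd, hb] with u hRu hdu hbu a ha
    exact norm_deriv_le_of_norm_le_closedBall hRu (hdu a ha) (hbu a ha)
  have hmeas : AEStronglyMeasurable (fun u => deriv (f · u) ((0 : ℝ) : ℂ)) ν :=
    aestronglyMeasurable_of_hasDerivAt (f := fun a u => f a u) (hnhds.mono hm)
      (hderiv.mono fun u hu => hu 0 h0)
  have hint : Integrable (f (0 : ℝ)) ν := by
    refine hG.mono' (hm 0 h0) ?_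
    filter_upwards [hR, hb] with u hRu hbu
    exact hbu 0 h0 _ (mem_closedBall_self hRu.le)
  have hderiv_integral := hasDerivAt_integral_of_dominated_loc_of_deriv_le hnhds
    (F := fun a : ℝ => f a) (hnhds.mono hm) hint hmeas hbound hGR hderiv
  have hnorm := norm_integral_le_of_norm_le hGR (hbound.mono fun u hu => hu 0 h0)
  rw [Complex.ofReal_zero] at hmeas hnorm
  simp only [Complex.ofReal_zero] at hderiv_integral
  exact ⟨hmeas, hderiv_integral.2, hnorm⟩

lemma analyticAt_deriv_fst [CompleteSpace E] {g : ℂ × ℂ → E} {a b : ℂ}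
    (hg : AnalyticAt ℂ g (a, b)) : AnalyticAt ℂ (fun w => deriv (fun z => g (z, w)) a) b := by
  have hmk : AnalyticAt ℂ (fun w : ℂ => (a, w)) b := by fun_prop
  have happly : AnalyticAt ℂ (fun w => fderiv ℂ g (a, w) (1, 0)) b :=
    ((ContinuousLinearMap.apply ℂ E ((1, 0) : ℂ × ℂ)).analyticAt _).fun_comp
      (hg.fderiv.fun_comp hmk)
  refine happly.congr ?_
  filter_upwards [hmk.continuousAt.eventually hg.eventually_analyticAt] with w hw
  have hcurve : HasDerivAt (fun z : ℂ => (z, w)) (1, 0) a :=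
    (hasDerivAt_id a).prodMk (hasDerivAt_const a w)
  exact (hw.differentiableAt.hasFDerivAt.comp_hasDerivAt a hcurve).deriv.symm

end CauchyEstimates

/-- `F : ℝ → ℝ → E` has the partial derivatives `∂₁F`, `∂₂F` and `∂₂∂₁F` at the origin, and they
are bounded by `C₁`, `C₂` and `C₁₂` there. -/
def MixedDerivBound {E : Type*} [NormedAddCommGroup E] [NormedSpace ℝ E] (F : ℝ → ℝ → E)
    (C₁ C₂ C₁₂ : ℝ) : Prop :=
  ∃ (A : ℝ → E) (B D : E), (∀ᶠ b in 𝓝 0, HasDerivAt (F · b) (A b) 0) ∧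
    HasDerivAt (F 0) B 0 ∧ HasDerivAt A D 0 ∧ ‖A 0‖ ≤ C₁ ∧ ‖B‖ ≤ C₂ ∧ ‖D‖ ≤ C₁₂

namespace MixedDerivBound

variable {E E' : Type*} [NormedAddCommGroup E] [NormedSpace ℝ E] [NormedAddCommGroup E']
  [NormedSpace ℝ E'] {F F' : ℝ → ℝ → E} {C₁ C₂ C₁₂ C₁' C₂' C₁₂' : ℝ}

lemma mono (h : MixedDerivBound F C₁ C₂ C₁₂) (h₁ : C₁ ≤ C₁') (h₂ : C₂ ≤ C₂')
    (h₁₂ : C₁₂ ≤ C₁₂') : MixedDerivBound F C₁' C₂' C₁₂' :=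
  let ⟨A, B, D, hA, hB, hD, hA0, hB0, hD0⟩ := h
  ⟨A, B, D, hA, hB, hD, hA0.trans h₁, hB0.trans h₂, hD0.trans h₁₂⟩

lemma congr (h : MixedDerivBound F C₁ C₂ C₁₂) (hF : ∀ᶠ b in 𝓝 0, ∀ᶠ a in 𝓝 0, F' a b = F a b)
    (hF0 : ∀ᶠ b in 𝓝 0, F' 0 b = F 0 b) : MixedDerivBound F' C₁ C₂ C₁₂ := by
  obtain ⟨A, B, D, hA, hB, hD, hbounds⟩ := h
  refine ⟨A, B, D, ?_, hB.congr_of_eventuallyEq hF0, hD, hbounds⟩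
  filter_upwards [hA, hF] with b hAb hFb
  exact hAb.congr_of_eventuallyEq hFb

lemma add (h : MixedDerivBound F C₁ C₂ C₁₂) (h' : MixedDerivBound F' C₁' C₂' C₁₂') :
    MixedDerivBound (fun a b => F a b + F' a b) (C₁ + C₁') (C₂ + C₂') (C₁₂ + C₁₂') := by
  obtain ⟨A, B, D, hA, hB, hD, hA0, hB0, hD0⟩ := h
  obtain ⟨A', B', D', hA', hB', hD', hA0', hB0', hD0'⟩ := h'
  exact ⟨A + A', B + B', D + D', (hA.and hA').mono fun b hb => hb.1.add hb.2, hB.add hB',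
    hD.add hD', norm_add_le_of_le hA0 hA0', norm_add_le_of_le hB0 hB0',
    norm_add_le_of_le hD0 hD0'⟩

lemma clm_comp (h : MixedDerivBound F C₁ C₂ C₁₂) (L : E →L[ℝ] E') :
    MixedDerivBound (fun a b => L (F a b)) (‖L‖ * C₁) (‖L‖ * C₂) (‖L‖ * C₁₂) := by
  obtain ⟨A, B, D, hA, hB, hD, hA0, hB0, hD0⟩ := h
  exact ⟨fun b => L (A b), L B, L D, hA.mono fun b hb => L.hasFDerivAt.comp_hasDerivAt 0 hb,
    L.hasFDerivAt.comp_hasDerivAt 0 hB, L.hasFDerivAt.comp_hasDerivAt 0 hD,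
    L.le_opNorm_of_le hA0, L.le_opNorm_of_le hB0, L.le_opNorm_of_le hD0⟩

end MixedDerivBound

theorem mixedDerivBound_integral {U E : Type*} [MeasurableSpace U] {ν : Measure U}
    [NormedAddCommGroup E] [NormedSpace ℂ E] [CompleteSpace E] {g : ℂ → ℂ → U → E} {r : ℝ}
    (hr : 0 < r) {R₁ R₂ G : U → ℝ} (hR₁ : ∀ᵐ u ∂ν, 0 < R₁ u) (hR₂ : ∀ᵐ u ∂ν, 0 < R₂ u)
    (hd : ∀ᵐ u ∂ν, ∀ a ∈ ball (0 : ℝ) r, ∀ b ∈ ball (0 : ℝ) r,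
      ∀ z ∈ closedBall (a : ℂ) (R₁ u), ∀ w ∈ closedBall (b : ℂ) (R₂ u),
        AnalyticAt ℂ (fun p : ℂ × ℂ => g p.1 p.2 u) (z, w) ∧ ‖g z w u‖ ≤ G u)
    (hm : ∀ a ∈ ball (0 : ℝ) r, ∀ b ∈ ball (0 : ℝ) r, AEStronglyMeasurable (g a b) ν)
    (hG : Integrable G ν) (hG₁ : Integrable (fun u => G u / R₁ u) ν)
    (hG₂ : Integrable (fun u => G u / R₂ u) ν) (hG₁₂ : Integrable (fun u => G u / R₁ u / R₂ u) ν) :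
    MixedDerivBound (fun a b : ℝ => ∫ u, g a b u ∂ν) (∫ u, G u / R₁ u ∂ν) (∫ u, G u / R₂ u ∂ν)
      (∫ u, G u / R₁ u / R₂ u ∂ν) := by
  have h0 : (0 : ℝ) ∈ ball (0 : ℝ) r := mem_ball_self hr
  have hfst : ∀ b ∈ ball (0 : ℝ) r, _ := fun b hb =>
    hasDerivAt_integral_of_cauchy (f := fun z => g z b) hr hR₁
      (by
        filter_upwards [hR₂, hd] with u hu hdu a ha z hz
        exact (hdu a ha b hb z hz b (mem_closedBall_self hu.le)).1.along_fst
          |>.differentiableAt.differentiableWithinAt)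
      (by
        filter_upwards [hR₂, hd] with u hu hdu a ha z hz
        exact (hdu a ha b hb z hz b (mem_closedBall_self hu.le)).2)
      (fun a ha => hm a ha b hb) hG hG₁
  have hsnd := hasDerivAt_integral_of_cauchy (f := fun w => g (0 : ℝ) w) hr hR₂
      (by
        filter_upwards [hR₁, hd] with u hu hdu b hb w hw
        exact (hdu 0 h0 b hb _ (mem_closedBall_self hu.le) w hw).1.along_snd
          |>.differentiableAt.differentiableWithinAt)
      (by
        filter_upwards [hR₁, hd] with u hu hdu b hb w hw
        exact (hdu 0 h0 b hb _ (mem_closedBall_self hu.le) w hw).2)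
      (fun b hb => hm 0 h0 b hb) hG hG₂
  have hmixed := hasDerivAt_integral_of_cauchy (f := fun w u => deriv (fun z => g z w u) 0) hr hR₂
      (by
        filter_upwards [hR₁, hd] with u hu hdu b hb w hw
        exact analyticAt_deriv_fst (hdu 0 h0 b hb 0 (by simpa using hu.le) w hw).1
          |>.differentiableAt.differentiableWithinAt)
      (by
        filter_upwards [hR₁, hd] with u hu hdu b hb w hw
        rw [← Complex.ofReal_zero]
        exact norm_deriv_le_of_norm_le_closedBall hu
          (fun z hz => (hdu 0 h0 b hb z hz w hw).1.along_fst
            |>.differentiableAt.differentiableWithinAt)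
          (fun z hz => (hdu 0 h0 b hb z hz w hw).2))
      (fun b hb => (hfst b hb).1) hG₁ hG₁₂
  exact ⟨_, _, _, eventually_of_mem (ball_mem_nhds 0 hr) fun b hb => (hfst b hb).2.1,
    hsnd.2.1, hmixed.2.1, (hfst 0 h0).2.2, hsnd.2.2, hmixed.2.2⟩

/-! ### Scores and reflection -/

lemma update_add_self {ι R : Type*} [DecidableEq ι] [AddCommGroup R] (f : ι → R) (i : ι) (a : R) :
    Function.update f i (f i + a) = f + Pi.single i a := by
  rw [Pi.update_eq_sub_add_single, Pi.single_add]
  abel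

lemma fP_eq_deriv_zero (i : Fin 4) (θ : Fin 4 → ℝ) (x : ℝ) :
    fP i θ x = deriv (fun a => fM (θ + Pi.single i a) x) 0 := by
  simpa only [fP, update_add_self, add_zero] using
    (deriv_comp_const_add (fun s => fM (Function.update θ i s) x) (θ i) 0).symm

lemma ellPP_eq_deriv_zero (i j : Fin 4) (θ : Fin 4 → ℝ) (x : ℝ) :
    ellPP i j θ x = deriv (fun b => ellP i (θ + Pi.single j b) x) 0 := by
  simpa only [ellPP, update_add_self, add_zero] using
    (deriv_comp_const_add (fun s => ellP i (Function.update θ j s) x) (θ j) 0).symm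

/-- The quotient rule `∂ⱼ(∂ᵢf / f) = ∂ⱼ∂ᵢf / f - (∂ᵢf)(∂ⱼf) / f²`, as an estimate. -/
lemma abs_ellPP_le {i j : Fin 4} {θ : Fin 4 → ℝ} {x Φ C₁ C₂ C₁₂ : ℝ}
    (h : MixedDerivBound (fun a b => fM (θ + Pi.single j b + Pi.single i a) x) C₁ C₂ C₁₂)
    (hΦ : 0 < Φ) (hf : Φ ≤ fM θ x) : |ellPP i j θ x| ≤ C₁₂ / Φ + C₁ * C₂ / Φ ^ 2 := by
  obtain ⟨A, B, D, hA, hB, hD, hA0, hB0, hD0⟩ := h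
  have hpos : 0 < fM θ x := hΦ.trans_le hf
  simp only [Pi.single_zero, add_zero] at hB
  have hscore : (fun b => ellP i (θ + Pi.single j b) x) =ᶠ[𝓝 0]
      fun b => A b / fM (θ + Pi.single j b) x := by
    filter_upwards [hA] with b hb
    rw [ellP, fP_eq_deriv_zero, hb.deriv]
  have hquot := (hD.div hB (by simpa using hpos.ne')).congr_of_eventuallyEq hscore
  rw [Pi.single_zero, add_zero] at hquot
  rw [Real.norm_eq_abs] at hA0 hB0 hD0
  calc |ellPP i j θ x| = |D / fM θ x - A 0 * B / fM θ x ^ 2| := by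
        rw [ellPP_eq_deriv_zero, hquot.deriv]
        congr 1
        field_simp
    _ ≤ |D| / fM θ x + |A 0| * |B| / fM θ x ^ 2 := by
        refine (abs_sub _ _).trans_eq ?_
        simp only [abs_div, abs_mul, abs_pow, abs_of_pos hpos]
    _ ≤ C₁₂ / Φ + C₁ * C₂ / Φ ^ 2 := by
        have hC₁ := (abs_nonneg _).trans hA0
        have hC₂ := (abs_nonneg _).trans hB0
        have hC₁₂ := (abs_nonneg _).trans hD0
        gcongr

/-- The sign by which each parameter changes under the reflection `x ↦ -x` of the real line. -/
def reflectSign : Fin 4 → ℝ := ![-1, 1, 1, -1]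

/-- The parameters `(-μ, σ, α, -β)` of the reflected stable law. -/
def reflect (θ : Fin 4 → ℝ) : Fin 4 → ℝ := reflectSign * θ

lemma abs_reflectSign (i : Fin 4) : |reflectSign i| = 1 := by
  fin_cases i <;> simp [reflectSign]

lemma reflect_mem_ThetaInt {θ : Fin 4 → ℝ} (hθ : θ ∈ ThetaInt) : reflect θ ∈ ThetaInt := by
  obtain ⟨hσ, hα, hβ⟩ := hθ
  refine ⟨?_, ?_, ?_, ?_⟩ <;> simp [reflect, reflectSign] <;> grind

lemma reflect_add_single (θ : Fin 4 → ℝ) (i : Fin 4) (a : ℝ) :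
    reflect (θ + Pi.single i a) = reflect θ + Pi.single i (reflectSign i * a) := by
  simp only [reflect, mul_add, ← Pi.single_mul_right]

lemma psiM_reflect (θ : Fin 4 → ℝ) (t : ℝ) : psiM (reflect θ) t = psiM θ (-t) := by
  simp only [psiM, reflect, reflectSign, Pi.mul_apply, Matrix.cons_val, one_mul, mul_neg, abs_neg,
    Real.sign_neg]
  split_ifs <;> push_cast <;> ring_nf

lemma fM_reflect (θ : Fin 4 → ℝ) (x : ℝ) : fM (reflect θ) x = fM θ (-x) := by
  unfold fM
  congr 2
  rw [← integral_neg_eq_self]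
  congr! 3 with t
  · push_cast; ring_nf
  · rw [phiM, phiM, psiM_reflect, neg_neg]

lemma fP_neg (i : Fin 4) (θ : Fin 4 → ℝ) (x : ℝ) :
    fP i θ (-x) = reflectSign i * fP i (reflect θ) x := by
  simp only [fP_eq_deriv_zero, ← fM_reflect, reflect_add_single]
  simpa using deriv_comp_mul_left (reflectSign i) (fun a => fM (reflect θ + Pi.single i a) x) 0

lemma ellP_neg (i : Fin 4) (θ : Fin 4 → ℝ) (x : ℝ) :
    ellP i θ (-x) = reflectSign i * ellP i (reflect θ) x := by
  rw [ellP, ellP, fP_neg, fM_reflect, mul_div_assoc]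

lemma ellPP_neg (i j : Fin 4) (θ : Fin 4 → ℝ) (x : ℝ) :
    ellPP i j θ (-x) = reflectSign j * (reflectSign i * ellPP i j (reflect θ) x) := by
  simp only [ellPP_eq_deriv_zero, ellP_neg, reflect_add_single, deriv_const_mul_field]
  have h := deriv_comp_mul_left (reflectSign j)
    (fun b => ellP i (reflect θ + Pi.single j b) x) 0
  rw [mul_zero, smul_eq_mul] at h
  rw [h, mul_left_comm]

lemma abs_ellPP_neg (i j : Fin 4) (θ : Fin 4 → ℝ) (x : ℝ) :
    |ellPP i j θ (-x)| = |ellPP i j (reflect θ) x| := by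
  simp only [ellPP_neg, abs_mul, abs_reflectSign, one_mul]

/-! ### Contour shift -/

section Contour

variable {E : Type*} [NormedAddCommGroup E] {F : ℂ → E} {a b : ℝ}

lemma integrableOn_horizontal_ray {g : ℝ → ℝ} {y : ℝ} (hy : y ∈ Icc a b)
    (hc : ContinuousOn F (Ici 0 ×ℂ Icc a b)) (hg : IntegrableOn g (Ioi 0))
    (hF : ∀ u : ℝ, 0 < u → ∀ y ∈ Icc a b, ‖F (u + y * I)‖ ≤ g u) :
    IntegrableOn (fun t : ℝ => F (t + y * I)) (Ioi 0) := by
  refine Integrable.mono' hg (ContinuousOn.aestronglyMeasurable ?_ measurableSet_Ioi) ?_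
  · refine hc.comp (by fun_prop) fun t ht => ?_
    simpa [Complex.mem_reProdIm, (mem_Ioi.1 ht).le] using hy
  · filter_upwards [ae_restrict_mem measurableSet_Ioi] with t ht using hF t ht y hy

variable [NormedSpace ℂ E]

lemma integral_rectangle_eq_zero (hab : a ≤ b) (hc : ContinuousOn F (Ici 0 ×ℂ Icc a b))
    (hd : DifferentiableOn ℂ F (Ioi 0 ×ℂ Ioo a b)) {R : ℝ} (hR : 0 ≤ R) :
    (∫ t in (0 : ℝ)..R, F (t + a * I)) - (∫ t in (0 : ℝ)..R, F (t + b * I)) +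
      I • (∫ y in a..b, F (R + y * I)) - I • (∫ y in a..b, F (y * I)) = 0 := by
  have h := Complex.integral_boundary_rect_eq_zero_of_continuousOn_of_differentiableOn F (a * I)
    (R + b * I) (hc.mono ?_) (hd.mono ?_)
  · simpa using h
  · simpa [hR, hab] using Complex.reProdIm_subset_iff.2 (prod_mono_left Icc_subset_Ici_self)
  · simpa [hR, hab] using Complex.reProdIm_subset_iff.2 (prod_mono_left Ioo_subset_Ioi_self)

/-- Cauchy's theorem on the half strip, the far side of the rectangle vanishing in the limit. -/
theorem integral_ray_eq_sub_integral_segment (hab : a ≤ b)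
    (hc : ContinuousOn F (Ici 0 ×ℂ Icc a b)) (hd : DifferentiableOn ℂ F (Ioi 0 ×ℂ Ioo a b))
    {g : ℝ → ℝ} (hg : IntegrableOn g (Ioi 0)) (hg0 : Tendsto g atTop (𝓝 0))
    (hF : ∀ u : ℝ, 0 < u → ∀ y ∈ Icc a b, ‖F (u + y * I)‖ ≤ g u) :
    ∫ t in Ioi (0 : ℝ), F (t + b * I) =
      (∫ t in Ioi (0 : ℝ), F (t + a * I)) - I • ∫ y in a..b, F (y * I) := by
  have hlower := intervalIntegral_tendsto_integral_Ioi 0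
    (integrableOn_horizontal_ray (left_mem_Icc.2 hab) hc hg hF) tendsto_id
  have hupper := intervalIntegral_tendsto_integral_Ioi 0
    (integrableOn_horizontal_ray (right_mem_Icc.2 hab) hc hg hF) tendsto_id
  have hside : Tendsto (fun R : ℝ => ∫ y in a..b, F (R + y * I)) atTop (𝓝 0) := by
    refine squeeze_zero_norm' (a := fun R => g R * |b - a|) ?_ (by simpa using hg0.mul_const _)
    filter_upwards [eventually_gt_atTop 0] with R hR
    refine intervalIntegral.norm_integral_le_of_norm_le_const fun y hy => ?_
    exact hF R hR y (Ioc_subset_Icc_self (uIoc_of_le hab ▸ hy))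
  have hlimit := ((hlower.sub hupper).add (hside.const_smul I)).sub_const
    (I • ∫ y in a..b, F (y * I))
  have hzero := tendsto_nhds_unique (hlimit.congr' (f₂ := fun _ => 0) ?_) tendsto_const_nhds
  · rw [smul_zero, add_zero, sub_right_comm, sub_eq_zero] at hzero
    exact hzero.symm
  · filter_upwards [eventually_ge_atTop 0] with R hR using integral_rectangle_eq_zero hab hc hd hR

end Contour

lemma re_integral_eq_of_conj_symm {G : ℝ → ℂ} (hsymm : ∀ t, G (-t) = conj (G t))
    (hG : IntegrableOn G (Ioi 0)) : (∫ t, G t).re = 2 * (∫ t in Ioi (0 : ℝ), G t).re := by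
  have hneg : ∫ t in Iic (0 : ℝ), G t = conj (∫ t in Ioi (0 : ℝ), G t) := by
    rw [← integral_conj, ← neg_zero, ← integral_comp_neg_Ioi]
    simp only [hsymm, neg_zero]
  have hIic : IntegrableOn G (Iic 0) := by
    have h : IntegrableOn (fun t => conj (G t)) (Ici (-0)) := by
      rw [neg_zero, integrableOn_Ici_iff_integrableOn_Ioi]
      exact Complex.conjCLE.toContinuousLinearMap.integrable_comp hG
    simpa only [hsymm, Complex.conj_conj] using h.comp_neg_Iic
  rw [← intervalIntegral.integral_Iic_add_Ioi hIic hG, hneg, Complex.add_re, Complex.conj_re]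
  ring

/-! ### Analytic continuation of the cumulant -/

lemma differentiable_dslope {f : ℂ → ℂ} (hf : Differentiable ℂ f) (c : ℂ) :
    Differentiable ℂ (dslope f c) :=
  differentiableOn_univ.1 ((Complex.differentiableOn_dslope univ_mem).2 hf.differentiableOn)

/-- The entire function `(exp v - 1) / v`, with value `1` at `v = 0`. -/
noncomputable def expQuot : ℂ → ℂ := dslope Complex.exp 0

/-- The entire function `sin (π u / 2) / u`, with value `π / 2` at `u = 0`. -/
noncomputable def sinQuot : ℂ → ℂ := dslope (fun u => Complex.sin (π / 2 * u)) 0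

lemma mul_expQuot (v : ℂ) : v * expQuot v = Complex.exp v - 1 := by
  simpa [expQuot] using sub_smul_dslope Complex.exp 0 v

lemma expQuot_zero : expQuot 0 = 1 := by simp [expQuot]

@[fun_prop]
lemma differentiable_expQuot : Differentiable ℂ expQuot :=
  differentiable_dslope Complex.differentiable_exp 0

lemma norm_expQuot_le (v : ℂ) : ‖expQuot v‖ ≤ 1 + Real.exp v.re := by
  rcases eq_or_ne v 0 with rfl | hv
  · simp [expQuot_zero]
  have hderiv : ∀ w ∈ {w : ℂ | w.re ≤ max v.re 0}, ‖deriv Complex.exp w‖ ≤ 1 + Real.exp v.re := by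
    intro w hw
    rw [Complex.deriv_exp, Complex.norm_exp]
    rcases le_max_iff.1 (mem_ofPred_eq ▸ hw) with h | h
    · linarith [Real.exp_le_exp.2 h]
    · linarith [Real.exp_le_one_iff.2 h, Real.exp_pos v.re]
  have h := (convex_halfSpace_re_le (max v.re 0)).norm_image_sub_le_of_norm_deriv_le
    (fun w _ => Complex.differentiable_exp w) hderiv (x := 0) (y := v) (by simp) (by simp)
  rw [Complex.exp_zero, ← mul_expQuot, sub_zero, norm_mul, mul_comm] at h
  exact le_of_mul_le_mul_right h (norm_pos_iff.2 hv)

lemma mul_sinQuot (u : ℂ) : u * sinQuot u = Complex.sin (π / 2 * u) := by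
  simpa [sinQuot] using sub_smul_dslope (fun u : ℂ => Complex.sin (π / 2 * u)) 0 u

lemma sinQuot_zero : sinQuot 0 = π / 2 := by
  have h : HasDerivAt (fun u : ℂ => Complex.sin (π / 2 * u)) (π / 2) 0 := by
    simpa using ((hasDerivAt_id (0 : ℂ)).const_mul (π / 2 : ℂ)).csin
  rw [sinQuot, dslope_same, h.deriv]

@[fun_prop]
lemma differentiable_sinQuot : Differentiable ℂ sinQuot :=
  differentiable_dslope (by fun_prop) 0

lemma sinQuot_ne_zero {u : ℂ} (hu : |u.re| < 2) : sinQuot u ≠ 0 := by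
  rcases eq_or_ne u 0 with rfl | hu0
  · simp [sinQuot_zero, Real.pi_ne_zero]
  intro h
  obtain ⟨k, hk⟩ := Complex.sin_eq_zero_iff.1 ((mul_sinQuot u).symm.trans (by rw [h, mul_zero]))
  have huk : u = ((2 * k : ℤ) : ℂ) := by
    have hπ : (π : ℂ) ≠ 0 := mod_cast Real.pi_ne_zero
    push_cast
    field_simp at hk
    linear_combination hk
  rw [huk, Complex.intCast_re, ← Int.cast_abs] at hu
  have hk0 : |2 * k| < 2 := mod_cast hu
  exact hu0 (by rw [huk]; norm_cast; grind)

/-- The Box–Cox transform `(exp (ε L) - 1) / ε`, with its limit `L` at `ε = 0`. -/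
noncomputable def boxCox (ε L : ℂ) : ℂ := L * expQuot (ε * L)

/-- The function `(α - 1) tan (π α / 2)`, with its limit at the removable singularity `α = 1`. -/
noncomputable def tanFactor (α : ℂ) : ℂ := -Complex.cos (π / 2 * (α - 1)) / sinQuot (α - 1)

/-- The skewness term `tan (π α / 2) (exp ((α - 1) L) - 1)`, with its limit at the removable
singularity `α = 1`. -/
noncomputable def skewFactor (α L : ℂ) : ℂ := tanFactor α * boxCox (α - 1) L

lemma skewFactor_one (L : ℂ) : skewFactor 1 L = -(2 / π) * L := by
  simp [skewFactor, tanFactor, boxCox, sinQuot_zero, expQuot_zero, neg_div]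

lemma skewFactor_of_ne_one {α L : ℂ} (hα : α ≠ 1) :
    skewFactor α L = Complex.tan (π * α / 2) * (Complex.exp ((α - 1) * L) - 1) := by
  have hα' : α - 1 ≠ 0 := sub_ne_zero.2 hα
  have htan : tanFactor α = Complex.tan (π * α / 2) * (α - 1) := by
    rw [tanFactor, eq_div_of_mul_eq hα' ((mul_comm _ _).trans (mul_sinQuot _)),
      show π / 2 * (α - 1) = π * α / 2 - π / 2 by ring, Complex.cos_sub_pi_div_two,
      Complex.sin_sub_pi_div_two, Complex.tan]
    rw [div_div_eq_mul_div, neg_mul, div_neg, neg_div, neg_neg, div_mul_eq_mul_div]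
  rw [skewFactor, htan, boxCox, ← mul_expQuot]
  ring

lemma im_skewFactor_sub_pi_div_two_mul_I {α : ℝ} (hα : α ∈ Ioo (0 : ℝ) 2) (L : ℝ) :
    (skewFactor α (L - π / 2 * I)).im = Real.exp ((α - 1) * L) * Real.sin (π * α / 2) := by
  rcases eq_or_ne α 1 with rfl | hα1
  · rw [Complex.ofReal_one, skewFactor_one,
      show -(2 / π : ℂ) * (L - π / 2 * I) = ((-(2 / π) * L : ℝ) : ℂ) + I by
        have hπ : (π : ℂ) ≠ 0 := mod_cast Real.pi_ne_zero
        push_cast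
        field_simp
        ring]
    simp
  have hcos : Real.cos (π * α / 2) ≠ 0 := by
    rw [← Real.sin_pi_div_two_sub, Ne, Real.sin_eq_zero_iff_of_lt_of_lt]
    · intro h
      exact hα1 (mul_left_cancel₀ Real.pi_ne_zero (by linarith))
    all_goals nlinarith [hα.1, hα.2, Real.pi_pos]
  have hexp : (α - 1 : ℂ) * (L - π / 2 * I) =
      ((α - 1) * L : ℝ) + ((π / 2 - π * α / 2 : ℝ) : ℂ) * I := by
    push_cast
    ring
  rw [skewFactor_of_ne_one (mod_cast hα1), hexp,
    show (π * α / 2 : ℂ) = (π * α / 2 : ℝ) by push_cast; ring, ← Complex.ofReal_tan,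
    Complex.im_ofReal_mul, Complex.sub_im, Complex.one_im, sub_zero, Complex.exp_im]
  simp only [Complex.add_re, Complex.add_im, Complex.ofReal_re, Complex.ofReal_im,
    Complex.re_ofReal_mul, Complex.im_ofReal_mul, Complex.I_re, Complex.I_im, mul_zero, add_zero,
    zero_add, mul_one, Real.sin_pi_div_two_sub]
  rw [mul_left_comm, Real.tan_mul_cos hcos]

lemma mul_mem_slitPlane {σ z : ℂ} (hσ : 0 < σ.re) (hz : 0 ≤ z.re) (hz0 : z ≠ 0) :
    σ * z ∈ Complex.slitPlane := by
  rw [Complex.mem_slitPlane_iff_arg]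
  have h := (Complex.abs_arg_lt_pi_div_two_iff (z := σ)).2 (Or.inl hσ)
  have h' := (Complex.abs_arg_le_pi_div_two_iff (z := z)).2 hz
  have hσ0 : σ ≠ 0 := fun h0 => by simp [h0] at hσ
  refine ⟨?_, mul_ne_zero hσ0 hz0⟩
  rw [abs_lt] at h
  rw [abs_le] at h'
  rw [Complex.arg_mul hσ0 hz0 ⟨by linarith [h.1, h'.1], by linarith [h.2, h'.2]⟩]
  linarith [h.2, h'.2]

/-- The analytic continuation of `psiM θ` from the positive half-line, jointly in `z` and in the
parameters `p = (μ, σ, α, β)`. -/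
noncomputable def cumulant (p : Fin 4 → ℂ) (z : ℂ) : ℂ :=
  -(p 1 * z) ^ p 2 + I * p 3 * (p 1 * z) * skewFactor (p 2) (Complex.log (p 1 * z)) + I * p 0 * z

/-- The complex parameters at which `cumulant` is continued. -/
def paramDomain : Set (Fin 4 → ℂ) := {p | 0 < (p 1).re ∧ 0 < (p 2).re ∧ (p 2).re < 2}

/-- The real parameter vector `θ` in complex parameter space. -/
def toComplex (θ : Fin 4 → ℝ) : Fin 4 → ℂ := fun k => θ k

lemma isOpen_paramDomain : IsOpen paramDomain := by
  have h (k : Fin 4) : Continuous fun p : Fin 4 → ℂ => (p k).re := by fun_prop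
  exact (isOpen_lt continuous_const (h 1)).inter
    ((isOpen_lt continuous_const (h 2)).inter (isOpen_lt (h 2) continuous_const))

lemma toComplex_mem_paramDomain {θ : Fin 4 → ℝ} (hθ : θ ∈ ThetaInt) :
    toComplex θ ∈ paramDomain := by
  simpa [paramDomain, toComplex] using ⟨hθ.1, hθ.2.1.1, hθ.2.1.2⟩

lemma differentiableAt_tanFactor {α : ℂ} (h0 : 0 < α.re) (h2 : α.re < 2) :
    DifferentiableAt ℂ tanFactor α := by
  have hne : sinQuot (α - 1) ≠ 0 := sinQuot_ne_zero (by
    rw [Complex.sub_re, Complex.one_re, abs_lt]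
    constructor <;> linarith)
  unfold tanFactor
  fun_prop (disch := exact hne)

lemma analyticAt_eval {ι : Type*} [Fintype ι] (k : ι) (p : ι → ℂ) :
    AnalyticAt ℂ (fun q : ι → ℂ => q k) p :=
  (ContinuousLinearMap.proj (R := ℂ) (φ := fun _ => ℂ) k).analyticAt p

lemma analyticAt_cumulant {p : Fin 4 → ℂ} {z : ℂ} (hp : p ∈ paramDomain) (hz : 0 ≤ z.re)
    (hz0 : z ≠ 0) : AnalyticAt ℂ (fun q : (Fin 4 → ℂ) × ℂ => cumulant q.1 q.2) (p, z) := by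
  have hslit : p 1 * z ∈ Complex.slitPlane := mul_mem_slitPlane hp.1 hz hz0
  have hcoord (k : Fin 4) : AnalyticAt ℂ (fun q : (Fin 4 → ℂ) × ℂ => q.1 k) (p, z) :=
    (analyticAt_eval k p).fun_comp_of_eq analyticAt_fst rfl
  have hpz : AnalyticAt ℂ (fun q : (Fin 4 → ℂ) × ℂ => q.1 1 * q.2) (p, z) :=
    (hcoord 1).mul analyticAt_snd
  have htan : AnalyticAt ℂ tanFactor (p 2) := by
    have hopen : IsOpen {α : ℂ | 0 < α.re ∧ α.re < 2} :=
      (isOpen_lt continuous_const Complex.continuous_re).inter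
        (isOpen_lt Complex.continuous_re continuous_const)
    exact DifferentiableOn.analyticAt (s := {α : ℂ | 0 < α.re ∧ α.re < 2})
      (fun α hα => (differentiableAt_tanFactor hα.1 hα.2).differentiableWithinAt)
      (hopen.mem_nhds hp.2)
  have hbox : AnalyticAt ℂ (fun q : (Fin 4 → ℂ) × ℂ =>
      boxCox (q.1 2 - 1) (Complex.log (q.1 1 * q.2))) (p, z) :=
    (hpz.clog hslit).mul ((differentiable_expQuot.analyticAt _).fun_comp
      (((hcoord 2).sub analyticAt_const).mul (hpz.clog hslit)))
  exact (((hpz.cpow (hcoord 2) hslit).neg).add (((analyticAt_const.mul (hcoord 3)).mul hpz).mul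
    ((htan.fun_comp_of_eq (hcoord 2) rfl).mul hbox))).add
      ((analyticAt_const.mul (hcoord 0)).mul analyticAt_snd)

lemma mul_exp_sub_one_mul_log {r : ℝ} (hr : 0 < r) (α : ℝ) :
    r * Real.exp ((α - 1) * Real.log r) = r ^ α := by
  rw [mul_comm (α - 1), ← Real.rpow_def_of_pos hr, Real.rpow_sub_one hr.ne',
    mul_div_cancel₀ _ hr.ne']

lemma psiM_eq_cumulant {θ : Fin 4 → ℝ} (hσ : 0 < θ 1) {t : ℝ} (ht : 0 < t) :
    psiM θ t = cumulant (toComplex θ) t := by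
  have hr : 0 < θ 1 * t := mul_pos hσ ht
  simp only [psiM, cumulant, toComplex, abs_of_pos hr, Real.sign_of_pos ht, mul_one,
    ← Complex.ofReal_mul, ← Complex.ofReal_log hr.le, ← Complex.ofReal_cpow hr.le]
  split_ifs with hα
  · rw [hα, Complex.ofReal_one, skewFactor_one, Real.rpow_one]
    push_cast
    ring
  · have hexp : ((θ 1 * t : ℝ) : ℂ) * Complex.exp ((θ 2 - 1) * Real.log (θ 1 * t)) =
        ((θ 1 * t) ^ θ 2 : ℝ) := by
      rw [show (θ 2 - 1 : ℂ) * Real.log (θ 1 * t) = ((θ 2 - 1) * Real.log (θ 1 * t) : ℝ) by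
        push_cast; ring, ← Complex.ofReal_exp, ← Complex.ofReal_mul, mul_exp_sub_one_mul_log hr]
    have hpow : (((θ 1 * t) ^ θ 2 : ℝ) : ℂ) * ((θ 1 * t) ^ (1 - θ 2) : ℝ) = (θ 1 * t : ℝ) := by
      rw [← Complex.ofReal_mul, ← Real.rpow_add hr, add_sub_cancel, Real.rpow_one]
    rw [skewFactor_of_ne_one (mod_cast hα)]
    push_cast at hexp hpow ⊢
    linear_combination (-I * θ 3 * Complex.tan (π * θ 2 / 2)) * (hpow + hexp)

lemma re_cumulant_toComplex {θ : Fin 4 → ℝ} (hσ : 0 < θ 1) {t : ℝ} (ht : 0 < t) :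
    (cumulant (toComplex θ) t).re = -(θ 1 * t) ^ θ 2 := by
  rw [← psiM_eq_cumulant hσ ht, psiM, abs_of_pos (mul_pos hσ ht)]
  split_ifs with hα
  · simp [hα]
  · rw [Complex.add_re, Complex.re_ofReal_mul]
    simp [-Complex.ofReal_mul, -Complex.ofReal_tan]

/-- The amplitude `(1 + β) σ ^ α sin (π α / 2)`, which also governs the tail `X ^ (-α - 1)` of the
density. -/
noncomputable def axisAmplitude (p : Fin 4 → ℂ) : ℂ :=
  (1 + p 3) * p 1 ^ p 2 * Complex.sin (π * p 2 / 2)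

/-- The imaginary part of the cumulant at `-i s`, continued to complex parameters. -/
noncomputable def axisPhase (p : Fin 4 → ℂ) (s : ℝ) : ℂ := axisAmplitude p * s ^ p 2

lemma axisAmplitude_toComplex {θ : Fin 4 → ℝ} (hσ : 0 < θ 1) : axisAmplitude (toComplex θ) =
    ((1 + θ 3) * θ 1 ^ θ 2 * Real.sin (π * θ 2 / 2) : ℝ) := by
  simp only [axisAmplitude, toComplex, ← Complex.ofReal_cpow hσ.le]
  push_cast
  rfl

lemma axisPhase_toComplex {θ : Fin 4 → ℝ} (hσ : 0 < θ 1) {s : ℝ} (hs : 0 ≤ s) :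
    axisPhase (toComplex θ) s =
      ((1 + θ 3) * (θ 1 * s) ^ θ 2 * Real.sin (π * θ 2 / 2) : ℝ) := by
  rw [axisPhase, axisAmplitude_toComplex hσ, toComplex, ← Complex.ofReal_cpow hs,
    ← Complex.ofReal_mul, Real.mul_rpow hσ.le hs]
  congr 1
  ring

lemma axisPhase_eq_im_cumulant {θ : Fin 4 → ℝ} (hσ : 0 < θ 1) (hα : θ 2 ∈ Ioo (0 : ℝ) 2) {s : ℝ}
    (hs : 0 < s) : axisPhase (toComplex θ) s = (cumulant (toComplex θ) (-(I * s))).im := by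
  have hr : 0 < θ 1 * s := mul_pos hσ hs
  have hrot : (θ 1 : ℂ) * (-(I * s)) = (θ 1 * s : ℝ) * -I := by push_cast; ring
  have hlog : Complex.log ((θ 1 * s : ℝ) * -I) = Real.log (θ 1 * s) - π / 2 * I := by
    rw [Complex.log_ofReal_mul hr (by simp), Complex.log_neg_I]
    ring
  have hpow : (((θ 1 * s : ℝ) : ℂ) * -I) ^ (θ 2 : ℂ) =
      ((θ 1 * s) ^ θ 2 : ℝ) * Complex.exp ((-(π * θ 2 / 2) : ℝ) * I) := by
    rw [Complex.cpow_def_of_ne_zero (mul_ne_zero (mod_cast hr.ne') (by simp)), hlog,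
      Real.rpow_def_of_pos hr, Complex.ofReal_exp, ← Complex.exp_add]
    push_cast
    ring_nf
  have hskew : I * θ 3 * ((θ 1 * s : ℝ) * -I) = (θ 3 * (θ 1 * s) : ℝ) := by
    push_cast
    linear_combination (-θ 3 * θ 1 * s : ℂ) * Complex.I_sq
  have hdrift : I * θ 0 * -(I * s) = (θ 0 * s : ℝ) := by
    push_cast
    linear_combination (-θ 0 * s : ℂ) * Complex.I_sq
  rw [axisPhase_toComplex hσ hs.le, cumulant]
  simp only [toComplex]
  rw [hrot, hpow, hlog, hskew, hdrift, Complex.add_im, Complex.add_im, Complex.neg_im,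
    Complex.im_ofReal_mul, Complex.im_ofReal_mul, im_skewFactor_sub_pi_div_two_mul_I hα,
    Complex.exp_ofReal_mul_I_im, Real.sin_neg, Complex.ofReal_im, ← mul_exp_sub_one_mul_log hr]
  congr 1
  ring

/-! ### Growth of the cumulant -/

lemma rpow_le_rpow_add_rpow {r s e t : ℝ} (hr : 0 < r) (hs : s ≤ e) (ht : e ≤ t) :
    r ^ e ≤ r ^ s + r ^ t := by
  rcases le_total 1 r with h | h
  · linarith [Real.rpow_le_rpow_of_exponent_le h ht, Real.rpow_nonneg hr.le s]
  · linarith [Real.rpow_le_rpow_of_exponent_ge hr h hs, Real.rpow_nonneg hr.le t]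

lemma abs_log_add_le_rpow_add_rpow {r κ c : ℝ} (hr : 0 < r) (hκ : 0 < κ) (hc : 0 ≤ c) :
    |Real.log r| + c ≤ (1 / κ + c) * (r ^ (-κ) + r ^ κ) := by
  have hlog : |Real.log r| ≤ 1 / κ * (r ^ (-κ) + r ^ κ) := by
    have h := Real.log_le_rpow_div hr.le hκ
    have h' := Real.log_le_rpow_div (inv_nonneg.2 hr.le) hκ
    rw [Real.log_inv, Real.inv_rpow hr.le, ← Real.rpow_neg hr.le] at h'
    have h0 := div_nonneg (Real.rpow_nonneg hr.le κ) hκ.le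
    have h0' := div_nonneg (Real.rpow_nonneg hr.le (-κ)) hκ.le
    rw [one_div, ← div_eq_inv_mul, add_div]
    exact abs_le.2 ⟨by linarith, by linarith⟩
  have hone : 1 ≤ r ^ (-κ) + r ^ κ := by
    simpa using rpow_le_rpow_add_rpow hr (neg_nonpos.2 hκ.le) hκ.le
  linarith [mul_le_mul_of_nonneg_left hone hc, add_mul (1 / κ) c (r ^ (-κ) + r ^ κ)]

lemma norm_log_le (w : ℂ) : ‖Complex.log w‖ ≤ |Real.log ‖w‖| + π := by
  refine (Complex.norm_le_abs_re_add_abs_im _).trans ?_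
  rw [Complex.log_re, Complex.log_im]
  gcongr
  exact Complex.abs_arg_le_pi w

lemma abs_arg_mul_le (w : ℂ) {y M : ℝ} (hy : |y| ≤ M) : |w.arg * y| ≤ π * M := by
  rw [abs_mul]
  gcongr
  exact Complex.abs_arg_le_pi w

lemma norm_cpow_le_exp_mul_rpow {w α : ℂ} {M : ℝ} (hα : ‖α‖ ≤ M) :
    ‖w ^ α‖ ≤ Real.exp (π * M) * ‖w‖ ^ α.re := by
  refine (Complex.norm_cpow_le w α).trans ?_
  rw [div_eq_mul_inv, ← Real.exp_neg, mul_comm]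
  gcongr
  linarith [neg_abs_le (w.arg * α.im), abs_arg_mul_le w ((Complex.abs_im_le_norm α).trans hα)]

lemma norm_mul_boxCox_log_le {w α : ℂ} {M : ℝ} (hw : w ≠ 0) (hα : ‖α‖ ≤ M) :
    ‖w * boxCox (α - 1) (Complex.log w)‖ ≤
      (|Real.log ‖w‖| + π) * (‖w‖ + Real.exp (π * M) * ‖w‖ ^ α.re) := by
  have hr : 0 < ‖w‖ := norm_pos_iff.2 hw
  have hre : ((α - 1) * Complex.log w).re ≤ (α.re - 1) * Real.log ‖w‖ + π * M := by
    have h := abs_arg_mul_le w ((Complex.abs_im_le_norm α).trans hα)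
    simp only [Complex.mul_re, Complex.sub_re, Complex.one_re, Complex.sub_im, Complex.one_im,
      sub_zero, Complex.log_re, Complex.log_im]
    linarith [neg_abs_le (w.arg * α.im)]
  have hquot : ‖w‖ * ‖expQuot ((α - 1) * Complex.log w)‖ ≤
      ‖w‖ + Real.exp (π * M) * ‖w‖ ^ α.re := by
    calc ‖w‖ * ‖expQuot ((α - 1) * Complex.log w)‖
        ≤ ‖w‖ * (1 + Real.exp ((α.re - 1) * Real.log ‖w‖ + π * M)) := by
          grw [norm_expQuot_le, hre]
      _ = ‖w‖ + Real.exp (π * M) * ‖w‖ ^ α.re := by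
          rw [Real.exp_add, ← mul_exp_sub_one_mul_log hr]
          ring
  calc ‖w * boxCox (α - 1) (Complex.log w)‖
      = ‖Complex.log w‖ * (‖w‖ * ‖expQuot ((α - 1) * Complex.log w)‖) := by
        rw [boxCox, norm_mul, norm_mul]
        ring
    _ ≤ _ := mul_le_mul (norm_log_le w) hquot (by positivity) (by positivity)

/-- The majorant `r ^ κ + r ^ (1 + a - κ)` of the cumulant at distance `r` from the origin, where
`a = Re α`. Its exponents keep a margin `κ` from `0` and from `1 + a`. -/
noncomputable def cumulantMajorant (κ a r : ℝ) : ℝ := r ^ κ + r ^ (1 + a - κ)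

lemma rpow_le_cumulantMajorant {κ a r e : ℝ} (hr : 0 < r) (h₁ : κ ≤ e) (h₂ : e ≤ 1 + a - κ) :
    r ^ e ≤ cumulantMajorant κ a r :=
  rpow_le_rpow_add_rpow hr h₁ h₂

lemma cumulantMajorant_mono {κ a r r' : ℝ} (hκ : 0 ≤ κ) (hκa : 2 * κ ≤ a) (hr : 0 ≤ r)
    (hrr' : r ≤ r') : cumulantMajorant κ a r ≤ cumulantMajorant κ a r' := by
  have h : 0 ≤ 1 + a - κ := by linarith
  unfold cumulantMajorant
  gcongr

lemma norm_mul_boxCox_log_le_cumulantMajorant {w α : ℂ} {κ M : ℝ} (hw : w ≠ 0) (hα : ‖α‖ ≤ M)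
    (hκ : 0 < κ) (hκ1 : 2 * κ ≤ 1) (hκα : 2 * κ ≤ α.re) :
    ‖w * boxCox (α - 1) (Complex.log w)‖ ≤
      4 * (1 / κ + π) * Real.exp (π * M) * cumulantMajorant κ α.re ‖w‖ := by
  have hr : 0 < ‖w‖ := norm_pos_iff.2 hw
  have hE : 1 ≤ Real.exp (π * M) :=
    Real.one_le_exp (mul_nonneg Real.pi_pos.le ((norm_nonneg _).trans hα))
  refine (norm_mul_boxCox_log_le hw hα).trans ?_
  calc (|Real.log ‖w‖| + π) * (‖w‖ + Real.exp (π * M) * ‖w‖ ^ α.re)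
      ≤ (1 / κ + π) * (‖w‖ ^ (-κ) + ‖w‖ ^ κ) *
          (Real.exp (π * M) * ‖w‖ ^ (1 : ℝ) + Real.exp (π * M) * ‖w‖ ^ α.re) := by
        rw [Real.rpow_one]
        have h := abs_log_add_le_rpow_add_rpow hr hκ Real.pi_pos.le
        have h' : ‖w‖ ≤ Real.exp (π * M) * ‖w‖ := le_mul_of_one_le_left hr.le hE
        gcongr
    _ = (1 / κ + π) * Real.exp (π * M) * (‖w‖ ^ (-κ + 1) + ‖w‖ ^ (-κ + α.re) +
          ‖w‖ ^ (κ + 1) + ‖w‖ ^ (κ + α.re)) := by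
        simp only [Real.rpow_add hr]
        ring
    _ ≤ (1 / κ + π) * Real.exp (π * M) * (cumulantMajorant κ α.re ‖w‖ +
          cumulantMajorant κ α.re ‖w‖ + cumulantMajorant κ α.re ‖w‖ +
          cumulantMajorant κ α.re ‖w‖) := by
        gcongr <;> apply rpow_le_cumulantMajorant hr <;> linarith
    _ = _ := by ring

lemma norm_cumulant_le {p : Fin 4 → ℂ} {z : ℂ} {κ T M : ℝ} (hκ : 0 < κ) (hκ1 : 2 * κ ≤ 1)
    (hκα : 2 * κ ≤ (p 2).re) (hT : ‖tanFactor (p 2)‖ ≤ T) (hM : ‖p‖ ≤ M) (hM1 : 1 ≤ M)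
    (hσ : p 1 ≠ 0) (hz : z ≠ 0) :
    ‖cumulant p z‖ ≤ (Real.exp (π * M) + M * T * (4 * (1 / κ + π) * Real.exp (π * M)) + 1) *
      cumulantMajorant κ (p 2).re (M * ‖z‖) := by
  have hcoord (k : Fin 4) : ‖p k‖ ≤ M := (norm_le_pi_norm p k).trans hM
  have hw : p 1 * z ≠ 0 := mul_ne_zero hσ hz
  have hr : 0 < ‖p 1 * z‖ := norm_pos_iff.2 hw
  have hMz : 0 < M * ‖z‖ := by positivity
  have hmono : cumulantMajorant κ (p 2).re ‖p 1 * z‖ ≤ cumulantMajorant κ (p 2).re (M * ‖z‖) := by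
    refine cumulantMajorant_mono hκ.le hκα hr.le ?_
    grw [norm_mul, hcoord 1]
  have hpow : ‖(p 1 * z) ^ p 2‖ ≤
      Real.exp (π * M) * cumulantMajorant κ (p 2).re (M * ‖z‖) := by
    grw [norm_cpow_le_exp_mul_rpow (hcoord 2), ← hmono]
    gcongr
    exact rpow_le_cumulantMajorant hr (by linarith) (by linarith)
  have hskew : ‖I * p 3 * (p 1 * z) * skewFactor (p 2) (Complex.log (p 1 * z))‖ ≤
      M * T * (4 * (1 / κ + π) * Real.exp (π * M)) *
        cumulantMajorant κ (p 2).re (M * ‖z‖) := by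
    have hbox := norm_mul_boxCox_log_le_cumulantMajorant hw (hcoord 2) hκ hκ1 hκα
    calc ‖I * p 3 * (p 1 * z) * skewFactor (p 2) (Complex.log (p 1 * z))‖
        = ‖p 3‖ * ‖tanFactor (p 2)‖ * ‖p 1 * z * boxCox (p 2 - 1) (Complex.log (p 1 * z))‖ := by
          simp only [skewFactor, norm_mul, Complex.norm_I]
          ring
      _ ≤ M * T * (4 * (1 / κ + π) * Real.exp (π * M) *
            cumulantMajorant κ (p 2).re (M * ‖z‖)) := by
          have hT0 : 0 ≤ T := (norm_nonneg _).trans hT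
          grw [hcoord 3, hT, hbox, hmono]
      _ = _ := by ring
  have hdrift : ‖I * p 0 * z‖ ≤ cumulantMajorant κ (p 2).re (M * ‖z‖) := by
    rw [norm_mul, norm_mul, Complex.norm_I, one_mul]
    grw [hcoord 0, ← rpow_le_cumulantMajorant (e := 1) hMz (by linarith) (by linarith),
      Real.rpow_one]
  refine (norm_add₃_le ..).trans ?_
  rw [norm_neg]
  linarith

theorem exists_norm_cumulant_le {K : Set (Fin 4 → ℂ)} (hK : IsCompact K) (hKp : K ⊆ paramDomain) :
    ∃ κ > 0, 2 * κ ≤ 1 ∧ ∃ C > 0, ∀ p ∈ K, 2 * κ ≤ (p 2).re ∧ ∀ z : ℂ, z ≠ 0 →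
      ‖cumulant p z‖ ≤ C * cumulantMajorant κ (p 2).re ‖z‖ := by
  obtain ⟨a, ha, haK⟩ : ∃ a, 0 < a ∧ ∀ p ∈ K, a ≤ (p 2).re :=
    hK.exists_forall_le' (f := fun p => (p 2).re) (by fun_prop) fun p hp => (hKp hp).2.1
  obtain ⟨T, hT⟩ := hK.exists_bound_of_continuousOn (f := fun p => tanFactor (p 2)) fun p hp =>
    (ContinuousAt.comp' (f := fun p : Fin 4 → ℂ => p 2)
      (differentiableAt_tanFactor (hKp hp).2.1 (hKp hp).2.2).continuousAt
      (continuous_apply 2).continuousAt).continuousWithinAt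
  obtain ⟨M, hM1, hM⟩ : ∃ M, 1 ≤ M ∧ ∀ p ∈ K, ‖p‖ ≤ M :=
    (hK.isBounded.exists_pos_norm_le).imp' (max 1) fun M h =>
      ⟨le_max_left _ _, fun p hp => (h.2 p hp).trans (le_max_right _ _)⟩
  obtain ⟨κ, hκ, hκ1, hκa⟩ : ∃ κ, 0 < κ ∧ 2 * κ ≤ 1 ∧ 2 * κ ≤ a :=
    ⟨min 1 a / 2, by positivity, by linarith [min_le_left 1 a], by linarith [min_le_right 1 a]⟩
  have hT0 : ∀ p ∈ K, ‖tanFactor (p 2)‖ ≤ max 0 T := fun p hp =>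
    (hT p hp).trans (le_max_right _ _)
  refine ⟨κ, hκ, hκ1, (Real.exp (π * M) + M * max 0 T * (4 * (1 / κ + π) * Real.exp (π * M)) + 1) *
    M ^ (3 : ℝ), by positivity, fun p hp => ⟨hκa.trans (haK p hp), fun z hz => ?_⟩⟩
  have hσ : p 1 ≠ 0 := fun h => (hKp hp).1.ne' (by simp [h])
  have hscale : cumulantMajorant κ (p 2).re (M * ‖z‖) ≤
      M ^ (3 : ℝ) * cumulantMajorant κ (p 2).re ‖z‖ := by
    unfold cumulantMajorant
    rw [Real.mul_rpow (by positivity) (by positivity),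
      Real.mul_rpow (by positivity) (by positivity), mul_add]
    gcongr <;> first | exact hM1 | linarith [(hKp hp).2.2]
  grw [norm_cumulant_le hκ hκ1 (hκa.trans (haK p hp)) (hT0 p hp) (hM p hp) hM1 hσ hz, hscale,
    ← mul_assoc]

lemma cumulantMajorant_le_one_add_pow {κ a r : ℝ} (hκ : 0 ≤ κ) (hκ3 : κ ≤ 3) (ha : 2 * κ ≤ a)
    (ha2 : a ≤ 2) (hr : 0 ≤ r) : cumulantMajorant κ a r ≤ 2 * (1 + r) ^ 3 := by
  have hpow {e : ℝ} (h0 : 0 ≤ e) (h3 : e ≤ 3) : r ^ e ≤ (1 + r) ^ 3 := by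
    calc r ^ e ≤ (1 + r) ^ e := by gcongr; linarith
      _ ≤ (1 + r) ^ (3 : ℝ) := Real.rpow_le_rpow_of_exponent_le (by linarith) h3
      _ = (1 + r) ^ 3 := mod_cast Real.rpow_natCast (1 + r) 3
  unfold cumulantMajorant
  linarith [hpow hκ hκ3, hpow (e := 1 + a - κ) (by linarith) (by linarith)]

lemma cumulantMajorant_le_of_one_le {κ a r : ℝ} (hκ : 2 * κ ≤ 1) (ha : 0 ≤ a) (hr : 1 ≤ r) :
    cumulantMajorant κ a r ≤ 2 * r ^ (1 + a - κ) := by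
  have h : r ^ κ ≤ r ^ (1 + a - κ) := Real.rpow_le_rpow_of_exponent_le hr (by linarith)
  unfold cumulantMajorant
  linarith

lemma tendsto_cumulantMajorant_zero {κ a : ℝ} (hκ : 0 < κ) (ha : 2 * κ ≤ a) :
    Tendsto (cumulantMajorant κ a) (𝓝 0) (𝓝 0) := by
  have h : 0 < 1 + a - κ := by linarith
  have hcont : ContinuousAt (cumulantMajorant κ a) 0 :=
    (Real.continuousAt_rpow_const _ _ (Or.inr hκ.le)).add
      (Real.continuousAt_rpow_const _ _ (Or.inr h.le))
  simpa [ContinuousAt, cumulantMajorant, Real.zero_rpow hκ.ne', Real.zero_rpow h.ne'] using hcont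

lemma cumulant_zero {p : Fin 4 → ℂ} (hp : p ∈ paramDomain) : cumulant p 0 = 0 := by
  have hα : p 2 ≠ 0 := fun h => hp.2.1.ne' (by simp [h])
  simp [cumulant, Complex.zero_cpow hα]

lemma continuousOn_cumulant {p : Fin 4 → ℂ} (hp : p ∈ paramDomain) :
    ContinuousOn (cumulant p) {z | 0 ≤ z.re} := by
  intro z hz
  rcases eq_or_ne z 0 with rfl | hz0
  · obtain ⟨κ, hκ, -, C, hC0, hC⟩ := exists_norm_cumulant_le isCompact_singleton
      (singleton_subset_iff.2 hp)
    obtain ⟨hκα, hbound⟩ := hC p rfl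
    refine ContinuousAt.continuousWithinAt (tendsto_iff_norm_sub_tendsto_zero.2 ?_)
    have hlim : Tendsto (fun z : ℂ => C * cumulantMajorant κ (p 2).re ‖z‖) (𝓝 0) (𝓝 (C * 0)) :=
      ((tendsto_cumulantMajorant_zero hκ hκα).comp tendsto_norm_zero).const_mul C
    rw [mul_zero] at hlim
    refine squeeze_zero (fun z => norm_nonneg _) (fun z => ?_) hlim
    rw [cumulant_zero hp, sub_zero]
    rcases eq_or_ne z 0 with rfl | hz0
    · rw [cumulant_zero hp, norm_zero]
      unfold cumulantMajorant
      positivity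
    · exact hbound z hz0
  · exact (analyticAt_cumulant hp hz hz0).along_snd.continuousAt.continuousWithinAt

lemma differentiableOn_cumulant {p : Fin 4 → ℂ} (hp : p ∈ paramDomain) :
    DifferentiableOn ℂ (cumulant p) {z | 0 < z.re} := fun z hz =>
  have hre : 0 < z.re := hz
  have hz0 : z ≠ 0 := fun h => hre.ne' (by simp [h])
  (analyticAt_cumulant hp hre.le hz0).along_snd.differentiableAt.differentiableWithinAt

lemma exists_norm_cumulant_le_one_add_pow {K : Set (Fin 4 → ℂ)} (hK : IsCompact K)
    (hKp : K ⊆ paramDomain) :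
    ∃ C > 0, ∀ p ∈ K, ∀ z : ℂ, ‖cumulant p z‖ ≤ C * (1 + ‖z‖) ^ 3 := by
  obtain ⟨κ, hκ, hκ1, C, hC0, hC⟩ := exists_norm_cumulant_le hK hKp
  refine ⟨C * 2, by positivity, fun p hp z => ?_⟩
  rcases eq_or_ne z 0 with rfl | hz
  · rw [cumulant_zero (hKp hp), norm_zero]
    positivity
  grw [(hC p hp).2 z hz, cumulantMajorant_le_one_add_pow hκ.le (by linarith) (hC p hp).1
    (hKp hp).2.2.le (norm_nonneg z), mul_assoc]

/-- Schwarz's lemma on the disc of radius `u` about `u`, in which the cumulant is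
`O(u ^ (1 + Re α - κ))`. -/
lemma exists_norm_cumulant_sub_le {K : Set (Fin 4 → ℂ)} (hK : IsCompact K)
    (hKp : K ⊆ paramDomain) :
    ∃ κ > 0, ∃ C > 0, ∀ p ∈ K, 2 * κ ≤ (p 2).re ∧ ∀ u : ℝ, 1 < u → ∀ y : ℝ, |y| ≤ 1 →
      ‖cumulant p (u + y * I) - cumulant p u‖ ≤ C * u ^ ((p 2).re - κ) := by
  obtain ⟨κ, hκ, hκ1, C, hC0, hC⟩ := exists_norm_cumulant_le hK hKp
  refine ⟨κ, hκ, 2 * (C * (2 * 2 ^ (3 : ℝ))), by positivity,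
    fun p hp => ⟨(hC p hp).1, fun u hu y hy => ?_⟩⟩
  have hu0 : 0 < u := by linarith
  have hre : ∀ w ∈ ball (u : ℂ) u, 0 < w.re := fun w hw => by
    have h := (Complex.abs_re_le_norm _).trans_lt (mem_ball_iff_norm.1 hw)
    rw [Complex.sub_re, Complex.ofReal_re, abs_lt] at h
    linarith [h.1]
  have hbound : ∀ w ∈ ball (u : ℂ) u,
      ‖cumulant p w‖ ≤ C * (2 * 2 ^ (3 : ℝ)) * u ^ (1 + (p 2).re - κ) := fun w hw => by
    obtain ⟨hκα, hpz⟩ := hC p hp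
    have hw0 : w ≠ 0 := fun h => (hre w hw).ne' (by simp [h])
    have hnorm : ‖w‖ ≤ 2 * u := by
      have h := norm_sub_norm_le w u
      rw [Complex.norm_of_nonneg hu0.le] at h
      linarith [mem_ball_iff_norm.1 hw]
    grw [hpz w hw0, cumulantMajorant_mono hκ.le hκα (norm_nonneg w) hnorm,
      cumulantMajorant_le_of_one_le hκ1 (hKp hp).2.1.le (by linarith),
      Real.mul_rpow zero_le_two hu0.le,
      Real.rpow_le_rpow_of_exponent_le one_le_two (show 1 + (p 2).re - κ ≤ 3 by
        linarith [(hKp hp).2.2])]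
    exact le_of_eq (by ring)
  have hdist : ‖(u + y * I : ℂ) - u‖ ≤ 1 := by simpa using hy
  have h := norm_sub_le_of_norm_le_ball ((differentiableOn_cumulant (hKp hp)).mono hre) hbound
    (mem_ball_iff_norm.2 (hdist.trans_lt hu))
  calc ‖cumulant p (u + y * I) - cumulant p u‖ ≤ _ * 1 :=
        h.trans (mul_le_mul_of_nonneg_left hdist (by positivity))
    _ = 2 * (C * (2 * 2 ^ (3 : ℝ))) * u ^ ((p 2).re - κ) := by
        rw [add_sub_assoc, Real.rpow_add hu0, Real.rpow_one]
        field_simp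

lemma eventually_add_rpow_le_mul_rpow {σ κ : ℝ} (hσ : 0 < σ) (hκ : 0 < κ) (C : ℝ) :
    ∀ᶠ u in atTop, ∀ s ≥ σ, ∀ a ∈ Icc (2 * κ) 2, C * u ^ (a - κ) + u ^ κ ≤ (s * u) ^ a := by
  have hc : 0 < min σ 1 ^ (2 : ℝ) := by positivity
  filter_upwards [(tendsto_rpow_atTop hκ).eventually_ge_atTop ((C + 1) / min σ 1 ^ (2 : ℝ)),
    eventually_ge_atTop 1] with u hu hu1 s hs a ⟨hκa, ha2⟩
  have hu0 : 0 < u := by linarith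
  have hscale : min σ 1 ^ (2 : ℝ) ≤ s ^ a := by
    calc min σ 1 ^ (2 : ℝ) ≤ min σ 1 ^ a :=
          Real.rpow_le_rpow_of_exponent_ge (by positivity) (min_le_right _ _) ha2
      _ ≤ s ^ a := Real.rpow_le_rpow (by positivity) ((min_le_left _ _).trans hs) (by linarith)
  have hexp : u ^ κ ≤ u ^ (a - κ) := Real.rpow_le_rpow_of_exponent_le hu1 (by linarith)
  calc C * u ^ (a - κ) + u ^ κ ≤ (C + 1) * u ^ (a - κ) := by linarith
    _ ≤ (u ^ κ * min σ 1 ^ (2 : ℝ)) * u ^ (a - κ) := by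
        gcongr
        exact (div_le_iff₀ hc).1 hu
    _ = min σ 1 ^ (2 : ℝ) * u ^ a := by
        rw [mul_right_comm, ← Real.rpow_add hu0, add_sub_cancel, mul_comm]
    _ ≤ (s * u) ^ a := by
        rw [Real.mul_rpow (hσ.le.trans hs) hu0.le]
        gcongr

lemma norm_ofReal_add_mul_I_le {u y : ℝ} (hu : 0 ≤ u) (hy : |y| ≤ 1) :
    ‖(u + y * I : ℂ)‖ ≤ u + 1 := by
  refine (norm_add_le _ _).trans (add_le_add ?_ (by simpa using hy))
  rw [Complex.norm_of_nonneg hu]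

theorem exists_norm_exp_cumulant_le {K : Set (Fin 4 → ℂ)} (hK : IsCompact K)
    (hKp : K ⊆ paramDomain) :
    ∃ κ > (0 : ℝ), ∃ C > 0, ∀ θ : Fin 4 → ℝ, toComplex θ ∈ K → ∀ u : ℝ, 0 < u → ∀ y : ℝ,
      |y| ≤ 1 → ‖Complex.exp (cumulant (toComplex θ) (u + y * I))‖ ≤ C * Real.exp (-u ^ κ) := by
  obtain ⟨κ, hκ, C, _, hC⟩ := exists_norm_cumulant_sub_le hK hKp
  obtain ⟨B, hB0, hB⟩ := exists_norm_cumulant_le_one_add_pow hK hKp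
  obtain ⟨σ, hσ, hσK⟩ : ∃ σ, 0 < σ ∧ ∀ p ∈ K, σ ≤ (p 1).re :=
    hK.exists_forall_le' (f := fun p => (p 1).re) (by fun_prop) fun p hp => (hKp hp).1
  obtain ⟨W, hW⟩ := eventually_atTop.1
    ((eventually_add_rpow_le_mul_rpow hσ hκ C).and (eventually_gt_atTop 1))
  refine ⟨κ, hκ, Real.exp (B * (1 + (W + 1)) ^ 3 + W ^ κ), by positivity,
    fun θ hθ u hu y hy => ?_⟩
  have hre (z w : ℂ) : z.re ≤ w.re + ‖z - w‖ := by
    linarith [Complex.re_le_norm (z - w), Complex.sub_re z w]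
  rw [Complex.norm_exp, ← Real.exp_add, Real.exp_le_exp]
  have hW1 : 1 < W := (hW W le_rfl).2
  rcases le_or_gt W u with hWu | huW
  · have hmain := (hW u hWu).1 (θ 1) (hσK _ hθ) (θ 2) ⟨(hC _ hθ).1, (hKp hθ).2.2.le⟩
    have hdiff : ‖cumulant (toComplex θ) (u + y * I) - cumulant (toComplex θ) u‖ ≤
        C * u ^ (θ 2 - κ) := (hC _ hθ).2 u (hW1.trans_le hWu) y hy
    have hnonneg : 0 ≤ B * (1 + (W + 1)) ^ 3 + W ^ κ := by positivity
    have hcenter := re_cumulant_toComplex (θ := θ) (hKp hθ).1 hu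
    linarith [hre (cumulant (toComplex θ) (u + y * I)) (cumulant (toComplex θ) u)]
  · have hnorm : ‖(u + y * I : ℂ)‖ ≤ W + 1 := by
      linarith [norm_ofReal_add_mul_I_le hu.le hy]
    have hbound := hB _ hθ (u + y * I)
    grw [hnorm] at hbound
    linarith [Complex.re_le_norm (cumulant (toComplex θ) (u + y * I)),
      Real.rpow_le_rpow hu.le huW.le hκ.le]

lemma norm_cumulant_sub_le_of_norm_le_ball {p q : Fin 4 → ℂ} {z : ℂ} {M R : ℝ} (hz : 0 < z.re)
    (hD : ball p R ⊆ paramDomain) (hM : ∀ p' ∈ ball p R, ‖cumulant p' z‖ ≤ M)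
    (hq : q ∈ ball p R) : ‖cumulant q z - cumulant p z‖ ≤ 2 * M / R * ‖q - p‖ :=
  have hz0 : z ≠ 0 := fun h => hz.ne' (by simp [h])
  norm_sub_le_of_norm_le_ball (f := (cumulant · z)) (fun p' hp' =>
    (analyticAt_cumulant (hD hp') hz.le hz0).along_fst.differentiableAt.differentiableWithinAt)
    hM hq

/-- Schwarz's lemma in the parameters: the growth of order `3` of the cumulant is compensated by a
parameter radius of order `u ^ (-3)`. -/
theorem exists_norm_exp_cumulant_le_of_near {θ : Fin 4 → ℝ} {ρ : ℝ} (hρ : 0 < ρ)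
    (hKp : closedBall (toComplex θ) (2 * ρ) ⊆ paramDomain) :
    ∃ κ > (0 : ℝ), ∃ c > 0, ∃ C > 0, ∀ θ' : Fin 4 → ℝ,
      toComplex θ' ∈ closedBall (toComplex θ) ρ → ∀ u : ℝ, 0 < u → ∀ y : ℝ, |y| ≤ 1 →
      ∀ p ∈ ball (toComplex θ') (c / (2 + u) ^ 3),
        p ∈ paramDomain ∧ ‖Complex.exp (cumulant p (u + y * I))‖ ≤ C * Real.exp (-u ^ κ) := by
  have hK := isCompact_closedBall (toComplex θ) (2 * ρ)
  obtain ⟨κ, hκ, C, hC0, hC⟩ := exists_norm_exp_cumulant_le hK hKp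
  obtain ⟨B, hB0, hB⟩ := exists_norm_cumulant_le_one_add_pow hK hKp
  have hc : ρ / (2 * B + 1) ≤ ρ := div_le_self hρ.le (by linarith)
  refine ⟨κ, hκ, ρ / (2 * B + 1), by positivity, Real.exp 1 * C, by positivity,
    fun θ' hθ' u hu y hy p hp => ?_⟩
  set z : ℂ := u + y * I with hz
  have hzre : 0 < z.re := by simpa [hz] using hu
  have hznorm : 1 + ‖z‖ ≤ 2 + u := by linarith [norm_ofReal_add_mul_I_le hu.le hy]
  have hsub : ball (toComplex θ') ρ ⊆ closedBall (toComplex θ) (2 * ρ) :=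
    ball_subset_closedBall.trans
      (closedBall_subset_closedBall' (by linarith [mem_closedBall.1 hθ']))
  have hpρ : p ∈ ball (toComplex θ') ρ := by
    refine ball_subset_ball ((div_le_self (by positivity) ?_).trans hc) hp
    exact one_le_pow₀ (by linarith)
  refine ⟨hKp (hsub hpρ), ?_⟩
  have hschwarz : ‖cumulant p z - cumulant (toComplex θ') z‖ ≤ 1 := by
    have hM : ∀ q ∈ ball (toComplex θ') ρ, ‖cumulant q z‖ ≤ B * (2 + u) ^ 3 := fun q hq => by
      grw [hB q (hsub hq) z, hznorm]
    grw [norm_cumulant_sub_le_of_norm_le_ball hzre (hsub.trans hKp) hM hpρ,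
      (mem_ball_iff_norm.1 hp).le]
    rw [show 2 * (B * (2 + u) ^ 3) / ρ * (ρ / (2 * B + 1) / (2 + u) ^ 3) = 2 * B / (2 * B + 1) by
      field_simp, div_le_one (by positivity)]
    linarith
  calc ‖Complex.exp (cumulant p z)‖
      = ‖Complex.exp (cumulant p z - cumulant (toComplex θ') z)‖ *
          ‖Complex.exp (cumulant (toComplex θ') z)‖ := by
        rw [← norm_mul, ← Complex.exp_add, sub_add_cancel]
    _ ≤ Real.exp 1 * (C * Real.exp (-u ^ κ)) := by
        grw [Complex.norm_exp_le_exp_norm, hschwarz,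
          hC θ' (hsub (mem_ball_self hρ)) u hu y hy]
    _ = Real.exp 1 * C * Real.exp (-u ^ κ) := by ring

lemma norm_sin_le (w : ℂ) : ‖Complex.sin w‖ ≤ Real.exp ‖w‖ * ‖w‖ := by
  have hderiv : ∀ v ∈ closedBall (0 : ℂ) ‖w‖, ‖deriv Complex.sin v‖ ≤ Real.exp ‖w‖ := fun v hv => by
    have h := Complex.norm_exp_le_exp_norm (v * I)
    have h' := Complex.norm_exp_le_exp_norm (-v * I)
    rw [norm_mul, Complex.norm_I, mul_one] at h h'
    have hvw : Real.exp ‖v‖ ≤ Real.exp ‖w‖ := Real.exp_le_exp.2 (mem_closedBall_zero_iff.1 hv)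
    rw [norm_neg] at h'
    rw [Complex.deriv_sin, Complex.cos, norm_div, Complex.norm_ofNat]
    linarith [norm_add_le (Complex.exp (v * I)) (Complex.exp (-v * I))]
  simpa using (convex_closedBall (0 : ℂ) ‖w‖).norm_image_sub_le_of_norm_deriv_le
    (fun v _ => Complex.differentiable_sin v) hderiv (x := 0) (y := w) (by simp) (by simp)

/-- The imaginary part of `exp (cumulant p z)` at `z = -i s`, continued to complex parameters. -/
noncomputable def axisIm (p : Fin 4 → ℂ) (s : ℝ) : ℂ :=
  Complex.exp (cumulant p (-(I * s)) - I * axisPhase p s) * Complex.sin (axisPhase p s)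

lemma axisIm_toComplex {θ : Fin 4 → ℝ} (hθ : θ ∈ ThetaInt) {s : ℝ} (hs : 0 < s) :
    axisIm (toComplex θ) s = (Complex.exp (cumulant (toComplex θ) (-(I * s)))).im := by
  have hre : cumulant (toComplex θ) (-(I * s)) -
      I * ((cumulant (toComplex θ) (-(I * s))).im : ℂ) =
        (cumulant (toComplex θ) (-(I * s))).re := by
    rw [sub_eq_iff_eq_add, mul_comm I (Complex.im _ : ℂ), Complex.re_add_im]
  rw [axisIm, axisPhase_eq_im_cumulant hθ.1 hθ.2.1 hs, hre, ← Complex.ofReal_exp,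
    ← Complex.ofReal_sin, ← Complex.ofReal_mul, Complex.exp_im]

lemma analyticAt_axisAmplitude {p : Fin 4 → ℂ} (hp : p ∈ paramDomain) :
    AnalyticAt ℂ axisAmplitude p := by
  have hpow : AnalyticAt ℂ (fun q : Fin 4 → ℂ => q 1 ^ q 2) p :=
    (analyticAt_eval 1 p).cpow (analyticAt_eval 2 p) (Or.inl hp.1)
  have hsin : AnalyticAt ℂ (fun q : Fin 4 → ℂ => Complex.sin (π * q 2 / 2)) p :=
    Complex.analyticAt_sin.fun_comp
      ((analyticAt_const.mul (analyticAt_eval 2 p)).mul analyticAt_const)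
  exact ((analyticAt_const.add (analyticAt_eval 3 p)).mul hpow).mul hsin

lemma analyticAt_axisIm {p : Fin 4 → ℂ} (hp : p ∈ paramDomain) {s : ℝ} (hs : 0 < s) :
    AnalyticAt ℂ (fun q => axisIm q s) p := by
  have hphase : AnalyticAt ℂ (fun q => axisPhase q s) p :=
    (analyticAt_axisAmplitude hp).mul
      (analyticAt_const.cpow (analyticAt_eval 2 p) (Or.inl (by simpa)))
  have hcumulant : AnalyticAt ℂ (fun q => cumulant q (-(I * s))) p :=
    (analyticAt_cumulant hp (by simp) (by simp [hs.ne'])).along_fst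
  exact (hcumulant.sub (analyticAt_const.mul hphase)).cexp.mul
    (Complex.analyticAt_sin.fun_comp hphase)

lemma exists_norm_axisIm_le {K : Set (Fin 4 → ℂ)} (hK : IsCompact K) (hKp : K ⊆ paramDomain) :
    ∃ C > 0, ∀ p ∈ K, ∀ s ∈ Ioc (0 : ℝ) 1, ‖axisIm p s‖ ≤ C * s ^ (p 2).re := by
  obtain ⟨B, hB0, hB⟩ := exists_norm_cumulant_le_one_add_pow hK hKp
  obtain ⟨A, hA0, hA⟩ : ∃ A > 0, ∀ p ∈ K, ‖axisAmplitude p‖ ≤ A := by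
    obtain ⟨A, hA⟩ := hK.exists_bound_of_continuousOn (f := axisAmplitude) fun p hp =>
      (analyticAt_axisAmplitude (hKp hp)).continuousAt.continuousWithinAt
    exact ⟨max 1 A, by positivity, fun p hp => (hA p hp).trans (le_max_right _ _)⟩
  refine ⟨Real.exp (B * (1 + 1) ^ 3 + A) * (Real.exp A * A), by positivity,
    fun p hp s ⟨hs, hs1⟩ => ?_⟩
  have hphase : ‖axisPhase p s‖ ≤ A * s ^ (p 2).re := by
    rw [axisPhase, norm_mul, Complex.norm_cpow_eq_rpow_re_of_pos hs]
    grw [hA p hp]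
  have hphase' : ‖axisPhase p s‖ ≤ A := by
    grw [hphase, Real.rpow_le_one hs.le hs1 (hKp hp).2.1.le, mul_one]
  have hcumulant : ‖cumulant p (-(I * s))‖ ≤ B * (1 + 1) ^ 3 := by
    have hs' : ‖(-(I * s) : ℂ)‖ ≤ 1 := by simpa [abs_of_pos hs] using hs1
    grw [hB p hp, hs']
  have hexponent : ‖cumulant p (-(I * s)) - I * axisPhase p s‖ ≤ B * (1 + 1) ^ 3 + A := by
    grw [norm_sub_le, hcumulant, norm_mul, Complex.norm_I, one_mul, hphase']
  calc ‖axisIm p s‖ ≤ Real.exp (B * (1 + 1) ^ 3 + A) * (Real.exp A * (A * s ^ (p 2).re)) := by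
        rw [axisIm, norm_mul]
        grw [Complex.norm_exp_le_exp_norm, hexponent, norm_sin_le, hphase', hphase]
    _ = _ := by ring

lemma exists_mul_rpow_le_axisIm {θ : Fin 4 → ℝ} (hθ : θ ∈ ThetaInt) :
    ∃ δ ∈ Ioc (0 : ℝ) 1, ∃ c > (0 : ℝ), ∀ s ∈ Ioc 0 δ,
      c * s ^ θ 2 ≤ (axisIm (toComplex θ) s).re := by
  obtain ⟨hσ, hα, hβ⟩ := id hθ
  have hp := toComplex_mem_paramDomain hθ
  have hsin : 0 < Real.sin (π * θ 2 / 2) :=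
    Real.sin_pos_of_pos_of_lt_pi (by nlinarith [Real.pi_pos, hα.1])
      (by nlinarith [Real.pi_pos, hα.2])
  set A := (1 + θ 3) * θ 1 ^ θ 2 * Real.sin (π * θ 2 / 2)
  have hA0 : 0 < A := mul_pos (mul_pos (by linarith [hβ.1]) (by positivity)) hsin
  have hlim : Tendsto (fun s : ℝ => cumulant (toComplex θ) (-(I * s))) (𝓝[>] 0) (𝓝 0) := by
    have hcont : Continuous fun s : ℝ => cumulant (toComplex θ) (-(I * s)) :=
      (continuousOn_cumulant hp).comp_continuous (by fun_prop) fun s => by simp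
    have h := (hcont.tendsto 0).mono_left (nhdsWithin_le_nhds (s := Ioi 0))
    rwa [Complex.ofReal_zero, mul_zero, neg_zero, cumulant_zero hp] at h
  have hsmall : ∀ᶠ s : ℝ in 𝓝[>] 0, ‖cumulant (toComplex θ) (-(I * s : ℂ))‖ < 1 :=
    hlim.norm.eventually_lt_const (by simp)
  obtain ⟨δ, hδ, hδs⟩ := (nhdsGT_basis (0 : ℝ)).eventually_iff.1 hsmall
  refine ⟨min (δ / 2) 1, ⟨by positivity, min_le_right _ _⟩,
    Real.exp (-1) * (2 / π * A), by positivity, fun s ⟨hs, hsδ⟩ => ?_⟩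
  have hnorm := (hδs ⟨hs, by linarith [hsδ.trans (min_le_left _ _)]⟩).le
  have hphase : (cumulant (toComplex θ) (-(I * s))).im = A * s ^ θ 2 := by
    have h := axisPhase_eq_im_cumulant hσ hα hs
    rw [axisPhase, axisAmplitude_toComplex hσ, toComplex, ← Complex.ofReal_cpow hs.le] at h
    exact_mod_cast h.symm
  rw [axisIm_toComplex hθ hs, Complex.ofReal_re, Complex.exp_im, hphase]
  have hre : -1 ≤ (cumulant (toComplex θ) (-(I * s))).re :=
    (abs_le.1 ((Complex.abs_re_le_norm _).trans hnorm)).1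
  have hle : A * s ^ θ 2 ≤ π / 2 := by
    linarith [hphase, (abs_le.1 ((Complex.abs_im_le_norm _).trans hnorm)).2, Real.pi_gt_three]
  have hjordan := Real.mul_le_sin (by positivity) hle
  have hsin_nonneg : 0 ≤ Real.sin (A * s ^ θ 2) := le_trans (by positivity) hjordan
  grw [← hre, ← hjordan]
  exact le_of_eq (by ring)

/-! ### Decomposition of the density -/

/-- The part of the inversion integral that comes from the segment `[-i δ, 0]` of the shifted
contour. It carries the tail of the density. -/
noncomputable def axisPart (δ : ℝ) (p : Fin 4 → ℂ) (X : ℝ) : ℂ :=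
  ∫ s in Ioc 0 δ, Real.exp (-(X * s)) * axisIm p s

/-- The part of the inversion integral that comes from the ray `-i δ + [0, ∞)` of the shifted
contour. It is exponentially small in `X`. -/
noncomputable def shiftedPart (δ : ℝ) (p : Fin 4 → ℂ) (X : ℝ) : ℂ :=
  ∫ t in Ioi (0 : ℝ), Complex.exp (-(I * (t + (-δ : ℝ) * I) * X)) *
    Complex.exp (cumulant p (t + (-δ : ℝ) * I))

lemma norm_exp_neg_I_mul (z : ℂ) (X : ℝ) :
    ‖Complex.exp (-(I * z * X))‖ = Real.exp (z.im * X) := by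
  rw [Complex.norm_exp]
  simp

lemma psiM_neg (θ : Fin 4 → ℝ) (t : ℝ) : psiM θ (-t) = conj (psiM θ t) := by
  unfold psiM
  split_ifs <;> simp only [mul_neg, abs_neg, Real.sign_neg, map_add, map_sub, map_mul, map_one,
    Complex.conj_I, Complex.conj_ofReal] <;> push_cast <;> ring

lemma integrableOn_pow_mul_exp_neg_rpow {κ : ℝ} (hκ : 0 < κ) (n : ℕ) :
    IntegrableOn (fun u : ℝ => (2 + u) ^ n * Real.exp (-u ^ κ)) (Ioi 0) := by
  have hmoment (k : ℕ) : IntegrableOn (fun u : ℝ => u ^ k * Real.exp (-u ^ κ)) (Ioi 0) := by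
    simpa using integrableOn_rpow_mul_exp_neg_rpow (s := k)
      (by linarith [k.cast_nonneg (α := ℝ)]) hκ
  simp only [add_comm (2 : ℝ), add_pow, Finset.sum_mul]
  refine integrable_finsetSum _ fun k _ =>
    ((hmoment k).mul_const (2 ^ (n - k) * n.choose k)).congr ?_
  exact Eventually.of_forall fun u => by ring

lemma tendsto_const_mul_exp_neg_rpow {κ : ℝ} (hκ : 0 < κ) (C : ℝ) :
    Tendsto (fun u : ℝ => C * Real.exp (-u ^ κ)) atTop (𝓝 0) := by
  simpa using (Real.tendsto_exp_neg_atTop_nhds_zero.comp (tendsto_rpow_atTop hκ)).const_mul C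

section

variable {θ : Fin 4 → ℝ} {X : ℝ}

lemma norm_integrand_le {p : Fin 4 → ℂ} {z : ℂ} (hX : 0 ≤ X) (hz : z.im ≤ 0) {M : ℝ}
    (hM : ‖Complex.exp (cumulant p z)‖ ≤ M) :
    ‖Complex.exp (-(I * z * X)) * Complex.exp (cumulant p z)‖ ≤ M := by
  rw [norm_mul, norm_exp_neg_I_mul]
  have h : Real.exp (z.im * X) ≤ 1 :=
    Real.exp_le_one_iff.2 (mul_nonpos_of_nonpos_of_nonneg hz hX)
  exact (mul_le_of_le_one_left (norm_nonneg _) h).trans hM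

lemma continuousOn_integrand {p : Fin 4 → ℂ} (hp : p ∈ paramDomain) (X : ℝ) :
    ContinuousOn (fun z => Complex.exp (-(I * z * X)) * Complex.exp (cumulant p z))
      {z | 0 ≤ z.re} :=
  (by fun_prop : Continuous fun z : ℂ => Complex.exp (-(I * z * X))).continuousOn.mul
    (continuousOn_cumulant hp).cexp

theorem integral_ray_eq_shiftedPart_sub (hθ : θ ∈ ThetaInt) (hX : 0 ≤ X) {δ : ℝ}
    (hδ : δ ∈ Ioc (0 : ℝ) 1) :
    IntegrableOn (fun t : ℝ => Complex.exp (-(I * t * X)) *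
      Complex.exp (cumulant (toComplex θ) t)) (Ioi 0) ∧
    ∫ t in Ioi (0 : ℝ), Complex.exp (-(I * t * X)) * Complex.exp (cumulant (toComplex θ) t) =
      shiftedPart δ (toComplex θ) X - I • ∫ y in (-δ)..0, Complex.exp (-(I * (y * I) * X)) *
        Complex.exp (cumulant (toComplex θ) (y * I)) := by
  have hp := toComplex_mem_paramDomain hθ
  obtain ⟨κ, hκ, C, _, hC⟩ := exists_norm_exp_cumulant_le isCompact_singleton
    (singleton_subset_iff.2 hp)
  set F : ℂ → ℂ := fun z => Complex.exp (-(I * z * X)) * Complex.exp (cumulant (toComplex θ) z)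
  have hδ0 : -δ ≤ 0 := neg_nonpos.2 hδ.1.le
  have hcont : ContinuousOn F (Ici 0 ×ℂ Icc (-δ) 0) :=
    (continuousOn_integrand hp X).mono fun z hz => hz.1
  have hdiff : DifferentiableOn ℂ F (Ioi 0 ×ℂ Ioo (-δ) 0) :=
    (by fun_prop : Differentiable ℂ fun z : ℂ =>
      Complex.exp (-(I * z * X))).differentiableOn.mul
        ((differentiableOn_cumulant hp).mono fun z hz => hz.1).cexp
  have hbound : ∀ u : ℝ, 0 < u → ∀ y ∈ Icc (-δ) 0, ‖F (u + y * I)‖ ≤ C * Real.exp (-u ^ κ) :=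
    fun u hu y hy => norm_integrand_le hX (by simpa using hy.2)
      (hC θ rfl u hu y (abs_le.2 ⟨by linarith [hδ.2, hy.1], by linarith [hy.2]⟩))
  have hg : IntegrableOn (fun u => C * Real.exp (-u ^ κ)) (Ioi 0) := by
    simpa [IntegrableOn] using (integrableOn_pow_mul_exp_neg_rpow hκ 0).const_mul C
  refine ⟨?_, ?_⟩
  · simpa [F] using integrableOn_horizontal_ray (right_mem_Icc.2 hδ0) hcont hg hbound
  · simpa [F, shiftedPart] using integral_ray_eq_sub_integral_segment hδ0 hcont hdiff hg
      (tendsto_const_mul_exp_neg_rpow hκ C) hbound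

lemma re_neg_I_smul_integral_segment (hθ : θ ∈ ThetaInt) {δ : ℝ} (hδ : 0 ≤ δ) :
    (-(I • ∫ y in (-δ)..0, Complex.exp (-(I * (y * I) * X)) *
        Complex.exp (cumulant (toComplex θ) (y * I)))).re = (axisPart δ (toComplex θ) X).re := by
  set F : ℂ → ℂ := fun z => Complex.exp (-(I * z * X)) * Complex.exp (cumulant (toComplex θ) z)
  have hcont : Continuous fun s : ℝ => F (-(I * s)) :=
    (continuousOn_integrand (toComplex_mem_paramDomain hθ) X).comp_continuous (by fun_prop)
      fun s => by simp
  have haxis : ∀ s ∈ Ioc 0 δ,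
      (Real.exp (-(X * s)) * axisIm (toComplex θ) s : ℂ) = (F (-(I * s))).im := fun s hs => by
    have hexp : Complex.exp (-(I * -(I * s) * X)) = Real.exp (-(X * s)) := by
      rw [Complex.ofReal_exp]
      congr 1
      push_cast
      linear_combination (s * X : ℂ) * Complex.I_sq
    rw [axisIm_toComplex hθ hs.1, ← Complex.ofReal_mul, ← Complex.im_ofReal_mul, ← hexp]
  have hreflect : ∫ y in (-δ)..0, F (y * I) = ∫ s in Ioc 0 δ, F (-(I * s)) := by
    rw [← intervalIntegral.integral_of_le hδ, ← neg_zero,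
      ← intervalIntegral.integral_comp_neg (fun y : ℝ => F (y * I)), neg_zero]
    simp [mul_comm I]
  have him := integral_im (hcont.integrableOn_Ioc (μ := volume) (a := 0) (b := δ))
  rw [hreflect, axisPart, setIntegral_congr_fun measurableSet_Ioc haxis, integral_complex_ofReal,
    Complex.ofReal_re]
  simpa using him.symm

theorem fM_eq_axisPart_add_shiftedPart (hθ : θ ∈ ThetaInt) (hX : 0 ≤ X) {δ : ℝ}
    (hδ : δ ∈ Ioc (0 : ℝ) 1) :
    fM θ X = π⁻¹ * (axisPart δ (toComplex θ) X + shiftedPart δ (toComplex θ) X).re := by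
  obtain ⟨hint, hcontour⟩ := integral_ray_eq_shiftedPart_sub hθ hX hδ
  set G : ℝ → ℂ := fun t => Complex.exp (-I * t * X) * phiM θ t
  have hG : ∀ t ∈ Ioi (0 : ℝ),
      Complex.exp (-(I * t * X)) * Complex.exp (cumulant (toComplex θ) t) = G t := fun t ht => by
    simp only [G, phiM, psiM_eq_cumulant hθ.1 ht, neg_mul]
  have hsymm : ∀ t, G (-t) = conj (G t) := fun t => by
    simp only [G, phiM, psiM_neg, map_mul, ← Complex.exp_conj]
    simp
  rw [setIntegral_congr_fun measurableSet_Ioi hG] at hcontour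
  rw [fM, re_integral_eq_of_conj_symm hsymm (hint.congr_fun hG measurableSet_Ioi), hcontour,
    sub_eq_add_neg, Complex.add_re, re_neg_I_smul_integral_segment hθ hδ.1.le, Complex.add_re]
  field_simp
  ring

end

/-! ### Parameter derivatives of the density -/

section

variable {θ : Fin 4 → ℝ} {i j : Fin 4}

lemma toComplex_add_single (θ : Fin 4 → ℝ) (i : Fin 4) (a : ℝ) :
    toComplex (θ + Pi.single i a) = toComplex θ + Pi.single i (a : ℂ) := by
  funext k
  simp only [toComplex, Pi.add_apply, Pi.single_apply, Complex.ofReal_add]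
  split_ifs <;> simp

lemma norm_add_single_sub_le {ι E : Type*} [Fintype ι] [DecidableEq ι] [NormedAddCommGroup E]
    (p : ι → E) (i j : ι) (z w z' w' : E) :
    ‖p + Pi.single j w + Pi.single i z - (p + Pi.single j w' + Pi.single i z')‖ ≤
      ‖z - z'‖ + ‖w - w'‖ := by
  rw [add_assoc, add_assoc, add_sub_add_left_eq_sub, add_sub_add_comm, ← Pi.single_sub,
    ← Pi.single_sub, add_comm ‖z - z'‖]
  simpa only [Pi.norm_single] using
    norm_add_le (Pi.single j (w - w') : ι → E) (Pi.single i (z - z'))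

lemma dist_toComplex_add_single_le (θ : Fin 4 → ℝ) (i j : Fin 4) (z w : ℂ) (a b : ℝ) :
    dist (toComplex θ + Pi.single j w + Pi.single i z)
      (toComplex (θ + Pi.single j b + Pi.single i a)) ≤ dist z a + dist w b := by
  simpa only [toComplex_add_single, dist_eq_norm] using
    norm_add_single_sub_le (toComplex θ) i j z w a b

lemma mixedDerivBound_integral_toComplex {U : Type*} [MeasurableSpace U] {ν : Measure U}
    {g : (Fin 4 → ℂ) → U → ℂ} {r : ℝ} (hr : 0 < r) {R₁ R₂ G : U → ℝ}
    (hR₁ : ∀ᵐ u ∂ν, 0 < R₁ u) (hR₂ : ∀ᵐ u ∂ν, 0 < R₂ u)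
    (hd : ∀ᵐ u ∂ν, ∀ a ∈ ball (0 : ℝ) r, ∀ b ∈ ball (0 : ℝ) r,
      ∀ z ∈ closedBall (a : ℂ) (R₁ u), ∀ w ∈ closedBall (b : ℂ) (R₂ u),
        AnalyticAt ℂ (g · u) (toComplex θ + Pi.single j w + Pi.single i z) ∧
        ‖g (toComplex θ + Pi.single j w + Pi.single i z) u‖ ≤ G u)
    (hm : ∀ a ∈ ball (0 : ℝ) r, ∀ b ∈ ball (0 : ℝ) r,
      AEStronglyMeasurable (g (toComplex (θ + Pi.single j b + Pi.single i a))) ν)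
    (hG : Integrable G ν) (hG₁ : Integrable (fun u => G u / R₁ u) ν)
    (hG₂ : Integrable (fun u => G u / R₂ u) ν) (hG₁₂ : Integrable (fun u => G u / R₁ u / R₂ u) ν) :
    MixedDerivBound (fun a b => ∫ u, g (toComplex (θ + Pi.single j b + Pi.single i a)) u ∂ν)
      (∫ u, G u / R₁ u ∂ν) (∫ u, G u / R₂ u ∂ν) (∫ u, G u / R₁ u / R₂ u ∂ν) := by
  simp only [toComplex_add_single] at hm ⊢
  have hline (q : ℂ × ℂ) : AnalyticAt ℂ
      (fun p : ℂ × ℂ => toComplex θ + Pi.single j p.2 + Pi.single i p.1) q :=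
    (analyticAt_const.fun_add
      (((ContinuousLinearMap.single ℂ (fun _ : Fin 4 => ℂ) j).analyticAt _).fun_comp
        analyticAt_snd)).fun_add
      (((ContinuousLinearMap.single ℂ (fun _ : Fin 4 => ℂ) i).analyticAt _).fun_comp
        analyticAt_fst)
  refine mixedDerivBound_integral
    (g := fun z w u => g (toComplex θ + Pi.single j w + Pi.single i z) u) hr hR₁ hR₂
    ?_ hm hG hG₁ hG₂ hG₁₂
  filter_upwards [hd] with u hu a ha b hb z hz w hw
  exact ⟨(hu a ha b hb z hz w hw).1.fun_comp_of_eq (hline (z, w)) rfl, (hu a ha b hb z hz w hw).2⟩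

lemma toComplex_add_single_add_single_mem_closedBall {ρ a b : ℝ} (ha : a ∈ ball (0 : ℝ) (ρ / 2))
    (hb : b ∈ ball (0 : ℝ) (ρ / 2)) :
    toComplex (θ + Pi.single j b + Pi.single i a) ∈ closedBall (toComplex θ) ρ := by
  have h := dist_toComplex_add_single_le θ i j 0 0 a b
  simp only [Pi.single_zero, add_zero, dist_zero_left, Complex.norm_real] at h
  rw [mem_closedBall']
  linarith [mem_ball_zero_iff.1 ha, mem_ball_zero_iff.1 hb]

lemma toComplex_add_single_mem_ball {ε a b : ℝ} (hε : 0 < ε) {z w : ℂ}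
    (hz : z ∈ closedBall (a : ℂ) (ε / 4)) (hw : w ∈ closedBall (b : ℂ) (ε / 4)) :
    toComplex θ + Pi.single j w + Pi.single i z ∈
      ball (toComplex (θ + Pi.single j b + Pi.single i a)) ε := by
  rw [mem_closedBall] at hz hw
  exact (dist_toComplex_add_single_le θ i j z w a b).trans_lt (by linarith)

/-- The radii of analyticity may shrink like `(2 + t) ^ (-3)`: two Cauchy estimates cost a factor
`(2 + t) ^ 6`, which the stretched exponential absorbs. -/
lemma mixedDerivBound_integral_of_shrinking_radius {g : (Fin 4 → ℂ) → ℝ → ℂ} {ρ c κ M : ℝ}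
    (hρ : 0 < ρ) (hc : 0 < c) (hκ : 0 < κ)
    (hm : ∀ θ', toComplex θ' ∈ closedBall (toComplex θ) ρ →
      AEStronglyMeasurable (g (toComplex θ')) (volume.restrict (Ioi 0)))
    (hg : ∀ θ', toComplex θ' ∈ closedBall (toComplex θ) ρ → ∀ t > 0,
      ∀ p ∈ ball (toComplex θ') (c / (2 + t) ^ 3),
        AnalyticAt ℂ (g · t) p ∧ ‖g p t‖ ≤ M * Real.exp (-t ^ κ)) :
    MixedDerivBound
      (fun a b => ∫ t in Ioi (0 : ℝ), g (toComplex (θ + Pi.single j b + Pi.single i a)) t)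
      (4 / c * M * ∫ t in Ioi (0 : ℝ), (2 + t) ^ 3 * Real.exp (-t ^ κ))
      (4 / c * M * ∫ t in Ioi (0 : ℝ), (2 + t) ^ 3 * Real.exp (-t ^ κ))
      ((4 / c) ^ 2 * M * ∫ t in Ioi (0 : ℝ), (2 + t) ^ 6 * Real.exp (-t ^ κ)) := by
  set R : ℝ → ℝ := fun t => c / (2 + t) ^ 3 / 4 with hR
  set G : ℝ → ℝ := fun t => M * Real.exp (-t ^ κ) with hG
  have hint (n : ℕ) := integrableOn_pow_mul_exp_neg_rpow hκ n
  have hG₀ : IntegrableOn G (Ioi 0) := by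
    simpa [G, IntegrableOn] using (hint 0).const_mul M
  have hG₁ : (fun t => G t / R t) = fun t => 4 / c * M * ((2 + t) ^ 3 * Real.exp (-t ^ κ)) := by
    funext t
    simp only [hG, hR, div_div_eq_mul_div]
    ring
  have hG₁₂ : (fun t => G t / R t / R t) =
      fun t => (4 / c) ^ 2 * M * ((2 + t) ^ 6 * Real.exp (-t ^ κ)) := by
    funext t
    simp only [hG, hR, div_div_eq_mul_div]
    ring
  have hRpos : ∀ᵐ t ∂volume.restrict (Ioi (0 : ℝ)), 0 < R t :=
    ae_restrict_of_forall_mem measurableSet_Ioi fun t (ht : 0 < t) => by positivity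
  simp only [← integral_const_mul, ← hG₁, ← hG₁₂]
  refine mixedDerivBound_integral_toComplex (half_pos hρ) hRpos hRpos ?_
    (fun a ha b hb => hm _ (toComplex_add_single_add_single_mem_closedBall ha hb)) hG₀ ?_ ?_ ?_
  · exact ae_restrict_of_forall_mem measurableSet_Ioi fun t (ht : 0 < t) a ha b hb z hz w hw =>
      hg _ (toComplex_add_single_add_single_mem_closedBall ha hb) t ht _
        (toComplex_add_single_mem_ball (by positivity) hz hw)
  · rw [hG₁]
    exact (hint 3).const_mul _
  · rw [hG₁]
    exact (hint 3).const_mul _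
  · rw [hG₁₂]
    exact (hint 6).const_mul _

lemma analyticAt_integrand {p : Fin 4 → ℂ} {z : ℂ} (hp : p ∈ paramDomain) (hz : 0 < z.re)
    (X : ℝ) :
    AnalyticAt ℂ (fun q => Complex.exp (-(I * z * X)) * Complex.exp (cumulant q z)) p :=
  analyticAt_const.mul
    (analyticAt_cumulant hp hz.le fun h => by simp [h] at hz).along_fst.cexp

lemma exists_norm_shiftedPart_le (hθ : θ ∈ ThetaInt) :
    ∃ C > 0, ∀ δ ∈ Ioc (0 : ℝ) 1, ∀ X : ℝ,
      ‖shiftedPart δ (toComplex θ) X‖ ≤ C * Real.exp (-δ * X) := by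
  obtain ⟨κ, hκ, C, hC0, hC⟩ := exists_norm_exp_cumulant_le isCompact_singleton
    (singleton_subset_iff.2 (toComplex_mem_paramDomain hθ))
  have hint : IntegrableOn (fun t : ℝ => Real.exp (-t ^ κ)) (Ioi 0) := by
    simpa using integrableOn_pow_mul_exp_neg_rpow hκ 0
  refine ⟨1 + C * ∫ t in Ioi (0 : ℝ), Real.exp (-t ^ κ), by positivity, fun δ hδ X => ?_⟩
  have hbound : ∀ t ∈ Ioi (0 : ℝ), ‖Complex.exp (-(I * (t + (-δ : ℝ) * I) * X)) *
      Complex.exp (cumulant (toComplex θ) (t + (-δ : ℝ) * I))‖ ≤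
        Real.exp (-δ * X) * C * Real.exp (-t ^ κ) := fun t ht => by
    have hy : |-δ| ≤ 1 := by simpa [abs_of_pos hδ.1] using hδ.2
    rw [norm_mul, norm_exp_neg_I_mul, mul_assoc]
    grw [hC θ rfl t ht (-δ) hy]
    simp
  have h := norm_integral_le_of_norm_le (hint.const_mul (Real.exp (-δ * X) * C))
    ((ae_restrict_iff' measurableSet_Ioi).2 (Eventually.of_forall hbound))
  rw [integral_const_mul] at h
  rw [shiftedPart]
  nlinarith [Real.exp_pos (-δ * X)]

theorem exists_mixedDerivBound_shiftedPart (hθ : θ ∈ ThetaInt) (i j : Fin 4) {δ : ℝ}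
    (hδ : δ ∈ Ioc (0 : ℝ) 1) :
    ∃ C > 0, ∀ X : ℝ, MixedDerivBound
      (fun a b => shiftedPart δ (toComplex (θ + Pi.single j b + Pi.single i a)) X)
      (C * Real.exp (-δ * X)) (C * Real.exp (-δ * X)) (C * Real.exp (-δ * X)) := by
  obtain ⟨ρ, hρ, hKp⟩ := nhds_basis_closedBall.mem_iff.1
    (isOpen_paramDomain.mem_nhds (toComplex_mem_paramDomain hθ))
  rw [← mul_div_cancel₀ ρ two_ne_zero] at hKp
  obtain ⟨κ, hκ, c, hc, C, _, hC⟩ := exists_norm_exp_cumulant_le_of_near (half_pos hρ) hKp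
  have hy : |-δ| ≤ 1 := by simpa [abs_of_pos hδ.1] using hδ.2
  set C₁ := 4 / c * C * ∫ t in Ioi (0 : ℝ), (2 + t) ^ 3 * Real.exp (-t ^ κ)
  set C₂ := (4 / c) ^ 2 * C * ∫ t in Ioi (0 : ℝ), (2 + t) ^ 6 * Real.exp (-t ^ κ)
  refine ⟨max 1 (max C₁ C₂), by positivity, fun X => ?_⟩
  have hC₁ : C₁ * Real.exp (-δ * X) ≤ max 1 (max C₁ C₂) * Real.exp (-δ * X) := by
    gcongr
    exact (le_max_left _ _).trans (le_max_right _ _)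
  have hC₂ : C₂ * Real.exp (-δ * X) ≤ max 1 (max C₁ C₂) * Real.exp (-δ * X) := by
    gcongr
    exact (le_max_right _ _).trans (le_max_right _ _)
  refine (mixedDerivBound_integral_of_shrinking_radius
    (g := fun p (t : ℝ) => Complex.exp (-(I * (t + (-δ : ℝ) * I) * X)) *
      Complex.exp (cumulant p (t + (-δ : ℝ) * I)))
    (M := C * Real.exp (-δ * X)) (half_pos hρ) hc hκ (fun θ' hθ' => ?_)
    (fun θ' hθ' t ht p hp => ?_)).mono
      (hC₁.trans_eq' (by ring)) (hC₁.trans_eq' (by ring)) (hC₂.trans_eq' (by ring))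
  · have hp := (hC θ' hθ' 1 one_pos 0 (by simp) _ (mem_ball_self (by positivity))).1
    exact ((continuousOn_integrand hp X).comp (by fun_prop) fun t (ht : 0 < t) => by
      simpa using ht.le).aestronglyMeasurable measurableSet_Ioi
  · obtain ⟨hpD, hpC⟩ := hC θ' hθ' t ht (-δ) hy p hp
    refine ⟨analyticAt_integrand hpD (by simpa using ht) X, ?_⟩
    rw [norm_mul, norm_exp_neg_I_mul]
    grw [hpC]
    exact le_of_eq (by simp; ring)

end

/-- The factor that one derivative in the `i`-th parameter costs in the tail: differentiating
`X ^ (-α - 1)` in the stability index `α` produces a logarithm. -/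
noncomputable def logWeight (i : Fin 4) (X : ℝ) : ℝ := if i = 2 then Real.log X else 1

section

variable {θ : Fin 4 → ℝ} {X ρ δ : ℝ}

lemma one_le_log (hX : Real.exp 1 ≤ X) : 1 ≤ Real.log X :=
  (Real.le_log_iff_exp_le ((Real.exp_pos 1).trans_le hX)).2 hX

lemma one_le_logWeight (i : Fin 4) (hX : Real.exp 1 ≤ X) : 1 ≤ logWeight i X := by
  unfold logWeight
  split_ifs
  exacts [one_le_log hX, le_rfl]

lemma Gamma_le_two {s : ℝ} (hs : s ∈ Icc (1 : ℝ) 3) : Real.Gamma s ≤ 2 := by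
  have hΓ3 : Real.Gamma 3 = 2 := by simp
  have h := Real.convexOn_Gamma.le_max_of_mem_Icc (mem_Ioi.2 one_pos)
    (mem_Ioi.2 (by norm_num : (0 : ℝ) < 3)) hs
  rwa [Real.Gamma_one, hΓ3, max_eq_right one_le_two] at h

lemma integrableOn_rpow_mul_exp_neg_mul {a : ℝ} (ha : -1 < a) (hX : 0 < X) :
    IntegrableOn (fun s : ℝ => s ^ a * Real.exp (-(X * s))) (Ioi 0) := by
  simpa using integrableOn_rpow_mul_exp_neg_mul_rpow ha one_pos hX

lemma integral_rpow_mul_exp_neg_mul_le {a : ℝ} (ha : a ∈ Icc (0 : ℝ) 2) (hX : 0 < X) :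
    ∫ s in Ioc 0 δ, s ^ a * Real.exp (-(X * s)) ≤ 2 * X ^ (-a - 1) := by
  have hΓ : ∫ s in Ioi (0 : ℝ), s ^ a * Real.exp (-(X * s)) =
      X ^ (-a - 1) * Real.Gamma (a + 1) := by
    rw [← neg_add', Real.rpow_neg hX.le, ← Real.inv_rpow hX.le, ← one_div,
      ← Real.integral_rpow_mul_exp_neg_mul_Ioi (by linarith [ha.1]) hX]
    simp only [add_sub_cancel_right]
  calc ∫ s in Ioc 0 δ, s ^ a * Real.exp (-(X * s))
      ≤ ∫ s in Ioi (0 : ℝ), s ^ a * Real.exp (-(X * s)) :=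
        setIntegral_mono_set (integrableOn_rpow_mul_exp_neg_mul (by linarith [ha.1]) hX)
          (ae_restrict_of_forall_mem measurableSet_Ioi fun s (hs : 0 < s) => by positivity)
          Ioc_subset_Ioi_self.eventuallyLE
    _ ≤ 2 * X ^ (-a - 1) := by
        grw [hΓ, Gamma_le_two ⟨by linarith [ha.1], by linarith [ha.2]⟩, mul_comm]

lemma rpow_neg_sub_div_log (hX : Real.exp 1 ≤ X) (α ρ : ℝ) :
    X ^ (-(α - ρ / Real.log X) - 1) = Real.exp ρ * X ^ (-α - 1) := by
  have hX0 : 0 < X := (Real.exp_pos 1).trans_le hX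
  have hlog : Real.log X ≠ 0 := (one_pos.trans_le (one_le_log hX)).ne'
  rw [Real.rpow_def_of_pos hX0, Real.rpow_def_of_pos hX0, ← Real.exp_add]
  congr 1
  field_simp
  ring

lemma norm_le_of_mem_closedBall_div_logWeight (hX : Real.exp 1 ≤ X) (hρ : 0 < ρ) (i : Fin 4)
    {a : ℝ} (ha : a ∈ ball (0 : ℝ) (ρ / 4 / Real.log X)) {z : ℂ}
    (hz : z ∈ closedBall (a : ℂ) (ρ / 4 / logWeight i X)) :
    ‖z‖ ≤ ρ / 2 ∧ ‖(Pi.single i z : Fin 4 → ℂ) 2‖ ≤ ρ / Real.log X / 2 := by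
  have hlog := one_le_log hX
  have hza : ‖z‖ ≤ ρ / 4 / logWeight i X + ρ / 4 / Real.log X := by
    have h := norm_add_le (z - a) a
    rw [sub_add_cancel, Complex.norm_real] at h
    linarith [mem_closedBall_iff_norm.1 hz, mem_ball_zero_iff.1 ha]
  refine ⟨?_, ?_⟩
  · have h := div_le_self (by positivity : 0 ≤ ρ / 4) (one_le_logWeight i hX)
    have h' := div_le_self (by positivity : 0 ≤ ρ / 4) hlog
    linarith
  · by_cases hi : i = 2
    · subst hi
      rw [logWeight, if_pos rfl] at hza
      rw [Pi.single_eq_same]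
      exact hza.trans_eq (by ring)
    · rw [Pi.single_eq_of_ne (Ne.symm hi), norm_zero]
      positivity

lemma continuous_axisIm {p : Fin 4 → ℂ} (hp : p ∈ paramDomain) : Continuous (axisIm p) := by
  have hphase : Continuous fun s : ℝ => axisPhase p s :=
    continuous_const.mul (Complex.continuous_ofReal_cpow_const hp.2.1)
  have hcumulant : Continuous fun s : ℝ => cumulant p (-(I * s)) :=
    (continuousOn_cumulant hp).comp_continuous (by fun_prop) fun s => by simp
  exact (hcumulant.sub (continuous_const.mul hphase)).cexp.mul
    (Complex.continuous_sin.comp hphase)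

lemma add_single_mem_closedBall (hX : Real.exp 1 ≤ X) (hρ : 0 < ρ) {i j : Fin 4} {a b : ℝ}
    (ha : a ∈ ball (0 : ℝ) (ρ / 4 / Real.log X)) (hb : b ∈ ball (0 : ℝ) (ρ / 4 / Real.log X))
    {z w : ℂ} (hz : z ∈ closedBall (a : ℂ) (ρ / 4 / logWeight i X))
    (hw : w ∈ closedBall (b : ℂ) (ρ / 4 / logWeight j X)) :
    toComplex θ + Pi.single j w + Pi.single i z ∈ closedBall (toComplex θ) ρ ∧
      θ 2 - ρ / Real.log X ≤
        ((toComplex θ + Pi.single j w + Pi.single i z : Fin 4 → ℂ) 2).re := by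
  obtain ⟨hz, hz2⟩ := norm_le_of_mem_closedBall_div_logWeight hX hρ i ha hz
  obtain ⟨hw, hw2⟩ := norm_le_of_mem_closedBall_div_logWeight hX hρ j hb hw
  constructor
  · have h := norm_add_single_sub_le (toComplex θ) i j z w 0 0
    simp only [Pi.single_zero, add_zero, sub_zero] at h
    rw [mem_closedBall_iff_norm]
    linarith
  · have hz2' := (abs_le.1 ((Complex.abs_re_le_norm _).trans hz2)).1
    have hw2' := (abs_le.1 ((Complex.abs_re_le_norm _).trans hw2)).1
    simp only [Pi.add_apply, Complex.add_re, toComplex, Complex.ofReal_re]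
    linarith

lemma mixedDerivBound_axisPart {C : ℝ} (hρ : 0 < ρ) (hρθ : ρ ≤ θ 2)
    (hKp : closedBall (toComplex θ) ρ ⊆ paramDomain)
    (hC : ∀ p ∈ closedBall (toComplex θ) ρ, ∀ s ∈ Ioc (0 : ℝ) 1, ‖axisIm p s‖ ≤ C * s ^ (p 2).re)
    (hC0 : 0 < C) (hδ : δ ≤ 1) (hX : Real.exp 1 ≤ X) (i j : Fin 4) {T : ℝ}
    (hT : T = ∫ s in Ioc 0 δ, C * (s ^ (θ 2 - ρ / Real.log X) * Real.exp (-(X * s)))) :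
    MixedDerivBound (fun a b => axisPart δ (toComplex (θ + Pi.single j b + Pi.single i a)) X)
      (T / (ρ / 4 / logWeight i X)) (T / (ρ / 4 / logWeight j X))
      (T / (ρ / 4 / logWeight i X) / (ρ / 4 / logWeight j X)) := by
  have hX0 : 0 < X := (Real.exp_pos 1).trans_le hX
  have hlog := one_le_log hX
  have hpos (k : Fin 4) : 0 < ρ / 4 / logWeight k X :=
    div_pos (by positivity) (one_pos.trans_le (one_le_logWeight k hX))
  have hint : IntegrableOn (fun s => C * (s ^ (θ 2 - ρ / Real.log X) * Real.exp (-(X * s))))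
      (Ioc 0 δ) :=
    ((integrableOn_rpow_mul_exp_neg_mul (by linarith [div_le_self hρ.le hlog]) hX0).mono_set
      Ioc_subset_Ioi_self).const_mul C
  rw [hT, ← integral_div, ← integral_div, ← integral_div]
  refine mixedDerivBound_integral_toComplex (g := fun p s => Real.exp (-(X * s)) * axisIm p s)
    (r := ρ / 4 / Real.log X) (by positivity) (Eventually.of_forall fun _ => hpos i)
    (Eventually.of_forall fun _ => hpos j)
    (ae_restrict_of_forall_mem measurableSet_Ioc fun s hs a ha b hb z hz w hw => ?_)
    (fun a ha b hb => ?_) hint (hint.div_const _) (hint.div_const _)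
    ((hint.div_const _).div_const _)
  · obtain ⟨hp, hre⟩ := add_single_mem_closedBall (θ := θ) hX hρ ha hb hz hw
    refine ⟨analyticAt_const.mul (analyticAt_axisIm (hKp hp) hs.1), ?_⟩
    have hs1 : s ≤ 1 := hs.2.trans hδ
    rw [norm_mul, Complex.norm_real, Real.norm_of_nonneg (Real.exp_pos _).le]
    grw [hC _ hp s ⟨hs.1, hs1⟩, Real.rpow_le_rpow_of_exponent_ge hs.1 hs1 hre]
    exact le_of_eq (by ring)
  · have hp := (add_single_mem_closedBall (θ := θ) hX hρ ha hb
      (mem_closedBall_self (hpos i).le) (mem_closedBall_self (hpos j).le)).1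
    rw [toComplex_add_single, toComplex_add_single]
    exact ((by fun_prop : Continuous fun s : ℝ => (Real.exp (-(X * s)) : ℂ)).mul
      (continuous_axisIm (hKp hp))).aestronglyMeasurable

/-- In a complex neighbourhood of the parameters whose size in the direction of `α` is of order
`1 / log X`, the majorant `X ^ (-α - 1)` changes only by a constant factor. -/
theorem exists_mixedDerivBound_axisPart (hθ : θ ∈ ThetaInt) (i j : Fin 4) (hδ : δ ≤ 1) :
    ∃ C > 0, ∀ X ≥ Real.exp 1, MixedDerivBound
      (fun a b => axisPart δ (toComplex (θ + Pi.single j b + Pi.single i a)) X)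
      (C * (X ^ (-θ 2 - 1) * logWeight i X)) (C * (X ^ (-θ 2 - 1) * logWeight j X))
      (C * (X ^ (-θ 2 - 1) * (logWeight i X * logWeight j X))) := by
  obtain ⟨ρ₀, hρ₀, hKp₀⟩ := nhds_basis_closedBall.mem_iff.1
    (isOpen_paramDomain.mem_nhds (toComplex_mem_paramDomain hθ))
  obtain ⟨ρ, hρ, hρle⟩ := exists_between (lt_min (lt_min hρ₀ hθ.2.1.1) one_pos)
  obtain ⟨⟨hρρ₀, hρα⟩, hρ1⟩ : (ρ < ρ₀ ∧ ρ < θ 2) ∧ ρ < 1 := by simpa only [lt_min_iff] using hρle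
  have hKp := (closedBall_subset_closedBall hρρ₀.le).trans hKp₀
  obtain ⟨C, hC0, hC⟩ := exists_norm_axisIm_le (isCompact_closedBall _ ρ) hKp
  refine ⟨(4 / ρ) ^ 2 * (C * (2 * Real.exp ρ)), by positivity, fun X hX => ?_⟩
  have hX0 : 0 < X := (Real.exp_pos 1).trans_le hX
  have hlog := one_le_log hX
  obtain ⟨T, hT⟩ : ∃ T, T =
      ∫ s in Ioc 0 δ, C * (s ^ (θ 2 - ρ / Real.log X) * Real.exp (-(X * s))) := ⟨_, rfl⟩
  have hTle : T ≤ C * (2 * Real.exp ρ) * X ^ (-θ 2 - 1) := by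
    have hmem : θ 2 - ρ / Real.log X ∈ Icc (0 : ℝ) 2 :=
      ⟨by linarith [div_le_self hρ.le hlog],
        by linarith [hθ.2.1.2, div_pos hρ (one_pos.trans_le hlog)]⟩
    rw [hT, integral_const_mul]
    grw [integral_rpow_mul_exp_neg_mul_le hmem hX0, rpow_neg_sub_div_log hX]
    exact le_of_eq (by ring)
  have hi := one_pos.trans_le (one_le_logWeight i hX)
  have hj := one_pos.trans_le (one_le_logWeight j hX)
  have hρ4 : 4 / ρ ≤ (4 / ρ) ^ 2 :=
    le_self_pow₀ ((one_le_div hρ).2 (by linarith)) two_ne_zero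
  have hfirst : ∀ l > 0, T / (ρ / 4 / l) ≤
      (4 / ρ) ^ 2 * (C * (2 * Real.exp ρ)) * (X ^ (-θ 2 - 1) * l) := fun l hl => by
    grw [hTle, ← hρ4]
    exact le_of_eq (by field_simp)
  refine (mixedDerivBound_axisPart hρ hρα.le hKp hC hC0 hδ hX i j hT).mono
    (hfirst _ hi) (hfirst _ hj) ?_
  grw [hTle]
  exact le_of_eq (by field_simp)

end

/-! ### Tail bounds -/

section

variable {θ : Fin 4 → ℝ}

lemma le_integral_rpow_mul_exp_neg_mul {a δ X : ℝ} (ha : 0 ≤ a) (hX : 0 < X) (hδ : 1 / X ≤ δ) :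
    Real.exp (-1) / (a + 1) * X ^ (-a - 1) ≤ ∫ s in Ioc 0 δ, s ^ a * Real.exp (-(X * s)) := by
  have hint := integrableOn_rpow_mul_exp_neg_mul (by linarith : -1 < a) hX
  calc Real.exp (-1) / (a + 1) * X ^ (-a - 1)
      = ∫ s in Ioc 0 (1 / X), s ^ a * Real.exp (-1) := by
        rw [integral_mul_const, ← intervalIntegral.integral_of_le (by positivity),
          integral_rpow (Or.inl (by linarith)), Real.zero_rpow (by linarith), sub_zero, one_div,
          Real.inv_rpow hX.le, ← Real.rpow_neg hX.le, neg_add']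
        ring
    _ ≤ ∫ s in Ioc 0 (1 / X), s ^ a * Real.exp (-(X * s)) := by
        refine setIntegral_mono_on
          ((intervalIntegral.intervalIntegrable_rpow' (by linarith)).1.mul_const _)
          (hint.mono_set Ioc_subset_Ioi_self) measurableSet_Ioc fun s hs => ?_
        have hsX : X * s ≤ 1 := by simpa [mul_comm] using (le_div_iff₀ hX).1 hs.2
        have hs0 := hs.1
        gcongr
    _ ≤ ∫ s in Ioc 0 δ, s ^ a * Real.exp (-(X * s)) :=
        setIntegral_mono_set (hint.mono_set Ioc_subset_Ioi_self)
          (ae_restrict_of_forall_mem measurableSet_Ioc fun s hs => by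
            have hs0 := hs.1
            positivity)
          (Ioc_subset_Ioc_right hδ).eventuallyLE

lemma exists_mul_rpow_le_axisPart (hθ : θ ∈ ThetaInt) :
    ∃ δ ∈ Ioc (0 : ℝ) 1, ∃ c > (0 : ℝ), ∀ᶠ X in atTop,
      c * X ^ (-θ 2 - 1) ≤ (axisPart δ (toComplex θ) X).re := by
  obtain ⟨δ, hδ, c, hc, haxis⟩ := exists_mul_rpow_le_axisIm hθ
  have hα : 0 < θ 2 := hθ.2.1.1
  refine ⟨δ, hδ, c * (Real.exp (-1) / (θ 2 + 1)), by positivity, ?_⟩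
  filter_upwards [eventually_ge_atTop (1 / δ), eventually_gt_atTop 0] with X hXδ hX
  have hcont : Continuous fun s : ℝ => (Real.exp (-(X * s)) : ℂ) * axisIm (toComplex θ) s :=
    (by fun_prop : Continuous fun s : ℝ => (Real.exp (-(X * s)) : ℂ)).mul
      (continuous_axisIm (toComplex_mem_paramDomain hθ))
  have hint := hcont.integrableOn_Ioc (μ := volume) (a := 0) (b := δ)
  calc c * (Real.exp (-1) / (θ 2 + 1)) * X ^ (-θ 2 - 1)
      ≤ c * ∫ s in Ioc 0 δ, s ^ θ 2 * Real.exp (-(X * s)) := by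
        grw [← le_integral_rpow_mul_exp_neg_mul hα.le hX (one_div_le hδ.1 hX |>.1 hXδ), mul_assoc]
    _ = ∫ s in Ioc 0 δ, c * (s ^ θ 2 * Real.exp (-(X * s))) := (integral_const_mul _ _).symm
    _ ≤ ∫ s in Ioc 0 δ, ((Real.exp (-(X * s)) : ℂ) * axisIm (toComplex θ) s).re := by
        refine setIntegral_mono_on (((integrableOn_rpow_mul_exp_neg_mul (by linarith) hX).mono_set
          Ioc_subset_Ioi_self).const_mul c) hint.re measurableSet_Ioc fun s hs => ?_
        rw [Complex.re_ofReal_mul]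
        nlinarith [mul_le_mul_of_nonneg_left (haxis s hs) (Real.exp_pos (-(X * s))).le]
    _ = (axisPart δ (toComplex θ) X).re := integral_re hint

lemma eventually_exp_neg_mul_le {δ c : ℝ} (hδ : 0 < δ) (hc : 0 < c) (b : ℝ) :
    ∀ᶠ X in atTop, Real.exp (-δ * X) ≤ c * X ^ b := by
  filter_upwards [(isLittleO_exp_neg_mul_rpow_atTop hδ b).bound hc, eventually_gt_atTop 0]
    with X h hX
  rwa [Real.norm_of_nonneg (by positivity), Real.norm_of_nonneg (by positivity)] at h

theorem exists_mul_rpow_le_fM (hθ : θ ∈ ThetaInt) :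
    ∃ c > (0 : ℝ), ∀ᶠ X in atTop, c * X ^ (-θ 2 - 1) ≤ fM θ X := by
  obtain ⟨δ, hδ, c, hc, haxis⟩ := exists_mul_rpow_le_axisPart hθ
  obtain ⟨C, hC0, hC⟩ := exists_norm_shiftedPart_le hθ
  refine ⟨π⁻¹ * (c / 2), by positivity, ?_⟩
  filter_upwards [haxis, eventually_ge_atTop 0,
    eventually_exp_neg_mul_le hδ.1 (div_pos (half_pos hc) hC0) (-θ 2 - 1)] with X hX hX0 hexp
  have hshifted : -(c / 2 * X ^ (-θ 2 - 1)) ≤ (shiftedPart δ (toComplex θ) X).re := by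
    refine neg_le_of_abs_le ((Complex.abs_re_le_norm _).trans ((hC δ hδ X).trans ?_))
    grw [hexp]
    exact le_of_eq (by field_simp)
  rw [fM_eq_axisPart_add_shiftedPart hθ hX0 hδ, Complex.add_re, mul_assoc]
  gcongr
  linarith

lemma isOpen_ThetaInt : IsOpen ThetaInt :=
  (isOpen_lt continuous_const (continuous_apply 1)).inter
    ((isOpen_Ioo.preimage (continuous_apply 2)).inter (isOpen_Ioo.preimage (continuous_apply 3)))

lemma eventually_add_single_mem_ThetaInt (hθ : θ ∈ ThetaInt) (i : Fin 4) :
    ∀ᶠ a in 𝓝 (0 : ℝ), θ + Pi.single i a ∈ ThetaInt := by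
  have hcont : Continuous fun a : ℝ => θ + Pi.single i a :=
    continuous_const.add (continuous_single (A := fun _ : Fin 4 => ℝ) i)
  exact hcont.continuousAt.eventually (isOpen_ThetaInt.mem_nhds (by simpa using hθ))

theorem exists_mixedDerivBound_fM (hθ : θ ∈ ThetaInt) (i j : Fin 4) :
    ∃ C > 0, ∀ᶠ X in atTop, MixedDerivBound
      (fun a b => fM (θ + Pi.single j b + Pi.single i a) X)
      (C * (X ^ (-θ 2 - 1) * logWeight i X)) (C * (X ^ (-θ 2 - 1) * logWeight j X))
      (C * (X ^ (-θ 2 - 1) * (logWeight i X * logWeight j X))) := by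
  have hone : (1 : ℝ) ∈ Ioc (0 : ℝ) 1 := ⟨one_pos, le_rfl⟩
  obtain ⟨C, hC0, hC⟩ := exists_mixedDerivBound_axisPart hθ i j (le_refl 1)
  obtain ⟨C', hC'0, hC'⟩ := exists_mixedDerivBound_shiftedPart hθ i j hone
  set L : ℂ →L[ℝ] ℝ := π⁻¹ • Complex.reCLM
  refine ⟨1 + ‖L‖ * (C + C'), by positivity, ?_⟩
  filter_upwards [eventually_ge_atTop (Real.exp 1),
    eventually_exp_neg_mul_le one_pos one_pos (-θ 2 - 1)] with X hX hexp
  have hX0 : 0 < X := (Real.exp_pos 1).trans_le hX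
  have hbound (l : ℝ) (hl : 1 ≤ l) :
      ‖L‖ * (C * (X ^ (-θ 2 - 1) * l) + C' * Real.exp (-1 * X)) ≤
        (1 + ‖L‖ * (C + C')) * (X ^ (-θ 2 - 1) * l) := by
    have hexp' : Real.exp (-1 * X) ≤ X ^ (-θ 2 - 1) * l :=
      (hexp.trans_eq (one_mul _)).trans (le_mul_of_one_le_right (by positivity) hl)
    grw [hexp']
    have hnonneg : 0 ≤ X ^ (-θ 2 - 1) * l := by positivity
    linarith
  have hi := one_le_logWeight i hX
  have hj := one_le_logWeight j hX
  have hrepr {θ' : Fin 4 → ℝ} (hθ' : θ' ∈ ThetaInt) :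
      fM θ' X = L (axisPart 1 (toComplex θ') X + shiftedPart 1 (toComplex θ') X) :=
    fM_eq_axisPart_add_shiftedPart hθ' hX0.le hone
  refine ((((hC X hX).add (hC' X)).clm_comp L).congr ?_ ?_).mono (hbound _ hi) (hbound _ hj)
    (hbound _ (one_le_mul_of_one_le_of_one_le hi hj))
  · filter_upwards [eventually_add_single_mem_ThetaInt hθ j] with b hb
    filter_upwards [eventually_add_single_mem_ThetaInt hb i] with a ha using hrepr ha
  · filter_upwards [eventually_add_single_mem_ThetaInt hθ j] with b hb
    exact hrepr (by simpa using hb)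

theorem exists_abs_ellPP_le_logWeight (hθ : θ ∈ ThetaInt) (i j : Fin 4) :
    ∃ C > 0, ∀ᶠ X in atTop, |ellPP i j θ X| ≤ C * (logWeight i X * logWeight j X) := by
  obtain ⟨c, hc, hlower⟩ := exists_mul_rpow_le_fM hθ
  obtain ⟨C, hC, hderiv⟩ := exists_mixedDerivBound_fM hθ i j
  refine ⟨C / c + (C / c) ^ 2, by positivity, ?_⟩
  filter_upwards [hlower, hderiv, eventually_gt_atTop 0] with X hf hd hX
  refine (abs_ellPP_le hd (by positivity) hf).trans_eq ?_
  field_simp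

theorem isBigOAtInfty_ellPP (hθ : θ ∈ ThetaInt) (i j : Fin 4) :
    IsBigOAtInfty (ellPP i j θ) (fun x => logWeight i |x| * logWeight j |x|) := by
  obtain ⟨C, hC, hpos⟩ := exists_abs_ellPP_le_logWeight hθ i j
  obtain ⟨C', -, hneg⟩ := exists_abs_ellPP_le_logWeight (reflect_mem_ThetaInt hθ) i j
  obtain ⟨M, hM⟩ := eventually_atTop.1 (hpos.and hneg)
  refine ⟨max C C', lt_max_of_lt_left hC, max M (Real.exp 1), by positivity, fun x hx => ?_⟩
  obtain ⟨hMx, hex⟩ := max_le_iff.1 hx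
  have hw : 0 ≤ logWeight i |x| * logWeight j |x| :=
    mul_nonneg (zero_le_one.trans (one_le_logWeight i hex))
      (zero_le_one.trans (one_le_logWeight j hex))
  obtain ⟨hright, hleft⟩ := hM |x| hMx
  rw [← abs_ellPP_neg] at hleft
  rcases abs_choice x with habs | habs
  · have hx' : ellPP i j θ |x| = ellPP i j θ x := by rw [habs]
    rw [hx'] at hright
    exact hright.trans (mul_le_mul_of_nonneg_right (le_max_left _ _) hw)
  · rw [neg_eq_iff_eq_neg.2 habs] at hleft
    exact hleft.trans (mul_le_mul_of_nonneg_right (le_max_right _ _) hw)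

end

end StableScore

/-- Tail behavior of the second-order score derivatives:
`ℓ_{σσ} = O(1)`, `ℓ_{σα} = O(log|x|)`, `ℓ_{σβ} = O(1)`,
`ℓ_{αα} = O(log²|x|)`, `ℓ_{αβ} = O(log|x|)`, `ℓ_{ββ} = O(1)`. -/
theorem second_score_tail_bounds (θ : Fin 4 → ℝ) (hθ : θ ∈ ThetaInt) :
    IsBigOAtInfty (ellPP 1 1 θ) (fun _ => 1) ∧
    IsBigOAtInfty (ellPP 1 2 θ) (fun x => Real.log |x|) ∧
    IsBigOAtInfty (ellPP 1 3 θ) (fun _ => 1) ∧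
    IsBigOAtInfty (ellPP 2 2 θ) (fun x => (Real.log |x|) ^ 2) ∧
    IsBigOAtInfty (ellPP 2 3 θ) (fun x => Real.log |x|) ∧
    IsBigOAtInfty (ellPP 3 3 θ) (fun _ => 1) := by
  have h := StableScore.isBigOAtInfty_ellPP hθ
  refine ⟨?_, ?_, ?_, ?_, ?_, ?_⟩
  · simpa [StableScore.logWeight] using h 1 1
  · simpa [StableScore.logWeight] using h 1 2
  · simpa [StableScore.logWeight] using h 1 3
  · simpa [StableScore.logWeight, pow_two] using h 2 2
  · simpa [StableScore.logWeight] using h 2 3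
  · simpa [StableScore.logWeight] using h 3 3
end

section
/- For every x ∈ ℝ, the map θ ↦ f(x;θ) is twice continuously differentiable on Θ_M°; for each i the partial derivative f_{θi}(·;θ) is continuously differentiable with respect to x; and all of f_{θi}, f_{θi}' = ∂f_{θi}/∂x, and f_{θiθj} (i,j = 1,…,4) are jointly continuous in (x,θ) on ℝ × Θ_M°. -/
open MeasureTheory Filter

/-!
The reflection `t ↦ -t` conjugates the integrand of the inversion formula, so location-scale
invariance turns the density into `σ⁻¹ g((x - μ) / σ, α, β)`, where `g` is a cosine integral over
`t > 0` with amplitude `exp (-t ^ α)` and phase `z * t + β * tan (π * α / 2) * (t - t ^ α)`.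
The phase is smooth across `α = 1` because both `(1 - α) * tan (π * α / 2)` and
`(exp y - 1) / y` at `y = (α - 1) * log t` extend smoothly. Each derivative of the integrand in
`(z, α, β)` costs only powers of `t` and `|log t|`, locally uniformly in the parameters, and
`exp (-t ^ α)` makes these integrable, so one may differentiate under the integral sign to
every order.
-/

namespace StableDensity

open Set Topology
open scoped ContDiff

section ParametricIntegral

variable {E F X : Type*} [NormedAddCommGroup E] [NormedSpace ℝ E] [NormedAddCommGroup F]
  [NormedSpace ℝ F] {U : Set E}

theorem integral_curryLeft [MeasurableSpace X] {μ : Measure X} {k : ℕ}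
    (φ : X → E [×(k + 1)]→L[ℝ] F) : ∫ t, (φ t).curryLeft ∂μ = (∫ t, φ t ∂μ).curryLeft :=
  ContinuousLinearEquiv.integral_comp_comm (𝕜 := ℝ) (E := E [×(k + 1)]→L[ℝ] F)
    (F := E →L[ℝ] E [×k]→L[ℝ] F)
    (continuousMultilinearCurryLeftEquiv ℝ (fun _ : Fin (k + 1) => E) F).toContinuousLinearEquiv φ

theorem contDiffOn_integral_of_dominated [MeasurableSpace X] {μ : Measure X} {n : ℕ∞}
    {f : E → X → F} (hU : IsOpen U) (hf : ∀ᵐ t ∂μ, ContDiffOn ℝ n (f · t) U)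
    (hmeas : ∀ k : ℕ, k ≤ n → ∀ q ∈ U,
      AEStronglyMeasurable (fun t => iteratedFDerivWithin ℝ k (f · t) U q) μ)
    (hbound : ∀ k : ℕ, k ≤ n → ∀ p ∈ U, ∃ s ∈ 𝓝 p, ∃ g, Integrable g μ ∧
      ∀ᵐ t ∂μ, ∀ q ∈ s, ‖iteratedFDerivWithin ℝ k (f · t) U q‖ ≤ g t) :
    ContDiffOn ℝ n (fun q => ∫ t, f q t ∂μ) U := by
  have hint : ∀ k : ℕ, k ≤ n → ∀ q ∈ U,
      Integrable (fun t => iteratedFDerivWithin ℝ k (f · t) U q) μ := fun k hk q hq => by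
    obtain ⟨s, hs, g, hg, hle⟩ := hbound k hk q hq
    exact hg.mono' (hmeas k hk q hq) (hle.mono fun t ht => ht q (mem_of_mem_nhds hs))
  suffices HasFTaylorSeriesUpToOn n (fun q => ∫ t, f q t ∂μ)
      (fun q k => ∫ t, iteratedFDerivWithin ℝ k (f · t) U q ∂μ) U from this.contDiffOn
  refine ⟨fun q hq => ?_, fun k hk p hp => ?_, fun k hk p hp => ?_⟩
  · rw [ContinuousMultilinearMap.curry0_apply,
      ContinuousMultilinearMap.integral_apply (hint 0 zero_le q hq)]
    simp only [iteratedFDerivWithin_zero_apply]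
  · have hk : (k : ℕ∞) < n := mod_cast hk
    have hk' : ((k + 1 : ℕ) : ℕ∞) ≤ n := mod_cast Order.add_one_le_of_lt hk
    obtain ⟨s, hs, g, hg, hle⟩ := hbound (k + 1) hk' p hp
    have h := hasFDerivAt_integral_of_dominated_of_fderiv_le (μ := μ) (bound := g) (x₀ := p)
      (F' := fun q t => (iteratedFDerivWithin ℝ (k + 1) (f · t) U q).curryLeft)
      (inter_mem hs (hU.mem_nhds hp))
      (eventually_of_mem (hU.mem_nhds hp) (hmeas k hk.le)) (hint k hk.le p hp)
      ((continuousMultilinearCurryLeftEquiv ℝ (fun _ : Fin (k + 1) => E) F).continuous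
        |>.comp_aestronglyMeasurable (hmeas (k + 1) hk' p hp))
      (hle.mono fun t ht q hq => by
        rw [ContinuousMultilinearMap.curryLeft_norm]; exact ht q hq.1)
      hg
      (hf.mono fun t ht q hq => ((ht.ftaylorSeriesWithin hU.uniqueDiffOn).fderivWithin k
        (mod_cast hk) q hq.2).hasFDerivAt (hU.mem_nhds hq.2))
    rw [integral_curryLeft] at h
    exact h.hasFDerivWithinAt
  · obtain ⟨s, hs, g, hg, hle⟩ := hbound k (mod_cast hk) p hp
    refine (continuousAt_of_dominated (eventually_of_mem (hU.mem_nhds hp) (hmeas k (mod_cast hk)))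
      (eventually_of_mem hs fun q hq => hle.mono fun t ht => ht q hq) hg ?_).continuousWithinAt
    exact hf.mono fun t ht => (ht.continuousOn_iteratedFDerivWithin hk hU.uniqueDiffOn).continuousAt
      (hU.mem_nhds hp)

variable {G : Type*} [NormedAddCommGroup G] [NormedSpace ℝ G] {V : Set G}

theorem contDiffOn_iteratedFDerivWithin_left {f : E → G → F} (hU : IsOpen U) (hV : IsOpen V)
    (hf : ContDiffOn ℝ ∞ (Function.uncurry f) (U ×ˢ V)) (k : ℕ) :
    ContDiffOn ℝ ∞ (fun p : E × G => iteratedFDerivWithin ℝ k (f · p.2) U p.1) (U ×ˢ V) := by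
  induction k with
  | zero =>
    simp only [iteratedFDerivWithin_zero_eq_comp]
    exact (continuousMultilinearCurryFin0 ℝ E F).symm.contDiff.comp_contDiffOn hf
  | succ k ih =>
    have hUV : IsOpen (U ×ˢ V) := hU.prod hV
    have hpartial : ContDiffOn ℝ ∞
        (fun p : E × G => fderivWithin ℝ (iteratedFDerivWithin ℝ k (f · p.2) U) U p.1)
        (U ×ˢ V) := by
      refine ContDiffOn.congr ((ih.fderiv_of_isOpen (m := ∞) hUV le_rfl).clm_comp
        (contDiffOn_const (c := ContinuousLinearMap.inl ℝ E G))) fun p hp => ?_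
      have hjoint := ((ih.contDiffAt (hUV.mem_nhds hp)).differentiableAt (by simp)).hasFDerivAt
      rw [fderivWithin_of_isOpen hU hp.1]
      exact (HasFDerivAt.comp (f := fun q => (q, p.2)) p.1 hjoint
        (hasFDerivAt_prodMk_left p.1 p.2)).fderiv
    exact (continuousMultilinearCurryLeftEquiv ℝ (fun _ : Fin (k + 1) => E) F).symm.contDiff
      |>.comp_contDiffOn hpartial

end ParametricIntegral

section SymbolCalculus

/-- The weight whose powers measure polynomial growth at infinity and logarithmic growth at the
origin. -/
noncomputable def logWeight (t : ℝ) : ℝ := 1 + |Real.log t| + |t|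

theorem one_le_logWeight (t : ℝ) : 1 ≤ logWeight t := by
  unfold logWeight; linarith [abs_nonneg (Real.log t), abs_nonneg t]

theorem logWeight_pos (t : ℝ) : 0 < logWeight t := one_pos.trans_le (one_le_logWeight t)

theorem abs_log_le_logWeight (t : ℝ) : |Real.log t| ≤ logWeight t := by
  unfold logWeight; linarith [abs_nonneg t]

theorem abs_le_logWeight (t : ℝ) : |t| ≤ logWeight t := by
  unfold logWeight; linarith [abs_nonneg (Real.log t)]

variable {E : Type*} [NormedAddCommGroup E] [NormedSpace ℝ E] {U : Set E}
  {m m₁ m₂ a b : E → ℝ → ℝ}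

/-- A symbol of order `m`: a function of a parameter `q ∈ U` and a frequency `t > 0`, jointly
smooth, all of whose `q`-derivatives are bounded by `m`, locally uniformly in `q` and uniformly in
`t` up to a constant and a power of `logWeight t`. -/
structure IsSymbol (U : Set E) (m a : E → ℝ → ℝ) : Prop where
  contDiffOn : ContDiffOn ℝ ∞ (Function.uncurry a) (U ×ˢ Ioi 0)
  bound : ∀ p ∈ U, ∀ k : ℕ, ∃ C : ℝ, ∃ N : ℕ, 0 ≤ C ∧ ∀ᶠ q in 𝓝[U] p, ∀ t > 0, ∀ i ≤ k,
    ‖iteratedFDerivWithin ℝ i (a · t) U q‖ ≤ C * logWeight t ^ N * m q t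

namespace IsSymbol

theorem contDiffOn_left (ha : IsSymbol U m a) {t : ℝ} (ht : 0 < t) :
    ContDiffOn ℝ ∞ (a · t) U :=
  ha.contDiffOn.comp (contDiff_prodMk_left t).contDiffOn fun _ hq => ⟨hq, ht⟩

theorem congr (ha : IsSymbol U m a) (h : ∀ q ∈ U, ∀ t > 0, b q t = a q t) : IsSymbol U m b where
  contDiffOn := ha.contDiffOn.congr fun p hp => h p.1 hp.1 p.2 hp.2
  bound p hp k := by
    obtain ⟨C, N, hC, hbd⟩ := ha.bound p hp k
    refine ⟨C, N, hC, ?_⟩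
    filter_upwards [hbd, self_mem_nhdsWithin] with q hq hqU t ht i hi
    rw [iteratedFDerivWithin_congr (fun q hq => h q hq t ht) hqU]
    exact hq t ht i hi

theorem mono (ha : IsSymbol U m₁ a) {C : ℝ} (hC : 0 ≤ C) (N : ℕ)
    (h : ∀ q ∈ U, ∀ t > 0, m₁ q t ≤ C * logWeight t ^ N * m₂ q t) : IsSymbol U m₂ a where
  contDiffOn := ha.contDiffOn
  bound p hp k := by
    obtain ⟨C', N', hC', hbd⟩ := ha.bound p hp k
    refine ⟨C' * C, N' + N, by positivity, ?_⟩
    filter_upwards [hbd, self_mem_nhdsWithin] with q hq hqU t ht i hi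
    have hw := (logWeight_pos t).le
    calc ‖iteratedFDerivWithin ℝ i (a · t) U q‖ ≤ C' * logWeight t ^ N' * m₁ q t := hq t ht i hi
      _ ≤ C' * logWeight t ^ N' * (C * logWeight t ^ N * m₂ q t) := by
        gcongr; exact h q hqU t ht
      _ = C' * C * logWeight t ^ (N' + N) * m₂ q t := by ring

theorem neg (hU : UniqueDiffOn ℝ U) (ha : IsSymbol U m a) : IsSymbol U m fun q t => -a q t where
  contDiffOn := ha.contDiffOn.neg
  bound p hp k := by
    obtain ⟨C, N, hC, hbd⟩ := ha.bound p hp k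
    refine ⟨C, N, hC, ?_⟩
    filter_upwards [hbd, self_mem_nhdsWithin] with q hq hqU t ht i hi
    have hneg := iteratedFDerivWithin_neg_apply (𝕜 := ℝ) (i := i) (f := (a · t)) hU hqU
    exact ((congrArg norm hneg).trans (norm_neg _)).trans_le (hq t ht i hi)

theorem add (hU : UniqueDiffOn ℝ U) (ha : IsSymbol U m a) (hb : IsSymbol U m b) :
    IsSymbol U m fun q t => a q t + b q t where
  contDiffOn := ha.contDiffOn.add hb.contDiffOn
  bound p hp k := by
    obtain ⟨C₁, N₁, hC₁, hbd₁⟩ := ha.bound p hp k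
    obtain ⟨C₂, N₂, hC₂, hbd₂⟩ := hb.bound p hp k
    refine ⟨C₁ + C₂, N₁ + N₂, by positivity, ?_⟩
    filter_upwards [hbd₁, hbd₂, self_mem_nhdsWithin] with q h₁ h₂ hq t ht i hi
    have ha' : ContDiffWithinAt ℝ i (a · t) U q :=
      (ha.contDiffOn_left ht q hq).of_le (mod_cast le_top)
    have hb' : ContDiffWithinAt ℝ i (b · t) U q :=
      (hb.contDiffOn_left ht q hq).of_le (mod_cast le_top)
    have hpow : ∀ N, 1 ≤ logWeight t ^ N := fun N => one_le_pow₀ (one_le_logWeight t)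
    rw [fun_iteratedFDerivWithin_add_apply ha' hb' hU hq]
    calc _ ≤ _ := norm_add_le _ _
      _ ≤ C₁ * logWeight t ^ N₁ * m q t + C₂ * logWeight t ^ N₂ * m q t :=
        add_le_add (h₁ t ht i hi) (h₂ t ht i hi)
      _ ≤ C₁ * logWeight t ^ N₁ * m q t * logWeight t ^ N₂
          + C₂ * logWeight t ^ N₂ * m q t * logWeight t ^ N₁ :=
        add_le_add
          (le_mul_of_one_le_right ((norm_nonneg _).trans (h₁ t ht i hi)) (hpow N₂))
          (le_mul_of_one_le_right ((norm_nonneg _).trans (h₂ t ht i hi)) (hpow N₁))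
      _ = (C₁ + C₂) * logWeight t ^ (N₁ + N₂) * m q t := by ring

theorem mul (hU : UniqueDiffOn ℝ U) (ha : IsSymbol U m₁ a) (hb : IsSymbol U m₂ b) :
    IsSymbol U (m₁ * m₂) fun q t => a q t * b q t where
  contDiffOn := ha.contDiffOn.mul hb.contDiffOn
  bound p hp k := by
    obtain ⟨C₁, N₁, hC₁, hbd₁⟩ := ha.bound p hp k
    obtain ⟨C₂, N₂, hC₂, hbd₂⟩ := hb.bound p hp k
    refine ⟨2 ^ k * C₁ * C₂, N₁ + N₂, by positivity, ?_⟩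
    filter_upwards [hbd₁, hbd₂, self_mem_nhdsWithin] with q h₁ h₂ hq t ht i hi
    set A := C₁ * logWeight t ^ N₁ * m₁ q t
    set B := C₂ * logWeight t ^ N₂ * m₂ q t
    have hA : 0 ≤ A := (norm_nonneg _).trans (h₁ t ht i hi)
    have hB : 0 ≤ B := (norm_nonneg _).trans (h₂ t ht i hi)
    calc _ ≤ ∑ j ∈ Finset.range (i + 1), (i.choose j : ℝ) *
            ‖iteratedFDerivWithin ℝ j (a · t) U q‖ * ‖iteratedFDerivWithin ℝ (i - j) (b · t) U q‖ :=
          norm_iteratedFDerivWithin_mul_le (ha.contDiffOn_left ht) (hb.contDiffOn_left ht)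
            hU hq (mod_cast le_top)
      _ ≤ ∑ j ∈ Finset.range (i + 1), (i.choose j : ℝ) * A * B := by
          gcongr with j hj
          · exact h₁ t ht j (by grind)
          · exact h₂ t ht (i - j) (by omega)
      _ = 2 ^ i * (A * B) := by
          simp only [mul_assoc, ← Finset.sum_mul]
          rw [← Nat.cast_sum, Nat.sum_range_choose, Nat.cast_pow, Nat.cast_ofNat]
      _ ≤ 2 ^ k * (A * B) := by gcongr; norm_num
      _ = 2 ^ k * C₁ * C₂ * logWeight t ^ (N₁ + N₂) * (m₁ * m₂) q t := by
          simp only [A, B, Pi.mul_apply]; ring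

theorem comp (hU : UniqueDiffOn ℝ U) {g : ℝ → ℝ} (hg : ContDiff ℝ ∞ g) (ha : IsSymbol U 1 a)
    (hm : ∀ q ∈ U, ∀ t > 0, ∀ i, |iteratedDeriv i g (a q t)| ≤ m q t) :
    IsSymbol U m fun q t => g (a q t) where
  contDiffOn := hg.comp_contDiffOn ha.contDiffOn
  bound p hp k := by
    obtain ⟨C, N, hC, hbd⟩ := ha.bound p hp k
    refine ⟨k.factorial * (C + 1) ^ k, N * k, by positivity, ?_⟩
    filter_upwards [hbd, self_mem_nhdsWithin] with q hq hqU t ht i hi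
    set D := (C + 1) * logWeight t ^ N
    have hw : 1 ≤ logWeight t ^ N := one_le_pow₀ (one_le_logWeight t)
    have hD : 1 ≤ D := one_le_mul_of_one_le_of_one_le (by linarith) hw
    have hm0 : 0 ≤ m q t := (abs_nonneg _).trans (hm q hqU t ht 0)
    have houter : ∀ j ≤ i, ‖iteratedFDerivWithin ℝ j g univ (a q t)‖ ≤ m q t := fun j _ => by
      rw [iteratedFDerivWithin_univ, norm_iteratedFDeriv_eq_norm_iteratedDeriv]
      exact hm q hqU t ht j
    have hinner : ∀ j, 1 ≤ j → j ≤ i → ‖iteratedFDerivWithin ℝ j (a · t) U q‖ ≤ D ^ j :=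
      fun j hj hji => calc
        _ ≤ C * logWeight t ^ N * 1 := hq t ht j (hji.trans hi)
        _ ≤ D := by rw [mul_one]; exact mul_le_mul_of_nonneg_right (by linarith) (by linarith)
        _ ≤ D ^ j := le_self_pow₀ hD (by omega)
    calc _ ≤ i.factorial * m q t * D ^ i :=
          norm_iteratedFDerivWithin_comp_le hg.contDiffOn (ha.contDiffOn_left ht)
            (mod_cast le_top) uniqueDiffOn_univ hU (mapsTo_univ _ _) hqU houter hinner
      _ ≤ k.factorial * m q t * D ^ k := by gcongr
      _ = k.factorial * (C + 1) ^ k * logWeight t ^ (N * k) * m q t := by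
          simp only [D, mul_pow, ← pow_mul]; ring

theorem of_left (hU : UniqueDiffOn ℝ U) {g : E → ℝ} (hg : ContDiffOn ℝ ∞ g U) :
    IsSymbol U 1 fun q _ => g q where
  contDiffOn := hg.comp contDiffOn_fst fun _ hp => hp.1
  bound p hp k := by
    refine ⟨∑ i ∈ Finset.range (k + 1), (‖iteratedFDerivWithin ℝ i g U p‖ + 1), 0,
      by positivity, ?_⟩
    have hlocal : ∀ i ∈ Finset.range (k + 1), ∀ᶠ q in 𝓝[U] p,
        ‖iteratedFDerivWithin ℝ i g U q‖ < ‖iteratedFDerivWithin ℝ i g U p‖ + 1 := fun i _ =>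
      ((hg.continuousOn_iteratedFDerivWithin (mod_cast le_top) hU).norm p hp)
        |>.eventually (gt_mem_nhds (lt_add_one _))
    filter_upwards [(Finset.eventually_all _).2 hlocal] with q hq t _ i hi
    have hi' := Finset.mem_range_succ_iff.2 hi
    simpa using (hq i hi').le.trans (Finset.single_le_sum
      (f := fun i => ‖iteratedFDerivWithin ℝ i g U p‖ + 1) (fun _ _ => by positivity) hi')

theorem of_right (U : Set E) {h : ℝ → ℝ} (hh : ContDiffOn ℝ ∞ h (Ioi 0)) :
    IsSymbol U (fun _ t => |h t|) fun _ t => h t where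
  contDiffOn := hh.comp contDiffOn_snd fun _ hp => hp.2
  bound p _ k := by
    refine ⟨1, 0, zero_le_one, .of_forall fun q t _ i _ => ?_⟩
    rcases eq_or_ne i 0 with rfl | hi
    · simp only [norm_iteratedFDerivWithin_zero, Real.norm_eq_abs, pow_zero, one_mul, le_refl]
    · simp only [iteratedFDerivWithin_const_of_ne hi, Pi.zero_apply, norm_zero, pow_zero, one_mul,
        abs_nonneg]

end IsSymbol
end SymbolCalculus

section Integrability

theorem logWeight_pow_le (N : ℕ) :
    ∃ C : ℝ, ∀ t > 0, logWeight t ^ N ≤ C * (t ^ (-1 / 2 : ℝ) + t ^ (N : ℝ)) := by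
  refine ⟨2 ^ N * N.factorial * Real.exp 1 + 3 ^ N, fun t ht => ?_⟩
  have hpos : 0 ≤ t ^ (-1 / 2 : ℝ) := by positivity
  have hpos' : 0 ≤ t ^ (N : ℝ) := by positivity
  rcases le_total t 1 with h1 | h1
  · set x := 2 - Real.log t with hx
    have hlog : Real.log t ≤ 0 := Real.log_nonpos ht.le h1
    have hw : logWeight t ≤ x := by
      rw [logWeight, abs_of_nonpos hlog, abs_of_pos ht]; linarith
    have hexp : Real.exp (x / 2) = Real.exp 1 * t ^ (-1 / 2 : ℝ) := by
      rw [Real.rpow_def_of_pos ht, ← Real.exp_add]; congr 1; rw [hx]; ring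
    calc logWeight t ^ N ≤ x ^ N := by gcongr; exact (logWeight_pos t).le
      _ = 2 ^ N * N.factorial * ((x / 2) ^ N / N.factorial) := by rw [div_pow]; field_simp
      _ ≤ 2 ^ N * N.factorial * Real.exp (x / 2) := by
          gcongr; exact Real.pow_div_factorial_le_exp _ (by linarith) N
      _ = 2 ^ N * N.factorial * Real.exp 1 * t ^ (-1 / 2 : ℝ) := by rw [hexp]; ring
      _ ≤ _ := by gcongr <;> linarith [pow_pos (three_pos (α := ℝ)) N]
  · have hw : logWeight t ≤ 3 * t := by
      rw [logWeight, abs_of_nonneg (Real.log_nonneg h1), abs_of_pos ht]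
      linarith [Real.log_le_sub_one_of_pos ht]
    calc logWeight t ^ N ≤ (3 * t) ^ N := by gcongr; exact (logWeight_pos t).le
      _ = 3 ^ N * t ^ (N : ℝ) := by rw [mul_pow, Real.rpow_natCast]
      _ ≤ _ := by
          gcongr
          · exact le_add_of_nonneg_left (by positivity)
          · linarith

theorem integrableOn_logWeight_pow_mul_exp_neg_rpow (N : ℕ) {a : ℝ} (ha : 0 < a) :
    IntegrableOn (fun t => logWeight t ^ N * Real.exp (-t ^ a)) (Ioi 0) := by
  obtain ⟨C, hC⟩ := logWeight_pow_le N
  have hdom : IntegrableOn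
      (fun t : ℝ => C * (t ^ (-1 / 2 : ℝ) * Real.exp (-t ^ a) + t ^ (N : ℝ) * Real.exp (-t ^ a)))
      (Ioi 0) :=
    ((integrableOn_rpow_mul_exp_neg_rpow (by norm_num) ha).add
      (integrableOn_rpow_mul_exp_neg_rpow (by linarith [N.cast_nonneg (α := ℝ)]) ha)).const_mul C
  have hmeas : Measurable fun t => logWeight t ^ N * Real.exp (-t ^ a) := by
    unfold logWeight; fun_prop
  refine hdom.mono' hmeas.aestronglyMeasurable
    (ae_restrict_of_forall_mem measurableSet_Ioi fun t ht => ?_)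
  rw [Real.norm_of_nonneg (mul_nonneg (pow_nonneg (logWeight_pos t).le N) (Real.exp_pos _).le),
    ← add_mul, ← mul_assoc]
  exact mul_le_mul_of_nonneg_right (hC t ht) (Real.exp_pos _).le

theorem rpow_le_one_add_rpow {t a b : ℝ} (ht : 0 ≤ t) (ha : 0 ≤ a) (hab : a ≤ b) :
    t ^ a ≤ 1 + t ^ b := by
  rcases le_total t 1 with h1 | h1
  · linarith [Real.rpow_le_one ht h1 ha, Real.rpow_nonneg ht b]
  · linarith [Real.rpow_le_rpow_of_exponent_le h1 hab]

variable {E : Type*} [NormedAddCommGroup E] [NormedSpace ℝ E] {U : Set E} {a : E → ℝ → ℝ}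

theorem IsSymbol.contDiffOn_integral (hU : IsOpen U) {α : E → ℝ} (hα : ContinuousOn α U)
    (hα_pos : ∀ q ∈ U, 0 < α q) (ha : IsSymbol U (fun q t => Real.exp (-t ^ α q)) a) :
    ContDiffOn ℝ ∞ (fun q => ∫ t in Ioi 0, a q t) U := by
  refine contDiffOn_integral_of_dominated (n := ⊤) hU
    (ae_restrict_of_forall_mem measurableSet_Ioi fun t ht => ha.contDiffOn_left ht)
    (fun k _ q hq => ?_) fun k _ p hp => ?_
  · have hcont := (contDiffOn_iteratedFDerivWithin_left hU isOpen_Ioi ha.contDiffOn k).continuousOn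
    exact (hcont.comp (Continuous.prodMk_right q).continuousOn fun t ht => ⟨hq, ht⟩)
      |>.aestronglyMeasurable measurableSet_Ioi
  · obtain ⟨C, N, hC, hbd⟩ := ha.bound p hp k
    have hp0 := hα_pos p hp
    have hα_large : ∀ᶠ q in 𝓝[U] p, α p / 2 < α q :=
      (hα p hp).eventually (lt_mem_nhds (half_lt_self hp0))
    rw [hU.nhdsWithin_eq hp] at hbd hα_large
    refine ⟨_, hbd.and hα_large, _,
      (integrableOn_logWeight_pow_mul_exp_neg_rpow N (half_pos hp0)).const_mul (C * Real.exp 1),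
      ae_restrict_of_forall_mem measurableSet_Ioi fun t ht q hq => ?_⟩
    have hrpow := rpow_le_one_add_rpow (mem_Ioi.1 ht).le (half_pos hp0).le hq.2.le
    calc _ ≤ C * logWeight t ^ N * Real.exp (-t ^ α q) := hq.1 t ht k le_rfl
      _ ≤ C * logWeight t ^ N * Real.exp (1 + -t ^ (α p / 2)) := by
          have := (logWeight_pos t).le
          gcongr; linarith
      _ = C * Real.exp 1 * (logWeight t ^ N * Real.exp (-t ^ (α p / 2))) := by
          rw [Real.exp_add]; ring

end Integrability

section SpecialFunctions

theorem contDiff_sinc : ContDiff ℝ ∞ Real.sinc := by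
  refine contDiff_iff_contDiffAt.2 fun x => ?_
  rcases eq_or_ne x 0 with rfl | hx
  · obtain ⟨p, hp⟩ := Real.analyticAt_sin (x := 0)
    rw [Real.sinc_eq_dslope]
    exact AnalyticAt.contDiffAt ⟨_, hp.has_fpower_series_dslope_fslope⟩
  · refine (Real.contDiff_sin.contDiffAt.div contDiffAt_id hx).congr_of_eventuallyEq ?_
    filter_upwards [isOpen_ne.mem_nhds hx] with y hy using Real.sinc_of_ne_zero hy

theorem sinc_pos {x : ℝ} (hx : |x| < Real.pi) : 0 < Real.sinc x := by
  obtain ⟨hneg, hpos⟩ := abs_lt.1 hx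
  rcases lt_trichotomy x 0 with h | rfl | h
  · rw [Real.sinc_of_ne_zero h.ne]
    exact div_pos_of_neg_of_neg (Real.sin_neg_of_neg_of_neg_pi_lt h hneg) h
  · simp only [Real.sinc_zero, zero_lt_one]
  · rw [Real.sinc_of_ne_zero h.ne']
    exact div_pos (Real.sin_pos_of_pos_of_lt_pi h hpos) h

/-- The smooth extension of `α ↦ (1 - α) * tan (π * α / 2)` across `α = 1`. -/
noncomputable def skewCoeff (α : ℝ) : ℝ :=
  2 / Real.pi * (Real.cos (Real.pi * (1 - α) / 2) / Real.sinc (Real.pi * (1 - α) / 2))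

theorem sinc_skewCoeff_pos {α : ℝ} (hα : α ∈ Ioo (-1 : ℝ) 3) :
    0 < Real.sinc (Real.pi * (1 - α) / 2) := by
  refine sinc_pos (abs_lt.2 ⟨?_, ?_⟩) <;> nlinarith [hα.1, hα.2, Real.pi_pos]

theorem contDiffOn_skewCoeff : ContDiffOn ℝ ∞ skewCoeff (Ioo (-1) 3) := by
  have harg : ContDiff ℝ ∞ fun α : ℝ => Real.pi * (1 - α) / 2 := by fun_prop
  exact contDiffOn_const.mul ((Real.contDiff_cos.comp harg).contDiffOn.div
    (contDiff_sinc.comp harg).contDiffOn fun α hα => (sinc_skewCoeff_pos hα).ne')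

theorem skewCoeff_one : skewCoeff 1 = 2 / Real.pi := by
  simp [skewCoeff]

theorem skewCoeff_of_ne_one {α : ℝ} (hα : α ≠ 1) :
    skewCoeff α = (1 - α) * Real.tan (Real.pi * α / 2) := by
  have hα' : 1 - α ≠ 0 := sub_ne_zero.2 hα.symm
  have hx : Real.pi * (1 - α) / 2 ≠ 0 := by positivity
  have htan : Real.pi * α / 2 = Real.pi / 2 - Real.pi * (1 - α) / 2 := by ring
  rw [skewCoeff, Real.sinc_of_ne_zero hx, htan, Real.tan_pi_div_two_sub, Real.tan_eq_sin_div_cos]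
  field_simp

open ProbabilityTheory in
theorem abs_iteratedDeriv_mgf_le_mgf {Ω : Type*} [MeasurableSpace Ω] {μ : Measure Ω}
    {X : Ω → ℝ} (hX : ∀ᵐ x ∂μ, X x ∈ Icc 0 1) {t : ℝ} (ht : t ∈ interior (integrableExpSet X μ))
    (k : ℕ) : |iteratedDeriv k (mgf X μ) t| ≤ mgf X μ t := by
  rw [iteratedDeriv_mgf ht, mgf, ← Real.norm_eq_abs]
  refine norm_integral_le_of_norm_le (interior_subset (s := integrableExpSet X μ) ht) ?_
  filter_upwards [hX] with x hx
  rw [Real.norm_of_nonneg (mul_nonneg (pow_nonneg hx.1 k) (Real.exp_pos _).le)]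
  exact mul_le_of_le_one_left (Real.exp_pos _).le (pow_le_one₀ hx.1 hx.2)

/-- The smooth extension of `x ↦ (exp x - 1) / x` across `x = 0`, as the moment generating function
of the uniform law on `[0, 1]`. -/
noncomputable def uniformMgf : ℝ → ℝ := ProbabilityTheory.mgf id (volume.restrict (Ioc 0 1))

theorem ae_uniform_mem_Icc : ∀ᵐ s : ℝ ∂volume.restrict (Ioc 0 1), id s ∈ Icc (0 : ℝ) 1 :=
  ae_restrict_of_forall_mem measurableSet_Ioc fun _ hs => Ioc_subset_Icc_self hs

theorem interior_integrableExpSet_uniform :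
    interior (ProbabilityTheory.integrableExpSet id (volume.restrict (Ioc (0 : ℝ) 1))) = univ := by
  have huniv : ProbabilityTheory.integrableExpSet id (volume.restrict (Ioc (0 : ℝ) 1)) = univ :=
    eq_univ_of_forall fun _ => ProbabilityTheory.integrable_exp_mul_of_mem_Icc
      measurable_id.aemeasurable ae_uniform_mem_Icc
  rw [huniv, interior_univ]

theorem contDiff_uniformMgf : ContDiff ℝ ∞ uniformMgf := by
  rw [← contDiffOn_univ, ← interior_integrableExpSet_uniform]
  exact ProbabilityTheory.analyticOnNhd_mgf.contDiffOn isOpen_interior.uniqueDiffOn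

theorem uniformMgf_eq_integral (x : ℝ) : uniformMgf x = ∫ s in (0 : ℝ)..1, Real.exp (x * s) := by
  rw [intervalIntegral.integral_of_le zero_le_one]; rfl

theorem mul_uniformMgf (x : ℝ) : x * uniformMgf x = Real.exp x - 1 := by
  rw [uniformMgf_eq_integral, intervalIntegral.mul_integral_comp_mul_left, integral_exp]
  simp only [mul_one, mul_zero, Real.exp_zero]

theorem uniformMgf_zero : uniformMgf 0 = 1 := by
  simp [uniformMgf_eq_integral]

theorem uniformMgf_le (x : ℝ) : uniformMgf x ≤ 1 + Real.exp x := by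
  have hexp : ∀ s ∈ Icc (0 : ℝ) 1, Real.exp (x * s) ≤ 1 + Real.exp x := fun s hs => by
    rcases le_total x 0 with hx | hx
    · linarith [Real.exp_le_one_iff.2 (mul_nonpos_of_nonpos_of_nonneg hx hs.1), Real.exp_pos x]
    · linarith [Real.exp_le_exp.2 (mul_le_of_le_one_right hx hs.2)]
  calc uniformMgf x = ∫ s in (0 : ℝ)..1, Real.exp (x * s) := uniformMgf_eq_integral x
    _ ≤ ∫ _ in (0 : ℝ)..1, 1 + Real.exp x :=
      intervalIntegral.integral_mono_on zero_le_one
        (Continuous.intervalIntegrable (by fun_prop) _ _) intervalIntegrable_const hexp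
    _ = 1 + Real.exp x := by simp

theorem abs_iteratedDeriv_uniformMgf_le (k : ℕ) (x : ℝ) :
    |iteratedDeriv k uniformMgf x| ≤ 1 + Real.exp x :=
  (abs_iteratedDeriv_mgf_le_mgf ae_uniform_mem_Icc
    (interior_integrableExpSet_uniform ▸ mem_univ x) k).trans (uniformMgf_le x)

end SpecialFunctions

section Kernel

variable {E : Type*} [NormedAddCommGroup E] [NormedSpace ℝ E] {U : Set E} {a : E → ℝ → ℝ}

theorem IsSymbol.exp (hU : UniqueDiffOn ℝ U) (ha : IsSymbol U 1 a) :
    IsSymbol U (fun q t => Real.exp (a q t)) fun q t => Real.exp (a q t) :=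
  ha.comp hU Real.contDiff_exp fun q _ t _ i => by
    rw [iteratedDeriv_eq_iterate, Real.iter_deriv_exp, Real.abs_exp]

theorem IsSymbol.cos (hU : UniqueDiffOn ℝ U) (ha : IsSymbol U 1 a) :
    IsSymbol U 1 fun q t => Real.cos (a q t) :=
  ha.comp hU Real.contDiff_cos fun _ _ _ _ i => Real.abs_iteratedDeriv_cos_le_one i _

theorem rpow_le_logWeight_pow {t a : ℝ} (ht : 0 ≤ t) (ha : 0 ≤ a) {n : ℕ} (han : a ≤ n) :
    t ^ a ≤ logWeight t ^ n := by
  calc t ^ a ≤ logWeight t ^ a :=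
        Real.rpow_le_rpow ht ((le_abs_self t).trans (abs_le_logWeight t)) ha
    _ ≤ logWeight t ^ (n : ℝ) := Real.rpow_le_rpow_of_exponent_le (one_le_logWeight t) han
    _ = logWeight t ^ n := Real.rpow_natCast _ n

/-- The phase `t ↦ tan (π * α / 2) * (t - t ^ α)` by which a unit of skewness shifts the frequency
`t > 0`, written so as to be smooth across `α = 1`, where it equals `2 / π * (t * log t)`. -/
noncomputable def skewPhase (α t : ℝ) : ℝ :=
  skewCoeff α * (Real.log t * (t * uniformMgf ((α - 1) * Real.log t)))

theorem skewPhase_one (t : ℝ) : skewPhase 1 t = 2 / Real.pi * (t * Real.log t) := by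
  rw [skewPhase, skewCoeff_one, sub_self, zero_mul, uniformMgf_zero, mul_one, mul_comm t]

theorem skewPhase_of_ne_one {α : ℝ} (hα : α ≠ 1) {t : ℝ} (ht : 0 < t) :
    skewPhase α t = Real.tan (Real.pi * α / 2) * (t - t ^ α) := by
  have hexp : Real.exp ((α - 1) * Real.log t) * t = t ^ α := by
    rw [mul_comm (α - 1), ← Real.rpow_def_of_pos ht, Real.rpow_sub_one ht.ne',
      div_mul_cancel₀ _ ht.ne']
  calc skewPhase α t
      = -Real.tan (Real.pi * α / 2) * t *
          ((α - 1) * Real.log t * uniformMgf ((α - 1) * Real.log t)) := by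
        rw [skewPhase, skewCoeff_of_ne_one hα]; ring
    _ = Real.tan (Real.pi * α / 2) * (t - Real.exp ((α - 1) * Real.log t) * t) := by
        rw [mul_uniformMgf]; ring
    _ = Real.tan (Real.pi * α / 2) * (t - t ^ α) := by rw [hexp]

/-- The integrand of the inversion formula for the standardized density, as a function of
`q = (z, α, β)`. -/
noncomputable def stableKernel (q : ℝ × ℝ × ℝ) (t : ℝ) : ℝ :=
  Real.exp (-t ^ q.2.1) * Real.cos (q.1 * t + q.2.2 * skewPhase q.2.1 t)

/-- The parameters `(z, α, β)` near which `stableKernel` is smooth; the tail index may exceed `2`,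
up to the pole of `tan (π * α / 2)` at `3`. -/
def kernelDomain : Set (ℝ × ℝ × ℝ) := {q | q.2.1 ∈ Ioo 0 3}

theorem isOpen_kernelDomain : IsOpen kernelDomain :=
  isOpen_Ioo.preimage (continuous_fst.comp continuous_snd)

theorem uniqueDiffOn_kernelDomain : UniqueDiffOn ℝ kernelDomain :=
  isOpen_kernelDomain.uniqueDiffOn

theorem isSymbol_log : IsSymbol kernelDomain 1 fun _ t => Real.log t :=
  (IsSymbol.of_right _ (Real.contDiffOn_log.mono fun _ ht => (mem_Ioi.1 ht).ne')).mono
    zero_le_one 1 fun _ _ t _ => by simpa using abs_log_le_logWeight t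

theorem isSymbol_id : IsSymbol kernelDomain (fun _ t => |t|) fun _ t => t :=
  .of_right _ contDiffOn_id

theorem isSymbol_id_one : IsSymbol kernelDomain 1 fun _ t => t :=
  isSymbol_id.mono zero_le_one 1 fun _ _ t _ => by simpa using abs_le_logWeight t

theorem isSymbol_mul_log {g : ℝ × ℝ × ℝ → ℝ} (hg : ContDiffOn ℝ ∞ g kernelDomain) :
    IsSymbol kernelDomain 1 fun q t => g q * Real.log t := by
  have hU := uniqueDiffOn_kernelDomain
  simpa using (IsSymbol.of_left hU hg).mul hU isSymbol_log

theorem isSymbol_rpow : IsSymbol kernelDomain 1 fun q t => t ^ q.2.1 :=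
  ((isSymbol_mul_log (g := fun q => q.2.1) (by fun_prop)).exp uniqueDiffOn_kernelDomain).congr
    (fun q _ t ht => by rw [Real.rpow_def_of_pos ht, mul_comm]) |>.mono zero_le_one 3
    fun q hq t ht => by
      rw [mul_comm, ← Real.rpow_def_of_pos ht, Pi.one_apply, Pi.one_apply, mul_one, one_mul]
      exact rpow_le_logWeight_pow ht.le hq.1.le hq.2.le

-- For `α < 1` the second factor grows like `t ^ (α - 1)` at `0`; the factor `t` absorbs this.
theorem isSymbol_mul_uniformMgf :
    IsSymbol kernelDomain 1 fun q t => t * uniformMgf ((q.2.1 - 1) * Real.log t) := by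
  have hU := uniqueDiffOn_kernelDomain
  have hmgf := (isSymbol_mul_log (g := fun q => q.2.1 - 1) (by fun_prop)).comp hU
    contDiff_uniformMgf fun q _ t _ i => abs_iteratedDeriv_uniformMgf_le i _
  refine (isSymbol_id.mul hU hmgf).mono zero_le_two 3 fun q hq t ht => ?_
  have hrpow : t * t ^ (q.2.1 - 1) = t ^ q.2.1 := by
    rw [Real.rpow_sub_one ht.ne', mul_div_cancel₀ _ ht.ne']
  have hid : t ≤ logWeight t ^ 3 := by
    simpa using rpow_le_logWeight_pow ht.le zero_le_one (n := 3) (by norm_num)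
  calc |t| * (1 + Real.exp ((q.2.1 - 1) * Real.log t)) = t + t ^ q.2.1 := by
        rw [abs_of_pos ht, mul_comm (q.2.1 - 1), ← Real.rpow_def_of_pos ht, mul_add, mul_one, hrpow]
    _ ≤ logWeight t ^ 3 + logWeight t ^ 3 :=
        add_le_add hid (rpow_le_logWeight_pow ht.le hq.1.le hq.2.le)
    _ = 2 * logWeight t ^ 3 * 1 := by ring

theorem isSymbol_skewPhase : IsSymbol kernelDomain 1 fun q t => skewPhase q.2.1 t := by
  have hcoeff : ContDiffOn ℝ ∞ (fun q : ℝ × ℝ × ℝ => skewCoeff q.2.1) kernelDomain :=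
    contDiffOn_skewCoeff.comp (t := Ioo (-1) 3) (by fun_prop) fun q hq =>
      ⟨neg_one_lt_zero.trans hq.1, hq.2⟩
  have hU := uniqueDiffOn_kernelDomain
  simpa [skewPhase] using (IsSymbol.of_left hU hcoeff).mul hU
    (isSymbol_log.mul hU isSymbol_mul_uniformMgf)

theorem isSymbol_stableKernel :
    IsSymbol kernelDomain (fun q t => Real.exp (-t ^ q.2.1)) stableKernel := by
  have hU := uniqueDiffOn_kernelDomain
  have hphase : IsSymbol kernelDomain 1 fun q t => q.1 * t + q.2.2 * skewPhase q.2.1 t := by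
    refine .add hU ?_ ?_
    · simpa using (IsSymbol.of_left hU contDiffOn_fst).mul hU isSymbol_id_one
    · simpa using (IsSymbol.of_left hU contDiff_snd.snd.contDiffOn).mul hU isSymbol_skewPhase
  unfold stableKernel
  simpa using ((isSymbol_rpow.neg hU).exp hU).mul hU (hphase.cos hU)

/-- The density of the standardized stable law of location `0` and scale `1`, at `q = (z, α, β)`. -/
noncomputable def standardDensity (q : ℝ × ℝ × ℝ) : ℝ :=
  Real.pi⁻¹ * ∫ t in Ioi 0, stableKernel q t

theorem contDiffOn_standardDensity : ContDiffOn ℝ ∞ standardDensity kernelDomain :=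
  contDiffOn_const.mul <| isSymbol_stableKernel.contDiffOn_integral isOpen_kernelDomain
    continuous_snd.fst.continuousOn fun _ hq => hq.1

end Kernel

section Inversion

theorem integrable_exp_neg_abs_rpow {a : ℝ} (ha : 0 < a) :
    Integrable fun t : ℝ => Real.exp (-|t| ^ a) := by
  refine .of_integral_ne_zero ?_
  rw [integral_comp_abs (f := fun t => Real.exp (-t ^ a)), integral_exp_neg_rpow ha]
  exact mul_ne_zero two_ne_zero (Real.Gamma_pos_of_pos (by positivity)).ne'

theorem measurable_sign : Measurable Real.sign :=
  .ite measurableSet_Iio measurable_const (.ite measurableSet_Ioi measurable_const measurable_const)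

theorem sign_mul_abs_self (t : ℝ) : Real.sign t * |t| = t := by
  rcases lt_trichotomy t 0 with ht | rfl | ht
  · rw [Real.sign_of_neg ht, abs_of_neg ht, neg_one_mul, neg_neg]
  · rw [abs_zero, mul_zero]
  · rw [Real.sign_of_pos ht, abs_of_pos ht, one_mul]

variable {θ : Fin 4 → ℝ}

theorem measurable_phiM : Measurable (phiM θ) := by
  have := measurable_sign
  unfold phiM psiM
  split_ifs <;> fun_prop

theorem psiM_re (t : ℝ) : (psiM θ t).re = -|θ 1 * t| ^ θ 2 := by
  unfold psiM
  split_ifs with h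
  · simp only [Complex.add_re, Complex.sub_re, Complex.I_re, Complex.mul_re, Complex.ofReal_re,
      Complex.ofReal_im, h, Real.rpow_one]
    ring
  · simp only [Complex.add_re, Complex.add_im, Complex.one_re, Complex.one_im, Complex.I_re,
      Complex.I_im, Complex.mul_re, Complex.mul_im, Complex.ofReal_re, Complex.ofReal_im]
    ring

theorem psiM_im (hσ : 0 < θ 1) (t : ℝ) :
    (psiM θ t).im = θ 0 * t - Real.sign t * (θ 3 * skewPhase (θ 2) |θ 1 * t|) := by
  rcases eq_or_ne t 0 with rfl | ht
  · simp [psiM, apply_ite Complex.im]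
  have habs : 0 < |θ 1 * t| := abs_pos.2 (mul_ne_zero hσ.ne' ht)
  have hsign : θ 1 * t = Real.sign t * |θ 1 * t| := by
    rw [abs_mul, abs_of_pos hσ, mul_left_comm, sign_mul_abs_self]
  unfold psiM
  split_ifs with h
  · rw [h, skewPhase_one]
    simp only [Complex.add_im, Complex.sub_im, Complex.mul_im, Complex.ofReal_re,
      Complex.ofReal_im, Complex.I_re, Complex.I_im]
    linear_combination (-(2 * θ 3 / Real.pi) * Real.log |θ 1 * t|) * hsign
  · have hpow : |θ 1 * t| ^ θ 2 * |θ 1 * t| ^ (1 - θ 2) = |θ 1 * t| := by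
      rw [← Real.rpow_add habs, add_sub_cancel, Real.rpow_one]
    rw [skewPhase_of_ne_one h habs]
    simp only [Complex.add_re, Complex.add_im, Complex.one_re, Complex.one_im, Complex.I_re,
      Complex.I_im, Complex.mul_re, Complex.mul_im, Complex.ofReal_re, Complex.ofReal_im]
    linear_combination (-(θ 3 * Real.sign t * Real.tan (Real.pi * θ 2 / 2))) * hpow

theorem cexp_mul_phiM (x t : ℝ) :
    Complex.exp (-Complex.I * t * x) * phiM θ t =
      Complex.exp (psiM θ t - ((t * x : ℝ) : ℂ) * Complex.I) := by
  rw [phiM, ← Complex.exp_add]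
  congr 1
  push_cast
  ring

theorem integrable_cexp_mul_phiM (hσ : 0 < θ 1) (hα : 0 < θ 2) (x : ℝ) :
    Integrable fun t : ℝ => Complex.exp (-Complex.I * t * x) * phiM θ t := by
  refine ((integrable_exp_neg_abs_rpow hα).comp_mul_left' hσ.ne').mono' ?_ (.of_forall fun t => ?_)
  · have := measurable_phiM (θ := θ)
    exact Measurable.aestronglyMeasurable (by fun_prop)
  · rw [cexp_mul_phiM, Complex.norm_exp, Complex.sub_re, Complex.re_ofReal_mul, Complex.I_re,
      mul_zero, sub_zero, psiM_re]

/-- Location-scale reduction: the arguments `(z, α, β)` of `standardDensity`. -/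
noncomputable def standardize (x : ℝ) (θ : Fin 4 → ℝ) : ℝ × ℝ × ℝ := ((x - θ 0) / θ 1, θ 2, θ 3)

theorem re_cexp_mul_phiM (hσ : 0 < θ 1) (x t : ℝ) :
    (Complex.exp (-Complex.I * t * x) * phiM θ t).re =
      stableKernel (standardize x θ) (θ 1 * |t|) := by
  have habs : |θ 1 * t| = θ 1 * |t| := by rw [abs_mul, abs_of_pos hσ]
  set y := (x - θ 0) / θ 1 * (θ 1 * |t|) + θ 3 * skewPhase (θ 2) (θ 1 * |t|) with hy
  have hphase : (psiM θ t - ((t * x : ℝ) : ℂ) * Complex.I).im = -(Real.sign t * y) := by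
    have hscale : (x - θ 0) / θ 1 * (θ 1 * |t|) = (x - θ 0) * |t| := by field_simp
    rw [Complex.sub_im, Complex.im_ofReal_mul, Complex.I_im, psiM_im hσ, habs, hy, hscale]
    linear_combination (x - θ 0) * sign_mul_abs_self t
  have hcos : Real.cos (-(Real.sign t * y)) = Real.cos y := by
    rw [Real.cos_neg]
    rcases Real.sign_apply_eq t with h | h | h
    · rw [h, neg_one_mul, Real.cos_neg]
    · have hy0 : y = 0 := by rw [hy, Real.sign_eq_zero_iff.1 h]; simp [skewPhase]
      rw [hy0, mul_zero]
    · rw [h, one_mul]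
  rw [cexp_mul_phiM, Complex.exp_re, hphase, hcos, Complex.sub_re, Complex.re_ofReal_mul,
    Complex.I_re, mul_zero, sub_zero, psiM_re, habs]
  rfl

theorem fM_eq_standardDensity (hσ : 0 < θ 1) (hα : 0 < θ 2) (x : ℝ) :
    fM θ x = (θ 1)⁻¹ * standardDensity (standardize x θ) := by
  have hre : (∫ t : ℝ, Complex.exp (-Complex.I * t * x) * phiM θ t).re =
      ∫ t, stableKernel (standardize x θ) (θ 1 * |t|) := by
    rw [← RCLike.re_eq_complex_re, ← integral_re (integrable_cexp_mul_phiM hσ hα x)]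
    exact integral_congr_ae (.of_forall (re_cexp_mul_phiM hσ x))
  rw [fM, hre, integral_comp_abs (f := fun t => stableKernel (standardize x θ) (θ 1 * t)),
    integral_comp_mul_left_Ioi _ _ hσ, mul_zero, smul_eq_mul, standardDensity]
  field_simp

end Inversion

section Density

/-- A neighbourhood of the interior of the parameter space on which the inversion integral remains
smooth: the skewness is arbitrary and the tail index may exceed `2`. -/
def stableDomain : Set (Fin 4 → ℝ) := {θ | 0 < θ 1 ∧ θ 2 ∈ Ioo 0 3}

theorem isOpen_stableDomain : IsOpen stableDomain :=
  (isOpen_Ioi.preimage (continuous_apply 1)).inter (isOpen_Ioo.preimage (continuous_apply 2))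

theorem contDiffOn_fM :
    ContDiffOn ℝ ∞ (fun p : ℝ × (Fin 4 → ℝ) => fM p.2 p.1) (univ ×ˢ stableDomain) := by
  have hσ : ∀ p ∈ (univ ×ˢ stableDomain : Set (ℝ × (Fin 4 → ℝ))), p.2 1 ≠ 0 :=
    fun p hp => hp.2.1.ne'
  have hstd : ContDiffOn ℝ ∞ (fun p : ℝ × (Fin 4 → ℝ) => standardize p.1 p.2)
      (univ ×ˢ stableDomain) := by
    unfold standardize
    fun_prop (disch := assumption)
  have hinv : ContDiffOn ℝ ∞ (fun p : ℝ × (Fin 4 → ℝ) => (p.2 1)⁻¹) (univ ×ˢ stableDomain) := by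
    fun_prop (disch := assumption)
  exact (hinv.mul (contDiffOn_standardDensity.comp hstd fun p hp => hp.2.2)).congr
    fun p hp => fM_eq_standardDensity hp.2.1 hp.2.2.1 p.1

end Density

section PartialDerivatives

variable {E F : Type*} [NormedAddCommGroup E] [NormedSpace ℝ E] [NormedAddCommGroup F]
  [NormedSpace ℝ F]

theorem contDiffOn_lineDeriv {f : E → F} {S : Set E} (hS : IsOpen S) (hf : ContDiffOn ℝ ∞ f S)
    (v : E) : ContDiffOn ℝ ∞ (fun p => lineDeriv ℝ f p v) S :=
  ((hf.fderiv_of_isOpen hS le_rfl).clm_apply contDiffOn_const).congr fun p hp =>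
    ((hf.contDiffAt (hS.mem_nhds hp)).differentiableAt (by simp)).lineDeriv_eq_fderiv

theorem lineDeriv_fst (f : ℝ × E → F) (p : ℝ × E) :
    lineDeriv ℝ f p (1, 0) = deriv (fun y => f (y, p.2)) p.1 := by
  have hline : ∀ t : ℝ, p + t • ((1 : ℝ), (0 : E)) = (p.1 + t, p.2) := fun t => by
    ext <;> simp
  simp only [lineDeriv, hline]
  rw [deriv_comp_const_add (fun y => f (y, p.2)), add_zero]

theorem lineDeriv_snd_single {ι : Type*} [DecidableEq ι] (f : E × (ι → ℝ) → F) (p : E × (ι → ℝ))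
    (i : ι) : lineDeriv ℝ f p (0, Pi.single i 1) =
      deriv (fun s => f (p.1, Function.update p.2 i s)) (p.2 i) := by
  have hline : ∀ t : ℝ, p + t • ((0 : E), (Pi.single i 1 : ι → ℝ)) =
      (p.1, Function.update p.2 i (p.2 i + t)) := fun t => by
    ext j
    · simp
    · rcases eq_or_ne j i with rfl | hj <;> simp [*]
  simp only [lineDeriv, hline]
  rw [deriv_comp_const_add (fun s => f (p.1, Function.update p.2 i s)), add_zero]

theorem contDiffOn_deriv_fst {f : ℝ × E → F} {S : Set (ℝ × E)} (hS : IsOpen S)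
    (hf : ContDiffOn ℝ ∞ f S) : ContDiffOn ℝ ∞ (fun p => deriv (fun y => f (y, p.2)) p.1) S := by
  simpa only [lineDeriv_fst] using contDiffOn_lineDeriv hS hf (1, 0)

theorem contDiffOn_deriv_update {ι : Type*} [Fintype ι] [DecidableEq ι] {f : E × (ι → ℝ) → F}
    {S : Set (E × (ι → ℝ))} (hS : IsOpen S) (hf : ContDiffOn ℝ ∞ f S) (i : ι) :
    ContDiffOn ℝ ∞ (fun p => deriv (fun s => f (p.1, Function.update p.2 i s)) (p.2 i)) S := by
  simpa only [lineDeriv_snd_single] using contDiffOn_lineDeriv hS hf (0, Pi.single i 1)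

theorem isOpen_univ_prod_stableDomain :
    IsOpen (univ ×ˢ stableDomain : Set (ℝ × (Fin 4 → ℝ))) :=
  isOpen_univ.prod isOpen_stableDomain

theorem contDiffOn_fP (i : Fin 4) :
    ContDiffOn ℝ ∞ (fun p : ℝ × (Fin 4 → ℝ) => fP i p.2 p.1) (univ ×ˢ stableDomain) :=
  contDiffOn_deriv_update isOpen_univ_prod_stableDomain contDiffOn_fM i

theorem contDiffOn_fPX (i : Fin 4) :
    ContDiffOn ℝ ∞ (fun p : ℝ × (Fin 4 → ℝ) => fPX i p.2 p.1) (univ ×ˢ stableDomain) :=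
  contDiffOn_deriv_fst isOpen_univ_prod_stableDomain (contDiffOn_fP i)

theorem contDiffOn_fPP (i j : Fin 4) :
    ContDiffOn ℝ ∞ (fun p : ℝ × (Fin 4 → ℝ) => fPP i j p.2 p.1) (univ ×ˢ stableDomain) :=
  contDiffOn_deriv_update isOpen_univ_prod_stableDomain (contDiffOn_fP i) j

end PartialDerivatives

end StableDensity

open Set StableDensity in
open scoped ContDiff in
theorem density_parameter_smoothness_general :
    ContDiffOn ℝ ∞ (fun p : ℝ × (Fin 4 → ℝ) => fM p.2 p.1) (univ ×ˢ stableDomain) ∧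
    (∀ i : Fin 4,
      ContDiffOn ℝ ∞ (fun p : ℝ × (Fin 4 → ℝ) => fP i p.2 p.1) (univ ×ˢ stableDomain)) ∧
    (∀ i : Fin 4,
      ContDiffOn ℝ ∞ (fun p : ℝ × (Fin 4 → ℝ) => fPX i p.2 p.1) (univ ×ˢ stableDomain)) ∧
    (∀ i j : Fin 4,
      ContDiffOn ℝ ∞ (fun p : ℝ × (Fin 4 → ℝ) => fPP i j p.2 p.1) (univ ×ˢ stableDomain)) :=
  ⟨contDiffOn_fM, contDiffOn_fP, contDiffOn_fPX, contDiffOn_fPP⟩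

/-- For every `x`, the map `θ ↦ f(x;θ)` is twice continuously differentiable
on `Θ_M°`; each `f_{θᵢ}(·;θ)` is continuously differentiable in `x`; and `f_{θᵢ}`,
`f_{θᵢ}' = ∂f_{θᵢ}/∂x` and `f_{θᵢθⱼ}` are jointly continuous in `(x,θ)` on `ℝ × Θ_M°`. -/
theorem density_parameter_smoothness :
    (∀ x : ℝ, ContDiffOn ℝ 2 (fun θ : Fin 4 → ℝ => fM θ x) ThetaInt) ∧
    (∀ i : Fin 4, ∀ θ ∈ ThetaInt, ∀ x : ℝ, DifferentiableAt ℝ (fun y => fP i θ y) x) ∧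
    (∀ i : Fin 4, ∀ θ ∈ ThetaInt, Continuous (fun y => fPX i θ y)) ∧
    (∀ i : Fin 4, ContinuousOn (fun p : ℝ × (Fin 4 → ℝ) => fP i p.2 p.1)
      {p : ℝ × (Fin 4 → ℝ) | p.2 ∈ ThetaInt}) ∧
    (∀ i : Fin 4, ContinuousOn (fun p : ℝ × (Fin 4 → ℝ) => fPX i p.2 p.1)
      {p : ℝ × (Fin 4 → ℝ) | p.2 ∈ ThetaInt}) ∧
    (∀ i j : Fin 4, ContinuousOn (fun p : ℝ × (Fin 4 → ℝ) => fPP i j p.2 p.1)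
      {p : ℝ × (Fin 4 → ℝ) | p.2 ∈ ThetaInt}) := by
  obtain ⟨hf, hP, hPX, hPP⟩ := density_parameter_smoothness_general
  have hmem : ∀ θ ∈ ThetaInt, ∀ x : ℝ, (x, θ) ∈ Set.univ ×ˢ StableDensity.stableDomain :=
    fun _ ⟨hσ, ⟨hα_pos, hα_lt⟩, _⟩ _ => ⟨trivial, hσ, hα_pos, by linarith⟩
  have hsub : {p : ℝ × (Fin 4 → ℝ) | p.2 ∈ ThetaInt} ⊆ Set.univ ×ˢ StableDensity.stableDomain :=
    fun p hp => hmem p.2 hp p.1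
  refine ⟨fun x => ?_, fun i θ hθ => ?_, fun i θ hθ => ?_, fun i => (hP i).continuousOn.mono hsub,
    fun i => (hPX i).continuousOn.mono hsub, fun i j => (hPP i j).continuousOn.mono hsub⟩
  · exact (hf.comp (contDiff_prodMk_right x).contDiffOn fun θ hθ => hmem θ hθ x).of_le
      ENat.LEInfty.out
  · exact ((hP i).comp_contDiff (contDiff_prodMk_left θ) (hmem θ hθ)).differentiable (by simp)
  · exact ((hPX i).comp_contDiff (contDiff_prodMk_left θ) (hmem θ hθ)).continuous
end
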